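/- Let q be a prime power and r a positive integer with gcd(q, (r+1)!) = 1. Let S ⊆ F_q with #S = r+1, let a ∈ F_q \ S, and set h(x) = (∏_{s∈S} (x − s))/(x − a). Then h is an (r, l)-good rational function with l ≥ (q − 2√q + 1)/(r+1)! − 2√q·(r−1) − (r+2)/2; that is, the number of points b ∈ P¹(F_q) with #h⁻¹(b) = r+1 is at least (q − 2√q + 1)/(r+1)! − 2√q·(r−1) − (r+2)/2 (an inequality of real numbers). -/

import Mathlib

open Polynomial Finset

/-- The map `P¹(F) → P¹(F)` induced by the rational function `f/g`
(with `none` playing the role of `∞`). -/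
def ratEval {F : Type*} [Field F] [DecidableEq F] (f g : Polynomial F) :
    Option F → Option F
  | none =>
      if g.natDegree < f.natDegree then none
      else if f.natDegree = g.natDegree then some (f.leadingCoeff / g.leadingCoeff)
      else some 0
  | some x => if g.eval x = 0 then none else some (f.eval x / g.eval x)



namespace WG

/-- the polynomial `P - c (Y - a)` with `P = ∏ (Y - s i)` over a ring `R` receiving `K`. -/
noncomputable def fpol {K R : Type*} [CommRing K] [CommRing R] {n : ℕ} (φ : K →+* R) (s : Fin n → K)
    (a : K) (c : R) : R[X] :=
  (∏ i, (X - C (φ (s i)))) - C c * (X - C (φ a))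

theorem fpol_map {K R R' : Type*} [CommRing K] [CommRing R] [CommRing R'] {n : ℕ} (φ : K →+* R)
    (ψ : R →+* R') (s : Fin n → K) (a : K) (c : R) :
    (fpol φ s a c).map ψ = fpol (ψ.comp φ) s a (ψ c) := by
  simp [fpol, Polynomial.map_prod]

theorem fpol_eval {K R : Type*} [CommRing K] [CommRing R] {n : ℕ} (φ : K →+* R)
    (s : Fin n → K) (a : K) (c z : R) :
    (fpol φ s a c).eval z = (∏ i, (z - φ (s i))) - c * (z - φ a) := by
  simp [fpol, Polynomial.eval_prod]

theorem fpol_monic_deg {K R : Type*} [CommRing K] [CommRing R] [Nontrivial R] {n : ℕ} (hn : 2 ≤ n)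
    (φ : K →+* R) (s : Fin n → K) (a : K) (c : R) :
    (fpol φ s a c).Monic ∧ (fpol φ s a c).degree = n := by
  have h1 : (∏ i, (X - C (φ (s i)))).Monic := monic_prod_of_monic _ _ (fun i _ => monic_X_sub_C _)
  have h2 : (∏ i, (X - C (φ (s i)))).degree = (n : WithBot ℕ) := by
    rw [degree_prod_of_monic]
    · simp
    · exact fun i _ => monic_X_sub_C _
  have h3 : (C c * (X - C (φ a))).degree < (n : WithBot ℕ) := by
    refine lt_of_le_of_lt (degree_mul_le _ _) ?_
    have : (C c).degree ≤ 0 := degree_C_le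
    rw [degree_X_sub_C]
    calc (C c).degree + 1 ≤ 0 + 1 := by gcongr
      _ < (n : WithBot ℕ) := by rw [zero_add]; exact_mod_cast hn
  refine ⟨h1.sub_of_left (by rw [h2]; exact h3), ?_⟩
  unfold fpol
  rw [degree_sub_eq_left_of_degree_lt (by rw [h2]; exact h3), h2]

theorem eq_prod_of_roots {R : Type*} [CommRing R] [IsDomain R] {n : ℕ} (f : R[X]) (hm : f.Monic)
    (hd : f.degree = n) (x : Fin n → R) (hx : Function.Injective x) (h : ∀ i, f.eval (x i) = 0) :
    f = ∏ i, (X - C (x i)) := by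
  have h1 : (∏ i, (X - C (x i))).Monic := monic_prod_of_monic _ _ (fun i _ => monic_X_sub_C _)
  have h2 : (∏ i, (X - C (x i))).degree = (n : WithBot ℕ) := by
    rw [degree_prod_of_monic]
    · simp
    · exact fun i _ => monic_X_sub_C _
  apply eq_of_degree_sub_lt_of_eval_index_eq (v := x) Finset.univ (hx.injOn)
  · refine lt_of_lt_of_le (degree_sub_lt (by rw [hd, h2]) hm.ne_zero (by rw [hm, h1])) ?_
    simp [hd]
  · intro i _
    rw [h i, eval_prod]
    symm
    exact Finset.prod_eq_zero (mem_univ i) (by simp)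

theorem hensel_root {K : Type*} [Field K] {n : ℕ} (hn : 2 ≤ n) (s : Fin n → K)
    (hs : Function.Injective s) (a : K) (i : Fin n) :
    ∃ x : PowerSeries K, PowerSeries.constantCoeff x = s i ∧
      (fpol (PowerSeries.C : K →+* PowerSeries K) s a PowerSeries.X).eval x = 0 := by
  have hr : HenselianRing (PowerSeries K) (Ideal.span {PowerSeries.X}) := inferInstance
  obtain ⟨h1, h2⟩ := fpol_monic_deg hn (PowerSeries.C : K →+* PowerSeries K) s a PowerSeries.X
  obtain ⟨x, hx, hx'⟩ := hr.is_henselian _ h1 (PowerSeries.C (s i)) (by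
      rw [fpol_eval, Finset.prod_eq_zero (mem_univ i) (by simp), zero_sub]
      exact neg_mem (Ideal.mul_mem_right _ _ (Ideal.subset_span rfl))) (by
      apply IsUnit.map
      rw [PowerSeries.isUnit_iff_constantCoeff]
      rw [← Polynomial.eval_map_apply, ← Polynomial.derivative_map, fpol_map]
      simp only [PowerSeries.constantCoeff_X, PowerSeries.constantCoeff_C]
      simp only [fpol, map_zero, zero_mul, sub_zero, RingHom.comp_apply,
        PowerSeries.constantCoeff_C]
      rw [Polynomial.derivative_prod_finset, eval_finset_sum]
      rw [Finset.sum_eq_single i]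
      · rw [eval_mul, eval_prod]
        simp only [eval_sub, eval_X, eval_C, derivative_sub, derivative_X, derivative_C, sub_zero,
          eval_one, mul_one]
        rw [isUnit_iff_ne_zero, Finset.prod_ne_zero_iff]
        intro j hj
        rw [Finset.mem_erase] at hj
        exact sub_ne_zero.mpr (fun h => hj.1 (hs h).symm)
      · intro j _ hj
        rw [eval_mul, eval_prod, Finset.prod_eq_zero (i := i), zero_mul]
        · simp [hj.symm]
        · simp
      · simp)
  refine ⟨x, ?_, hx⟩
  rw [Ideal.mem_span_singleton, PowerSeries.X_dvd_iff] at hx'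
  simpa [sub_eq_zero] using hx'

/-- The Hensel roots. -/
theorem hensel_roots {K : Type*} [Field K] {n : ℕ} (hn : 2 ≤ n) (s : Fin n → K)
    (hs : Function.Injective s) (a : K) :
    ∃ x : Fin n → PowerSeries K, (∀ i, PowerSeries.constantCoeff (x i) = s i) ∧
      fpol (PowerSeries.C : K →+* PowerSeries K) s a PowerSeries.X = ∏ i, (X - C (x i)) := by
  choose x hx hx' using hensel_root hn s hs a
  refine ⟨x, hx, ?_⟩
  obtain ⟨h1, h2⟩ := fpol_monic_deg hn (PowerSeries.C : K →+* PowerSeries K) s a PowerSeries.X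
  refine eq_prod_of_roots _ h1 h2 x (fun i j h => hs ?_) hx'
  rw [← hx, ← hx, h]

end WG


namespace WG
section T
variable {K : Type*} [CommRing K]

local notation "PS" => PowerSeries

/-- all coefficients of total order `< N` vanish -/
def Ord (N : ℕ) (g : PS (PS K)) : Prop :=
  ∀ k m, k + m < N → PowerSeries.coeff m (PowerSeries.coeff k g) = 0

theorem Ord.mul {N M : ℕ} {g h : PS (PS K)} (hg : Ord N g) (hh : Ord M h) : Ord (N + M) (g * h) := by
  intro k m hkm
  rw [PowerSeries.coeff_mul, map_sum]
  refine Finset.sum_eq_zero fun p hp => ?_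
  rw [PowerSeries.coeff_mul]
  refine Finset.sum_eq_zero fun p' hp' => ?_
  rw [HasAntidiagonal.mem_antidiagonal] at hp hp'
  by_cases h1 : p.1 + p'.1 < N
  · rw [hg _ _ h1, zero_mul]
  · rw [hh _ _ (by omega), mul_zero]

theorem Ord.pow {g : PS (PS K)} (hg : Ord 1 g) (N : ℕ) : Ord N (g ^ N) := by
  induction N with
  | zero => intro k m h; omega
  | succ N ih => rw [pow_succ]; exact ih.mul hg

theorem Ord.zero (g : PS (PS K)) : Ord 0 g := fun k m h => by omega

theorem ord_lin {c : PS K} (hc : PowerSeries.constantCoeff c = 0) :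
    Ord 1 (PowerSeries.C c + PowerSeries.X) := by
  intro k m h
  obtain ⟨rfl, rfl⟩ : k = 0 ∧ m = 0 := by omega
  simp [hc]

/-- evaluation of a polynomial at `c + ε` -/
noncomputable def Ec (c : PS K) : (PS K)[X] →+* PS (PS K) :=
  Polynomial.eval₂RingHom PowerSeries.C (PowerSeries.C c + PowerSeries.X)

theorem Ec_ord {c : PS K} (hc : PowerSeries.constantCoeff c = 0) (p : (PS K)[X]) (N : ℕ)
    (h : (X : (PS K)[X]) ^ N ∣ p) : Ord N (Ec c p) := by
  obtain ⟨w, rfl⟩ := h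
  rw [map_mul, map_pow]
  have : Ec c X = PowerSeries.C c + PowerSeries.X := by simp [Ec]
  rw [this]
  simpa using ((ord_lin hc).pow N).mul (Ord.zero (Ec c w))

noncomputable def Tfun (c : PS K) (g : PS (PS K)) : PS (PS K) :=
  PowerSeries.mk fun k => PowerSeries.mk fun m =>
    PowerSeries.coeff m (PowerSeries.coeff k (Ec c (PowerSeries.trunc (k + m + 1) g)))

theorem dvd_of_coeff_eq {R : Type*} [CommRing R] (p q : R[X]) (N : ℕ)
    (h : ∀ j < N, p.coeff j = q.coeff j) : X ^ N ∣ p - q := by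
  rw [X_pow_dvd_iff]
  intro j hj
  rw [coeff_sub, h j hj, sub_self]

theorem Tfun_coeff {c : PS K} (hc : PowerSeries.constantCoeff c = 0) (g : PS (PS K)) (p : (PS K)[X])
    (N k m : ℕ) (hN : k + m < N) (h : ∀ j < N, PowerSeries.coeff j g = p.coeff j) :
    PowerSeries.coeff m (PowerSeries.coeff k (Tfun c g)) =
      PowerSeries.coeff m (PowerSeries.coeff k (Ec c p)) := by
  have h1 : (X : (PS K)[X]) ^ (k + m + 1) ∣ PowerSeries.trunc (k + m + 1) g - p := by
    apply dvd_of_coeff_eq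
    intro j hj
    rw [PowerSeries.coeff_trunc, if_pos hj, h j (by omega)]
  have h2 := Ec_ord hc _ _ h1 k m (by omega)
  rw [map_sub, map_sub, map_sub, sub_eq_zero] at h2
  simpa [Tfun] using h2

theorem Tfun_poly {c : PS K} (hc : PowerSeries.constantCoeff c = 0) (p : (PS K)[X]) :
    Tfun c (p : PS (PS K)) = Ec c p := by
  ext k m
  apply Tfun_coeff hc _ _ (k + m + 1) k m (by omega)
  simp

/-- the substitution `u ↦ c + ε` -/
noncomputable def T (c : PS K) (hc : PowerSeries.constantCoeff c = 0) : PS (PS K) →+* PS (PS K) where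
  toFun := Tfun c
  map_one' := by
    have := Tfun_poly hc (1 : (PS K)[X])
    simpa using this
  map_zero' := by
    have := Tfun_poly hc (0 : (PS K)[X])
    simpa using this
  map_add' g h := by
    ext k m
    rw [Tfun_coeff hc (g + h) (PowerSeries.trunc (k + m + 1) g + PowerSeries.trunc (k + m + 1) h)
      (k + m + 1) k m (by omega)]
    · simp [Tfun]
    · intro j hj
      simp [PowerSeries.coeff_trunc, hj]
  map_mul' g h := by
    ext k m
    rw [Tfun_coeff hc (g * h) (PowerSeries.trunc (k + m + 1) g * PowerSeries.trunc (k + m + 1) h)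
      (k + m + 1) k m (by omega)]
    · rw [map_mul, PowerSeries.coeff_mul, PowerSeries.coeff_mul, map_sum, map_sum]
      refine Finset.sum_congr rfl fun p hp => ?_
      rw [PowerSeries.coeff_mul, PowerSeries.coeff_mul]
      refine Finset.sum_congr rfl fun p' hp' => ?_
      rw [HasAntidiagonal.mem_antidiagonal] at hp hp'
      rw [Tfun_coeff hc g (PowerSeries.trunc (k + m + 1) g) (k + m + 1) _ _ (by omega),
        Tfun_coeff hc h (PowerSeries.trunc (k + m + 1) h) (k + m + 1) _ _ (by omega)]
      · intro j hj
        simp [PowerSeries.coeff_trunc, hj]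
      · intro j hj
        simp [PowerSeries.coeff_trunc, hj]
    · intro j hj
      rw [PowerSeries.coeff_mul, Polynomial.coeff_mul]
      refine Finset.sum_congr rfl fun p hp => ?_
      rw [HasAntidiagonal.mem_antidiagonal] at hp
      rw [PowerSeries.coeff_trunc, PowerSeries.coeff_trunc, if_pos (by omega), if_pos (by omega)]

variable (c : PS K) (hc : PowerSeries.constantCoeff c = 0)

theorem T_poly (p : (PS K)[X]) : T c hc (p : PS (PS K)) = Ec c p := Tfun_poly hc p

theorem T_X : T c hc PowerSeries.X = PowerSeries.C c + PowerSeries.X := by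
  have := T_poly c hc X
  rw [Polynomial.coe_X] at this
  rw [this]; simp [Ec]

theorem T_C (b : PS K) : T c hc (PowerSeries.C b) = PowerSeries.C b := by
  have := T_poly c hc (C b)
  rw [Polynomial.coe_C] at this
  rw [this]; simp [Ec]

theorem T_const (g : PS (PS K)) :
    PowerSeries.constantCoeff (PowerSeries.constantCoeff (T c hc g)) =
      PowerSeries.constantCoeff (PowerSeries.constantCoeff g) := by
  have := Tfun_coeff hc g (C (PowerSeries.coeff 0 g)) 1 0 0 (by omega) (by
    intro j hj
    obtain rfl : j = 0 := by omega
    simp)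
  have h2 : PowerSeries.coeff 0 (PowerSeries.coeff 0 (T c hc g)) =
    PowerSeries.coeff 0 (PowerSeries.coeff 0 (Ec c (C (PowerSeries.coeff 0 g)))) := this
  simpa [Ec] using h2

theorem T_X_const_coeff (g : PS K) :
    PowerSeries.coeff 0 (T PowerSeries.X (PowerSeries.constantCoeff_X)
      (PowerSeries.map PowerSeries.C g)) = g := by
  ext m
  have := Tfun_coeff (PowerSeries.constantCoeff_X (R := K)) (PowerSeries.map PowerSeries.C g)
    (∑ j ∈ Finset.range (m + 1), C (PowerSeries.C (PowerSeries.coeff j g)) * X ^ j)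
    (m + 1) 0 m (by omega) (by
    intro j hj
    simp only [PowerSeries.coeff_map, finsetSum_coeff, coeff_C_mul_X_pow]
    rw [Finset.sum_ite_eq, if_pos (by simpa using hj)])
  change PowerSeries.coeff m (PowerSeries.coeff 0 (Tfun _ _)) = _
  rw [this]
  have h2 : ∀ p : (PS K)[X], PowerSeries.coeff 0 (Ec PowerSeries.X p) = p.eval PowerSeries.X := by
    intro p
    rw [PowerSeries.coeff_zero_eq_constantCoeff, Ec, coe_eval₂RingHom, Polynomial.hom_eval₂]
    simp [Polynomial.eval₂_eq_eval_map]
  rw [h2, Polynomial.eval_finsetSum, map_sum]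
  rw [Finset.sum_eq_single m]
  · simp [PowerSeries.coeff_X_pow]
  · intro j _ hj
    simp [PowerSeries.coeff_X_pow, hj.symm]
  · simp

end T
end WG


namespace WG
local notation "PS" => PowerSeries

/-- the basic data : points, and Hensel roots -/
structure Dat (K : Type*) [Field K] (r : ℕ) where
  s : Fin (r + 1) → K
  hs : Function.Injective s
  a : K
  ha : ∀ i, s i ≠ a
  hr : 2 ≤ r
  x : Fin (r + 1) → PS K
  hx0 : ∀ i, PowerSeries.constantCoeff (x i) = s i
  hx : fpol (PowerSeries.C : K →+* PS K) s a PowerSeries.X = ∏ i, (X - C (x i))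

namespace Dat
variable {K : Type*} [Field K] {r : ℕ} (D : Dat K r)

theorem x_inj : Function.Injective D.x := fun i j h => D.hs (by rw [← D.hx0, ← D.hx0, h])

/-- elements represented by polynomials of degree at most `N` -/
noncomputable def Fil (N : ℕ) : Submodule K (PS K) :=
  (MvPolynomial.restrictTotalDegree (Fin (r + 1)) K N).map (MvPolynomial.aeval D.x).toLinearMap

theorem mem_Fil {N : ℕ} {z : PS K} :
    z ∈ D.Fil N ↔ ∃ g : MvPolynomial (Fin (r + 1)) K, g.totalDegree ≤ N ∧ MvPolynomial.aeval D.x g = z := by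
  simp [Fil, MvPolynomial.mem_restrictTotalDegree]

theorem Fil_mono {N M : ℕ} (h : N ≤ M) {z : PS K} (hz : z ∈ D.Fil N) : z ∈ D.Fil M := by
  rw [mem_Fil] at *
  obtain ⟨g, h1, h2⟩ := hz
  exact ⟨g, h1.trans h, h2⟩

theorem Fil_mul {N M : ℕ} {z w : PS K} (hz : z ∈ D.Fil N) (hw : w ∈ D.Fil M) :
    z * w ∈ D.Fil (N + M) := by
  rw [mem_Fil] at *
  obtain ⟨g, h1, h2⟩ := hz
  obtain ⟨g', h1', h2'⟩ := hw
  exact ⟨g * g', (MvPolynomial.totalDegree_mul _ _).trans (by omega), by rw [map_mul, h2, h2']⟩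

theorem Fil_C (c : K) (N : ℕ) : (PowerSeries.C c : PS K) ∈ D.Fil N := by
  rw [mem_Fil]
  exact ⟨MvPolynomial.C c, by simp, by simp⟩

theorem Fil_one (N : ℕ) : (1 : PS K) ∈ D.Fil N := by
  simpa using D.Fil_C 1 N

theorem Fil_x (i : Fin (r + 1)) : D.x i ∈ D.Fil 1 := by
  rw [mem_Fil]
  exact ⟨MvPolynomial.X i, by simp, by simp⟩

theorem Fil_pow {N : ℕ} {z : PS K} (hz : z ∈ D.Fil N) (k : ℕ) : z ^ k ∈ D.Fil (N * k) := by
  induction k with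
  | zero => simpa using D.Fil_one 0
  | succ k ih => rw [pow_succ, mul_add, mul_one]; exact D.Fil_mul ih hz

theorem Fil_prod {ι : Type*} (s : Finset ι) (z : ι → PS K) (N : ℕ) (h : ∀ i ∈ s, z i ∈ D.Fil N) :
    ∏ i ∈ s, z i ∈ D.Fil (s.card * N) := by
  classical
  induction s using Finset.induction_on with
  | empty => simpa using D.Fil_one 0
  | insert i s hi ih =>
    rw [Finset.prod_insert hi, Finset.card_insert_of_notMem hi, add_mul, one_mul, add_comm]
    exact D.Fil_mul (h i (mem_insert_self _ _)) (ih fun j hj => h j (mem_insert_of_mem hj))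

theorem Fil_prod_coeff {ι : Type*} (s : Finset ι) (z : ι → PS K) (h : ∀ i ∈ s, z i ∈ D.Fil 1) :
    (∏ i ∈ s, (X + C (z i))).natDegree ≤ s.card ∧
    ∀ k, (∏ i ∈ s, (X + C (z i))).coeff k ∈ D.Fil (s.card - k) := by
  classical
  induction s using Finset.induction_on with
  | empty =>
    refine ⟨by simp, fun k => ?_⟩
    rw [Finset.prod_empty, Polynomial.coeff_one]
    split_ifs
    · exact D.Fil_one _
    · exact zero_mem _
  | insert i s hi ih =>
    obtain ⟨h1, h2⟩ := ih fun j hj => h j (mem_insert_of_mem hj)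
    have hz := h i (mem_insert_self _ _)
    rw [Finset.prod_insert hi, Finset.card_insert_of_notMem hi]
    refine ⟨?_, ?_⟩
    · refine natDegree_mul_le.trans ?_
      have : (X + C (z i)).natDegree ≤ 1 := by simp
      omega
    · intro k
      rw [add_mul, coeff_add, coeff_C_mul]
      refine add_mem ?_ ?_
      · cases k with
        | zero => simp
        | succ k =>
          rw [coeff_X_mul]
          exact D.Fil_mono (by omega) (h2 k)
      · by_cases hk : k ≤ s.card
        · exact D.Fil_mono (by omega) (D.Fil_mul hz (h2 k))
        · rw [coeff_eq_zero_of_natDegree_lt (by omega), mul_zero]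
          exact zero_mem _

theorem Fil_t : (PowerSeries.X : PS K) ∈ D.Fil r := by
  have h := congrArg (fun p => p.coeff 1) D.hx
  simp only [fpol, coeff_sub] at h
  have h1 : (C (PowerSeries.X : PS K) * (X - C (PowerSeries.C D.a))).coeff 1 = PowerSeries.X := by
    rw [coeff_C_mul]; simp [coeff_C]
  rw [h1] at h
  have h2 := (D.Fil_prod_coeff Finset.univ (fun i => PowerSeries.C (- D.s i))
    (fun i _ => D.Fil_C _ _)).2 1
  have h3 := (D.Fil_prod_coeff Finset.univ (fun i => - D.x i)
    (fun i _ => neg_mem (D.Fil_x _))).2 1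
  simp only [map_neg, ← sub_eq_add_neg, card_univ, Fintype.card_fin, Nat.add_sub_cancel] at h2 h3
  have := sub_mem h2 h3
  rwa [← h, sub_sub_cancel] at this

theorem x_prod {R : Type*} [CommRing R] (φ : PS K →+* R) (z : R) :
    ∏ j, (z - φ (D.x j)) = ∏ j, (z - φ (PowerSeries.C (D.s j)))
      - φ PowerSeries.X * (z - φ (PowerSeries.C D.a)) := by
  have h := congrArg (fun p => (p.map φ).eval z) D.hx
  simp only [fpol_map, fpol_eval] at h
  rw [Polynomial.map_prod, eval_prod] at h
  simpa using h.symm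

/-- the roots as functions of the second variable -/
noncomputable def y (i : Fin (r + 1)) : PS (PS K) := PowerSeries.map PowerSeries.C (D.x i)

theorem y_eq (i : Fin (r + 1)) : ∏ j, (D.y i - PowerSeries.C (PowerSeries.C (D.s j))) =
    PowerSeries.X * (D.y i - PowerSeries.C (PowerSeries.C D.a)) := by
  have h := D.x_prod (RingHom.id _) (D.x i)
  simp only [RingHom.id_apply] at h
  rw [Finset.prod_eq_zero (mem_univ i) (sub_self _)] at h
  have h' := congrArg (PowerSeries.map (PowerSeries.C : K →+* PS K)) (sub_eq_zero.mp h.symm)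
  simpa [y] using h'

/-- key identity : for any `R`-valued point lying over `(t, u)`. -/
theorem y_prod (i : Fin (r + 1)) {R : Type*} [CommRing R] (φ : PS (PS K) →+* R) :
    ∏ j, (φ (D.y i) - φ (PowerSeries.C (D.x j))) =
    (φ PowerSeries.X - φ (PowerSeries.C PowerSeries.X)) *
      (φ (D.y i) - φ (PowerSeries.C (PowerSeries.C D.a))) := by
  have h := D.x_prod (φ.comp PowerSeries.C) (φ (D.y i))
  simp only [RingHom.comp_apply] at h
  rw [h]
  have h2 := congrArg φ (D.y_eq i)
  simp only [map_prod, map_sub, map_mul] at h2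
  rw [h2]; ring

theorem Ty_prod (c : PS K) (hc) (i : Fin (r + 1)) :
    ∏ j, (T c hc (D.y i) - PowerSeries.C (D.x j)) =
    (PowerSeries.C c + PowerSeries.X - PowerSeries.C PowerSeries.X) *
      (T c hc (D.y i) - PowerSeries.C (PowerSeries.C D.a)) := by
  have := D.y_prod i (T c hc)
  simpa only [T_C, T_X] using this

/-- the expansion of the roots at the diagonal -/
noncomputable def z (i : Fin (r + 1)) : PS (PS K) :=
  T PowerSeries.X PowerSeries.constantCoeff_X (D.y i)

theorem z_zero (i : Fin (r + 1)) : PowerSeries.coeff 0 (D.z i) = D.x i := T_X_const_coeff _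

theorem z_prod (i : Fin (r + 1)) : ∏ j, (D.z i - PowerSeries.C (D.x j)) =
    PowerSeries.X * (D.z i - PowerSeries.C (PowerSeries.C D.a)) := by
  have := D.Ty_prod PowerSeries.X PowerSeries.constantCoeff_X i
  rw [add_sub_cancel_left] at this
  exact this

/-- derivative of the polynomial at the roots -/
noncomputable def fd (i : Fin (r + 1)) : PS K := ∏ j ∈ univ.erase i, (D.x i - D.x j)

theorem fd_ne (i : Fin (r + 1)) : D.fd i ≠ 0 := by
  rw [fd, Finset.prod_ne_zero_iff]
  intro j hj h
  exact (Finset.ne_of_mem_erase hj) (D.x_inj (sub_eq_zero.mp h)).symm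

theorem Fil_sub (i j : Fin (r + 1)) : D.x i - D.x j ∈ D.Fil 1 := sub_mem (D.Fil_x i) (D.Fil_x j)

theorem Fil_fd (i : Fin (r + 1)) : D.fd i ∈ D.Fil r := by
  have := D.Fil_prod (univ.erase i) (fun j => D.x i - D.x j) 1 (fun j _ => D.Fil_sub i j)
  rw [fd]
  simpa using this

/-- classes of power series -/
def Cl (ρ N m : ℕ) (w : PS (PS K)) : Prop := ∀ j < N, PowerSeries.coeff j w ∈ D.Fil (ρ * j + m)

variable {D}
theorem Cl.mul {ρ N m m' : ℕ} {v w : PS (PS K)} (hv : D.Cl ρ N m v) (hw : D.Cl ρ N m' w) :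
    D.Cl ρ N (m + m') (v * w) := by
  intro j hj
  rw [PowerSeries.coeff_mul]
  refine sum_mem fun p hp => ?_
  rw [HasAntidiagonal.mem_antidiagonal] at hp
  have := D.Fil_mul (hv p.1 (by omega)) (hw p.2 (by omega))
  refine D.Fil_mono (le_of_eq ?_) this
  rw [← hp]; ring

theorem Cl.add {ρ N m : ℕ} {v w : PS (PS K)} (hv : D.Cl ρ N m v) (hw : D.Cl ρ N m w) :
    D.Cl ρ N m (v + w) := fun j hj => by
  rw [map_add]; exact add_mem (hv j hj) (hw j hj)

theorem Cl.sub {ρ N m : ℕ} {v w : PS (PS K)} (hv : D.Cl ρ N m v) (hw : D.Cl ρ N m w) :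
    D.Cl ρ N m (v - w) := fun j hj => by
  rw [map_sub]; exact sub_mem (hv j hj) (hw j hj)

theorem Cl.sum {ι : Type*} (s : Finset ι) {ρ N m : ℕ} {v : ι → PS (PS K)}
    (hv : ∀ i ∈ s, D.Cl ρ N m (v i)) :
    D.Cl ρ N m (∑ i ∈ s, v i) := fun j hj => by
  rw [map_sum]; exact sum_mem fun i hi => hv i hi j hj

theorem Cl.C {ρ N m : ℕ} {b : PS K} (hb : b ∈ D.Fil m) : D.Cl ρ N m (PowerSeries.C b) := by
  intro j _
  rw [PowerSeries.coeff_C]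
  split_ifs with h
  · exact D.Fil_mono (by omega) hb
  · exact zero_mem _

theorem Cl.mono {ρ N m N' m' : ℕ} {w : PS (PS K)} (hw : D.Cl ρ N m w) (hN : N' ≤ N) (hm : m ≤ m') :
    D.Cl ρ N' m' w := fun j hj => D.Fil_mono (by omega) (hw j (by omega))

theorem Cl.one {ρ N : ℕ} : D.Cl ρ N 0 1 := by
  simpa using (Cl.C (D.Fil_one 0) : D.Cl ρ N 0 (PowerSeries.C 1))

theorem Cl.pow {ρ N m : ℕ} {w : PS (PS K)} (hw : D.Cl ρ N m w) (k : ℕ) : D.Cl ρ N (m * k) (w ^ k) := by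
  induction k with
  | zero => simpa using Cl.one
  | succ k ih => rw [pow_succ, mul_add, mul_one]; exact ih.mul hw

theorem Cl.X_mul {ρ N m : ℕ} {w : PS (PS K)} (hw : D.Cl ρ N (m + ρ) w) :
    D.Cl ρ (N + 1) m (PowerSeries.X * w) := by
  intro j hj
  cases j with
  | zero => simp
  | succ j =>
    rw [PowerSeries.coeff_succ_X_mul]
    exact D.Fil_mono (by rw [mul_add]; omega) (hw j (by omega))

variable (D)

/-- normalised coefficients -/
noncomputable def wt (i : Fin (r + 1)) : PS (PS K) :=
  PowerSeries.mk fun k => D.fd i ^ (2 * k + 1) * PowerSeries.coeff (k + 1) (D.z i)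

theorem wt_eq (i : Fin (r + 1)) : PowerSeries.rescale (D.fd i ^ 2) (D.z i) =
    PowerSeries.C (D.x i) + PowerSeries.X * (PowerSeries.C (D.fd i) * D.wt i) := by
  ext1 k
  cases k with
  | zero => rw [PowerSeries.coeff_rescale, z_zero]; simp
  | succ k =>
    rw [PowerSeries.coeff_rescale, map_add, PowerSeries.coeff_succ_X_mul, PowerSeries.coeff_C_mul, wt,
      PowerSeries.coeff_mk, PowerSeries.coeff_C, if_neg (by omega)]
    ring

theorem wt_rec (i : Fin (r + 1)) : ∃ Q : PS (PS K),
    D.wt i = PowerSeries.C (D.x i - PowerSeries.C D.a) +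
      PowerSeries.X * (PowerSeries.C (D.fd i) * D.wt i) - PowerSeries.X * (D.wt i * D.wt i * Q) ∧
    ∀ N, D.Cl r N 1 (PowerSeries.X * (PowerSeries.C (D.fd i) * D.wt i)) → D.Cl r N (r - 1) Q := by
  set v := PowerSeries.X * (PowerSeries.C (D.fd i) * D.wt i) with hv
  set p : (PS K)[X] := ∏ j ∈ univ.erase i, (X + Polynomial.C (D.x i - D.x j)) with hp
  obtain ⟨hp1, hp2⟩ := D.Fil_prod_coeff (univ.erase i) (fun j => D.x i - D.x j)
    (fun j _ => D.Fil_sub i j)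
  rw [← hp] at hp1 hp2
  simp only [mem_univ, card_erase_of_mem, card_univ, Fintype.card_fin, Nat.add_sub_cancel] at hp1 hp2
  refine ⟨p.divX.eval₂ PowerSeries.C v, ?_, ?_⟩
  · have h1 := congrArg (PowerSeries.rescale (D.fd i ^ 2)) (D.z_prod i)
    rw [map_prod, map_mul] at h1
    simp only [map_sub, wt_eq, ← hv] at h1
    have hC : ∀ b : PS K, PowerSeries.rescale (D.fd i ^ 2) (PowerSeries.C b) = PowerSeries.C b := by
      intro b; ext1 k; rw [PowerSeries.coeff_rescale, PowerSeries.coeff_C]; split_ifs with h <;> simp [h]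
    simp only [hC] at h1
    rw [← Finset.mul_prod_erase univ _ (mem_univ i)] at h1
    have h2 : ∏ j ∈ univ.erase i, (PowerSeries.C (D.x i) + v - PowerSeries.C (D.x j)) =
        p.eval₂ PowerSeries.C v := by
      rw [hp, Polynomial.eval₂_finsetProd]
      refine Finset.prod_congr rfl fun j _ => ?_
      rw [eval₂_add, eval₂_X, eval₂_C, map_sub]
      ring
    have h3 : p.eval₂ PowerSeries.C v = p.divX.eval₂ PowerSeries.C v * v + PowerSeries.C (D.fd i) := by
      conv_lhs => rw [← Polynomial.divX_mul_X_add p]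
      rw [eval₂_add, eval₂_mul, eval₂_X, eval₂_C]
      congr 2
      rw [hp, coeff_zero_prod]
      simp [fd]
    have h4 : PowerSeries.rescale (D.fd i ^ 2) (PowerSeries.X : PS (PS K)) =
        PowerSeries.C (D.fd i) ^ 2 * PowerSeries.X := by
      rw [PowerSeries.rescale_X, map_pow]
    rw [h2, h3, h4] at h1
    set Q := p.divX.eval₂ PowerSeries.C v
    have hne : (PowerSeries.C (D.fd i) : PS (PS K)) ^ 2 * PowerSeries.X ≠ 0 := by
      refine mul_ne_zero (pow_ne_zero _ ?_) PowerSeries.X_ne_zero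
      exact fun h => D.fd_ne i (PowerSeries.C_injective (by rw [h, map_zero]))
    apply mul_left_cancel₀ hne
    rw [map_sub]
    have h5 : v * (Q * v + PowerSeries.C (D.fd i)) = PowerSeries.C (D.fd i) ^ 2 * PowerSeries.X *
      (PowerSeries.C (D.x i) + v - PowerSeries.C (PowerSeries.C D.a)) := by
      rw [← h1]; ring
    rw [hv] at h5 ⊢
    linear_combination h5
  · intro N hN
    rw [Polynomial.eval₂_eq_sum_range' PowerSeries.C (n := r)]
    · refine Cl.sum _ fun m hm => ?_
      rw [mem_range] at hm
      rw [Polynomial.coeff_divX]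
      have := (Cl.C (hp2 (m + 1)) (ρ := r) (N := N)).mul (hN.pow m)
      exact this.mono le_rfl (by omega)
    · rw [Polynomial.natDegree_divX_eq_natDegree_tsub_one]
      have := D.hr
      omega

theorem wt_Cl (i : Fin (r + 1)) (N : ℕ) : D.Cl r N 1 (D.wt i) := by
  obtain ⟨Q, h1, h2⟩ := D.wt_rec i
  induction N with
  | zero => intro j hj; omega
  | succ N ih =>
    have hr := D.hr
    have h3 : D.Cl r (N + 1) 1 (PowerSeries.X * (PowerSeries.C (D.fd i) * D.wt i)) := by
      apply Cl.X_mul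
      exact ((Cl.C (D.Fil_fd i)).mul ih).mono le_rfl (by omega)
    have h4 := (h2 _ h3).mono (N' := N) (Nat.le_succ _) le_rfl
    rw [h1]
    refine ((Cl.C (sub_mem (D.Fil_x i) (D.Fil_C _ _))).add h3).sub ?_
    apply Cl.X_mul
    exact ((ih.mul ih).mul h4).mono le_rfl (by omega)

/-- the discriminant -/
noncomputable def disc : PS K := ∏ i, D.fd i

theorem disc_eq (i : Fin (r + 1)) : ∃ g ∈ D.Fil (r ^ 2 - r), D.disc = g * D.fd i ^ 2 := by
  refine ⟨(∏ k ∈ univ.erase i, -1) * ∏ k ∈ univ.erase i, ∏ j ∈ (univ.erase k).erase i, (D.x k - D.x j),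
    ?_, ?_⟩
  · have h1 := D.Fil_prod (univ.erase i) (fun k => ∏ j ∈ (univ.erase k).erase i, (D.x k - D.x j))
      (r - 1) (by
        intro k hk
        have := D.Fil_prod ((univ.erase k).erase i) (fun j => D.x k - D.x j) 1
          (fun j _ => D.Fil_sub k j)
        rwa [Finset.card_erase_of_mem (by
          rw [mem_erase]; exact ⟨(Finset.ne_of_mem_erase hk).symm, mem_univ _⟩),
          Finset.card_erase_of_mem (mem_univ _), card_univ, Fintype.card_fin, mul_one] at this)
    rw [Finset.card_erase_of_mem (mem_univ _), card_univ, Fintype.card_fin, Nat.add_sub_cancel] at h1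
    have h2 : r * (r - 1) = r ^ 2 - r := by rw [Nat.mul_sub, sq, mul_one]
    rw [h2] at h1
    have h3 : (∏ k ∈ univ.erase i, (-1 : PS K)) ∈ D.Fil 0 := by
      have := D.Fil_prod (univ.erase i) (fun _ => (-1 : PS K)) 0 (fun _ _ => neg_mem (D.Fil_one 0))
      simpa using this
    have := D.Fil_mul h3 h1
    rwa [zero_add] at this
  · have h1 : ∏ k ∈ univ.erase i, D.fd k = (∏ k ∈ univ.erase i, (D.x k - D.x i)) *
      ∏ k ∈ univ.erase i, ∏ j ∈ (univ.erase k).erase i, (D.x k - D.x j) := by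
      rw [← Finset.prod_mul_distrib]
      refine Finset.prod_congr rfl fun k hk => ?_
      rw [fd, ← Finset.mul_prod_erase (univ.erase k) _ (a := i)]
      rw [mem_erase]; exact ⟨(Finset.ne_of_mem_erase hk).symm, mem_univ _⟩
    have h2 : ∏ k ∈ univ.erase i, (D.x k - D.x i) = (∏ k ∈ univ.erase i, -1) * D.fd i := by
      rw [fd, ← Finset.prod_mul_distrib]
      refine Finset.prod_congr rfl fun k hk => ?_
      ring
    rw [disc, ← Finset.mul_prod_erase univ _ (mem_univ i), h1, h2]
    ring

theorem z_est (i : Fin (r + 1)) (k : ℕ) :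
    D.disc ^ k * PowerSeries.coeff k (D.z i) ∈ D.Fil (r ^ 2 * k + 1) := by
  cases k with
  | zero => rw [z_zero]; simpa using D.Fil_x i
  | succ k =>
    obtain ⟨g, hg, hd⟩ := D.disc_eq i
    have h1 := D.wt_Cl i (k + 1) k (Nat.lt_succ_self _)
    rw [wt, PowerSeries.coeff_mk] at h1
    have h2 := D.Fil_mul (D.Fil_mul (D.Fil_pow hg (k + 1)) (D.Fil_fd i)) h1
    have h3 : D.disc ^ (k + 1) * PowerSeries.coeff (k + 1) (D.z i) = g ^ (k + 1) * D.fd i *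
      (D.fd i ^ (2 * k + 1) * PowerSeries.coeff (k + 1) (D.z i)) := by
      rw [hd]; ring
    rw [h3]
    refine D.Fil_mono ?_ h2
    have h4 : r ≤ r ^ 2 := Nat.le_self_pow (by omega) r
    obtain ⟨e, he⟩ := Nat.exists_eq_add_of_le h4
    rw [he, Nat.add_sub_cancel_left]
    nlinarith

end Dat
end WG


namespace WG
local notation "PS" => PowerSeries
namespace Dat
variable {K : Type*} [Field K] {r : ℕ} (D : Dat K r)

/-- conclusion of Galois theory for the roots -/
structure GalD {K : Type*} [Field K] {r : ℕ} (D : Dat K r) (E : Type*) [Field E] [Algebra (PS K) E] [Algebra K[X] E] where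
  G : Subgroup (Equiv.Perm (Fin (r + 1)))
  hA : ∀ σ ∈ G, ∀ g : MvPolynomial (Fin (r + 1)) K, MvPolynomial.aeval D.x g = 0 →
    MvPolynomial.aeval (D.x ∘ σ) g = 0
  hA' : ∀ σ ∈ G, ∀ g : MvPolynomial (Fin (r + 1)) K, ∀ e : K[X],
    IsIntegral K[X] (algebraMap (PS K) E (MvPolynomial.aeval D.x g) / algebraMap K[X] E e) →
    IsIntegral K[X] (algebraMap (PS K) E (MvPolynomial.aeval (D.x ∘ σ) g) / algebraMap K[X] E e)
  hB : ∀ g : MvPolynomial (Fin (r + 1)) K,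
    (∀ σ ∈ G, MvPolynomial.aeval (D.x ∘ σ) g = MvPolynomial.aeval D.x g) →
    ∃ u v : K[X], v ≠ 0 ∧ (v : PS K) * MvPolynomial.aeval D.x g = u
  β : Fin (Nat.card G) → MvPolynomial (Fin (r + 1)) K
  hβ : ∀ N, LinearIndependent K (fun p : Fin (Nat.card G) × Fin N =>
    MvPolynomial.aeval D.x (β p.1) * (PowerSeries.X : PS K) ^ (p.2 : ℕ))

theorem galois_aux (E : Type*) [Field E] [Algebra (PS K) E] [FaithfulSMul (PS K) E]
    [Algebra K[X] E] (hcomp : ∀ p : K[X], algebraMap K[X] E p = algebraMap (PS K) E (p : PS K))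
    (k : Type*) [Field k] [Algebra K[X] k] [IsFractionRing K[X] k] [Algebra k E]
    [IsScalarTower K[X] k E] : Nonempty (GalD D E) := by
  classical
  set ι := algebraMap (PS K) E with hι
  have ιinj : Function.Injective ι := FaithfulSMul.algebraMap_injective (PS K) E
  -- the field of constants
  let φ : K →+* k := (algebraMap K[X] k).comp C
  have hφ : (algebraMap k E).comp φ = ι.comp PowerSeries.C := by
    ext c
    simp only [RingHom.comp_apply, φ]
    rw [← IsScalarTower.algebraMap_apply K[X] k E, hcomp, Polynomial.coe_C]
  let f : k[X] := fpol φ D.s D.a (algebraMap K[X] k X)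
  have hf : f.map (algebraMap k E) = ∏ i, (X - C (ι (D.x i))) := by
    have h1 := congrArg (Polynomial.map ι) D.hx
    rw [fpol_map] at h1
    rw [fpol_map, hφ, ← IsScalarTower.algebraMap_apply K[X] k E, hcomp, Polynomial.coe_X, h1,
      Polynomial.map_prod]
    simp
  have hfm : f.Monic := (fpol_monic_deg (by have := D.hr; omega) φ D.s D.a _).1
  have hsplit : (f.map (algebraMap k E)).Splits := by
    rw [hf]; exact Polynomial.Splits.prod (fun i _ => Polynomial.Splits.X_sub_C _)
  have hroot : ∀ z : E, z ∈ f.rootSet E ↔ ∃ i, z = ι (D.x i) := by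
    intro z
    rw [mem_rootSet_of_ne hfm.ne_zero, aeval_def, ← eval_map, hf, eval_prod, Finset.prod_eq_zero_iff]
    simp [sub_eq_zero]
  let L := IntermediateField.adjoin k (f.rootSet E)
  have hspl : IsSplittingField k L f := IntermediateField.adjoin_rootSet_isSplittingField hsplit
  have hsep : f.Separable := by
    rw [← separable_map (algebraMap k E), hf, separable_prod_X_sub_C_iff]
    exact ιinj.comp D.x_inj
  have hgal : IsGalois k L := IsGalois.of_separable_splitting_field hsep
  have hfin : FiniteDimensional k L := IsSplittingField.finiteDimensional L f
  let ξ : Fin (r + 1) → L := fun i => ⟨ι (D.x i),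
    IntermediateField.subset_adjoin k _ ((hroot _).2 ⟨i, rfl⟩)⟩
  have hξ : ∀ i, (ξ i : E) = ι (D.x i) := fun i => rfl
  have ξinj : Function.Injective ξ := fun i j h => D.x_inj (ιinj (by rw [← hξ, ← hξ, h]))
  have hrootL : ∀ z : L, z ∈ f.rootSet L ↔ ∃ i, z = ξ i := by
    intro z
    rw [mem_rootSet_of_ne hfm.ne_zero]
    have h1 : (aeval z f = 0) ↔ (aeval (z : E) f = 0) := by
      have h9 := Polynomial.aeval_algHom_apply (IntermediateField.val L) z f
      change aeval (z : E) f = ((aeval z f : L) : E) at h9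
      rw [h9]
      exact (ZeroMemClass.coe_eq_zero).symm
    have h2 := hroot (z : E)
    rw [mem_rootSet_of_ne hfm.ne_zero] at h2
    rw [h1, h2]
    constructor
    · rintro ⟨i, hi⟩; exact ⟨i, Subtype.ext hi⟩
    · rintro ⟨i, rfl⟩; exact ⟨i, rfl⟩
  have hadj : Algebra.adjoin k (Set.range ξ) = ⊤ := by
    rw [← IsSplittingField.adjoin_rootSet L f]
    congr 1
    ext z
    rw [hrootL]
    simp [eq_comm]
  let φL : K →+* L := (algebraMap k L).comp φ
  let evL : (Fin (r + 1) → L) → MvPolynomial (Fin (r + 1)) K →+* L := fun w => MvPolynomial.eval₂Hom φL w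
  have hev : ∀ (π : Fin (r + 1) → Fin (r + 1)) (g : MvPolynomial (Fin (r + 1)) K),
      ((evL (ξ ∘ π) g : L) : E) = ι (MvPolynomial.aeval (D.x ∘ π) g) := by
    intro π g
    rw [MvPolynomial.map_aeval]
    have h1 := MvPolynomial.eval₂_comp_left (algebraMap L E) φL (ξ ∘ π) g
    have h2 : (algebraMap L E).comp φL = ι.comp (algebraMap K (PS K)) := by
      rw [← RingHom.comp_assoc, ← IsScalarTower.algebraMap_eq k L E]
      exact hφ
    rw [h2] at h1
    exact h1
  have hσ : ∀ (σ : L ≃ₐ[k] L) (π : Fin (r + 1) → Fin (r + 1)), (∀ i, σ (ξ i) = ξ (π i)) →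
      ∀ g, σ (evL ξ g) = evL (ξ ∘ π) g := by
    intro σ π h g
    have h1 := MvPolynomial.eval₂_comp_left (σ : L →+* L) φL ξ g
    have h2 : (σ : L →+* L).comp φL = φL := by
      ext c
      simp [φL]
    have h3 : ((σ : L →+* L) : L → L) ∘ ξ = ξ ∘ π := by
      funext i; exact h i
    rw [h2, h3] at h1
    exact h1
  let G : Subgroup (Equiv.Perm (Fin (r + 1))) :=
    { carrier := {π | ∃ σ : L ≃ₐ[k] L, ∀ i, σ (ξ i) = ξ (π i)}
      mul_mem' := by
        rintro π π' ⟨σ, h⟩ ⟨σ', h'⟩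
        refine ⟨σ * σ', fun i => ?_⟩
        rw [AlgEquiv.mul_apply, h', h, Equiv.Perm.mul_apply]
      one_mem' := ⟨1, fun i => by simp⟩
      inv_mem' := by
        rintro π ⟨σ, h⟩
        refine ⟨σ⁻¹, fun i => ?_⟩
        have := h (π⁻¹ i)
        rw [show π (π⁻¹ i) = i by simp] at this
        rw [← this]
        exact σ.symm_apply_apply _ }
  have hG : ∀ π, π ∈ G ↔ ∃ σ : L ≃ₐ[k] L, ∀ i, σ (ξ i) = ξ (π i) := fun π => Iff.rfl
  have hperm : ∀ σ : L ≃ₐ[k] L, ∃ π : G, ∀ i, σ (ξ i) = ξ (π.1 i) := by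
    intro σ
    have h1 : ∀ i, ∃ j, σ (ξ i) = ξ j := by
      intro i
      rw [← hrootL]
      have h2 := (hrootL (ξ i)).2 ⟨i, rfl⟩
      rw [mem_rootSet_of_ne hfm.ne_zero] at h2 ⊢
      have := Polynomial.aeval_algHom_apply (σ : L →ₐ[k] L) (ξ i) f
      rw [h2, map_zero] at this
      exact this
    choose π hπ using h1
    have hinj : Function.Injective π := by
      intro i j h
      apply ξinj
      apply σ.injective
      rw [hπ, hπ, h]
    exact ⟨⟨Equiv.ofBijective π (Finite.injective_iff_bijective.mp hinj), σ, hπ⟩, hπ⟩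
  choose π hπ using hperm
  have hbij : Function.Bijective π := by
    constructor
    · intro σ τ h
      have h1 : (σ : L →ₐ[k] L) = τ := by
        apply AlgHom.ext_of_adjoin_eq_top hadj
        rintro _ ⟨i, rfl⟩
        change σ (ξ i) = τ (ξ i)
        rw [hπ, hπ, h]
      ext z : 1
      exact congrArg (fun ψ : L →ₐ[k] L => ψ z) h1
    · rintro ⟨p, σ, hp⟩
      refine ⟨σ, ?_⟩
      apply Subtype.ext
      ext i : 1
      apply ξinj
      rw [← hπ, hp]
  have hcard : Nat.card G = Module.finrank k L := by
    rw [← IsGalois.card_aut_eq_finrank k L]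
    exact (Nat.card_congr (Equiv.ofBijective π hbij)).symm
  -- basis
  have hspan : Submodule.span k (Set.range fun g => evL ξ g) = ⊤ := by
    rw [eq_top_iff]
    have : (⊤ : Submodule k L) = Subalgebra.toSubmodule (Algebra.adjoin k (Set.range ξ)) := by
      rw [hadj]; rfl
    rw [this, Algebra.adjoin_eq_span, Submodule.span_le]
    intro z hz
    apply Submodule.subset_span
    have : Submonoid.closure (Set.range ξ) ≤ MonoidHom.mrange (evL ξ : MvPolynomial (Fin (r + 1)) K →* L) := by
      rw [Submonoid.closure_le]
      rintro _ ⟨i, rfl⟩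
      exact ⟨MvPolynomial.X i, by simp [evL]⟩
    exact this hz
  obtain ⟨b, hb1, -, hb3⟩ := Submodule.exists_fun_fin_finrank_span_eq k (Set.range fun g => evL ξ g)
  have hd : Module.finrank k (Submodule.span k (Set.range fun g => evL ξ g)) = Nat.card G := by
    rw [hspan, finrank_top, hcard]
  choose β hβ using hb1
  have hβ' : ∀ i, evL ξ (β i) = b i := hβ
  refine ⟨{ G := G, hA := ?_, hA' := ?_, hB := ?_, β := fun i => β (Fin.cast hd.symm i), hβ := ?_ }⟩
  · intro p hp g hg
    obtain ⟨σ, hp⟩ := (hG p).1 hp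
    apply ιinj
    rw [map_zero, ← hev, ← hσ σ p hp]
    have : evL ξ g = 0 := by
      apply Subtype.ext
      have := hev id g
      rw [Function.comp_id, Function.comp_id, hg, map_zero] at this
      exact this
    rw [this, map_zero]; rfl
  · intro p hp g e he
    obtain ⟨σ, hp⟩ := (hG p).1 hp
    have h0 := hev id g
    rw [Function.comp_id, Function.comp_id] at h0
    have hst : IsScalarTower K[X] L E := IsScalarTower.of_algebraMap_eq fun p => by
      rw [IsScalarTower.algebraMap_apply K[X] k E, IsScalarTower.algebraMap_apply K[X] k L,
        ← IsScalarTower.algebraMap_apply k L E]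
    have h1 : ∀ z : L, algebraMap L E (z / algebraMap K[X] L e) = (z : E) / algebraMap K[X] E e := by
      intro z
      rw [map_div₀, ← IsScalarTower.algebraMap_apply K[X] L E]; rfl
    have h2 : IsIntegral K[X] (evL ξ g / algebraMap K[X] L e) := by
      rw [← isIntegral_algebraMap_iff (B := E) (algebraMap L E).injective, h1, h0]
      exact he
    have h3 := h2.map (σ.restrictScalars K[X])
    rw [← isIntegral_algebraMap_iff (B := E) (algebraMap L E).injective] at h3
    have h4 : (σ.restrictScalars K[X]) (evL ξ g / algebraMap K[X] L e) =
      evL (ξ ∘ p) g / algebraMap K[X] L e := by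
      rw [map_div₀, AlgEquiv.commutes, AlgEquiv.restrictScalars_apply, hσ σ p hp]
    rw [h4, h1, hev] at h3
    exact h3
  · intro g hg
    have h0 := hev id g
    rw [Function.comp_id, Function.comp_id] at h0
    have h1 : evL ξ g ∈ (⊥ : IntermediateField k L) := by
      rw [IsGalois.mem_bot_iff_fixed]
      intro σ
      rw [hσ σ (π σ).1 (hπ σ)]
      apply Subtype.ext
      rw [hev, h0, hg _ (π σ).2]
    obtain ⟨w, hw⟩ := IntermediateField.mem_bot.1 h1
    obtain ⟨u, v, hv, huv⟩ := IsFractionRing.div_surjective (A := K[X]) w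
    have hv0 : v ≠ 0 := nonZeroDivisors.ne_zero hv
    refine ⟨u, v, hv0, ?_⟩
    apply ιinj
    rw [map_mul, ← h0, ← hw, ← hcomp, ← hcomp, ← huv]
    have h5 : ((algebraMap k L (algebraMap K[X] k u / algebraMap K[X] k v) : L) : E) =
      algebraMap K[X] E u / algebraMap K[X] E v := by
      have h8 : ∀ w : k, ((algebraMap k L w : L) : E) = algebraMap k E w := fun w => rfl
      rw [h8, map_div₀, ← IsScalarTower.algebraMap_apply K[X] k E,
        ← IsScalarTower.algebraMap_apply K[X] k E]
    rw [h5, mul_div_cancel₀]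
    rw [hcomp]
    intro h
    apply hv0
    rw [← map_zero ι] at h
    have := ιinj h
    exact Polynomial.coe_injective K (by simpa using this)
  · intro N
    rw [Fintype.linearIndependent_iff]
    intro c hc
    have h1 : ∑ i : Fin (Nat.card G), (algebraMap K[X] k (∑ j : Fin N, C (c (i, j)) * X ^ (j : ℕ))) •
        b (Fin.cast hd.symm i) = 0 := by
      apply Subtype.ext
      have h2 := congrArg ι hc
      rw [Fintype.sum_prod_type, map_sum, map_zero] at h2
      refine Eq.trans ?_ h2
      change algebraMap L E _ = _
      rw [map_sum]
      refine Finset.sum_congr rfl fun i _ => ?_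
      rw [Algebra.smul_def, map_mul, ← IsScalarTower.algebraMap_apply k L E,
        ← IsScalarTower.algebraMap_apply K[X] k E, hcomp, ← hβ']
      have h3 := hev id (β (Fin.cast hd.symm i))
      rw [Function.comp_id, Function.comp_id] at h3
      change _ * ((evL ξ (β (Fin.cast hd.symm i)) : L) : E) = _
      rw [h3, ← map_mul]
      congr 1
      rw [← Polynomial.coeToPowerSeries.ringHom_apply, map_sum, Finset.sum_mul]
      refine Finset.sum_congr rfl fun j _ => ?_
      rw [map_mul, map_pow, Polynomial.coeToPowerSeries.ringHom_apply,
        Polynomial.coeToPowerSeries.ringHom_apply, Polynomial.coe_C, Polynomial.coe_X,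
        PowerSeries.smul_eq_C_mul]
      ring
    have hb4 : LinearIndependent k (fun i : Fin (Nat.card G) => b (Fin.cast hd.symm i)) :=
      hb3.comp _ (Fin.cast_injective _)
    rw [Fintype.linearIndependent_iff] at hb4
    rintro ⟨i, j⟩
    have h5 := hb4 _ h1 i
    rw [map_eq_zero_iff _ (IsFractionRing.injective K[X] k)] at h5
    have h6 := congrArg (fun p => p.coeff (j : ℕ)) h5
    simp only [finsetSum_coeff, coeff_C_mul_X_pow, coeff_zero] at h6
    rw [Finset.sum_eq_single j] at h6
    · simpa using h6
    · intro j' _ hj'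
      rw [if_neg]
      exact fun h => hj' (Fin.ext h.symm)
    · simp

theorem comp_E (p : K[X]) : algebraMap K[X] (FractionRing (PS K)) p =
    algebraMap (PS K) (FractionRing (PS K)) (p : PS K) := rfl

theorem faithful_E : FaithfulSMul K[X] (FractionRing (PS K)) := by
  rw [faithfulSMul_iff_algebraMap_injective]
  intro p q h
  rw [comp_E, comp_E] at h
  exact Polynomial.coe_injective K (IsFractionRing.injective (PS K) (FractionRing (PS K)) h)

theorem exists_gal : Nonempty (GalD D (FractionRing (PS K))) := by
  have := faithful_E (K := K)
  let _ := FractionRing.liftAlgebra K[X] (FractionRing (PS K))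
  have : IsScalarTower K[X] (FractionRing K[X]) (FractionRing (PS K)) :=
    FractionRing.isScalarTower_liftAlgebra K[X] (FractionRing (PS K))
  exact D.galois_aux (FractionRing (PS K)) comp_E (FractionRing K[X])

end Dat
end WG


namespace WG
local notation "PS" => PowerSeries
namespace Dat
variable {K : Type*} [Field K] {r : ℕ} (D : Dat K r)

/-- ambient field -/
abbrev EE (K : Type*) [Field K] := FractionRing (PS K)

/-- the embedding of power series into the ambient field -/
noncomputable abbrev io (K : Type*) [Field K] : PS K →+* EE K := algebraMap (PS K) (EE K)

theorem io_inj : Function.Injective (io K) := IsFractionRing.injective (PS K) (EE K)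

theorem coe_ne_zero' {p : K[X]} (h : p ≠ 0) : (p : PS K) ≠ 0 := fun h' =>
  h (Polynomial.coe_injective K (by simpa using h'))

theorem dvd_of_integral (u v : K[X]) (hv : v ≠ 0)
    (h : IsIntegral K[X] (io K (u : PS K) / io K (v : PS K))) : v ∣ u := by
  have := faithful_E (K := K)
  let _ := FractionRing.liftAlgebra K[X] (FractionRing (PS K))
  have : IsScalarTower K[X] (FractionRing K[X]) (FractionRing (PS K)) :=
    FractionRing.isScalarTower_liftAlgebra K[X] (FractionRing (PS K))
  have h1 : io K (u : PS K) / io K (v : PS K) = algebraMap (FractionRing K[X]) (EE K)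
      (algebraMap K[X] (FractionRing K[X]) u / algebraMap K[X] (FractionRing K[X]) v) := by
    rw [map_div₀, ← IsScalarTower.algebraMap_apply, ← IsScalarTower.algebraMap_apply]
    rfl
  rw [h1, isIntegral_algebraMap_iff (algebraMap (FractionRing K[X]) (EE K)).injective] at h
  obtain ⟨p, hp⟩ := IsIntegrallyClosed.isIntegral_iff.1 h
  refine ⟨p, IsFractionRing.injective K[X] (FractionRing K[X]) ?_⟩
  have hv' : algebraMap K[X] (FractionRing K[X]) v ≠ 0 := by
    simpa using hv
  rw [map_mul, hp, mul_div_cancel₀]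
  exact hv'

theorem x_eq (i : Fin (r + 1)) : ∏ j, (D.x i - PowerSeries.C (D.s j)) =
    PowerSeries.X * (D.x i - PowerSeries.C D.a) := by
  have h := congrArg (Polynomial.eval (D.x i)) D.hx
  rw [fpol_eval, eval_prod] at h
  have h2 : ∏ j, eval (D.x i) (X - C (D.x j)) = 0 :=
    Finset.prod_eq_zero (mem_univ i) (by simp)
  rw [h2] at h
  exact sub_eq_zero.1 h

theorem x_integral (i : Fin (r + 1)) : IsIntegral K[X] (D.x i) := by
  refine ⟨fpol C D.s D.a X, (fpol_monic_deg (by have := D.hr; omega) _ _ _ _).1, ?_⟩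
  rw [← eval_map, fpol_map]
  have h := congrArg (Polynomial.eval (D.x i)) D.hx
  rw [eval_prod, Finset.prod_eq_zero (mem_univ i) (by simp)] at h
  have e1 : (algebraMap K[X] (PS K)).comp C = PowerSeries.C := RingHom.ext fun c => Polynomial.coe_C c
  have e2 : algebraMap K[X] (PS K) X = PowerSeries.X := Polynomial.coe_X
  rw [e1, e2]
  exact h

theorem aeval_integral (σ : Fin (r + 1) → Fin (r + 1)) (g : MvPolynomial (Fin (r + 1)) K) :
    IsIntegral K[X] (MvPolynomial.aeval (D.x ∘ σ) g) := by
  induction g using MvPolynomial.induction_on with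
  | C c =>
    have : MvPolynomial.aeval (D.x ∘ σ) (MvPolynomial.C c) = algebraMap K[X] (PS K) (C c) := by
      simp only [MvPolynomial.aeval_C]
      exact (Polynomial.coe_C c).symm
    rw [this]; exact isIntegral_algebraMap
  | add p q hp hq => rw [map_add]; exact hp.add hq
  | mul_X p i hp => rw [map_mul, MvPolynomial.aeval_X]; exact hp.mul (D.x_integral _)

theorem integral_io {w : PS K} (h : IsIntegral K[X] w) : IsIntegral K[X] (io K w) := by
  exact h.map (IsScalarTower.toAlgHom K[X] (PS K) (EE K))

theorem exists_poly (G : GalD D (EE K)) (g : MvPolynomial (Fin (r + 1)) K)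
    (hg : ∀ σ ∈ G.G, MvPolynomial.aeval (D.x ∘ σ) g = MvPolynomial.aeval D.x g) :
    ∃ p : K[X], MvPolynomial.aeval D.x g = (p : PS K) := by
  obtain ⟨u, v, hv, huv⟩ := G.hB g hg
  have hv' := coe_ne_zero' hv
  have h1 := integral_io (D.aeval_integral id g)
  rw [Function.comp_id] at h1
  have h2 : io K (MvPolynomial.aeval D.x g) = io K (u : PS K) / io K (v : PS K) := by
    rw [eq_div_iff, ← map_mul, mul_comm, huv]
    rw [Ne, map_eq_zero_iff _ io_inj]; exact hv'
  rw [h2] at h1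
  obtain ⟨p, hp⟩ := dvd_of_integral u v hv h1
  refine ⟨p, mul_left_cancel₀ hv' ?_⟩
  rw [huv, hp, Polynomial.coe_mul]

theorem t_transc (p : K[X]) (h : p.eval₂ ((io K).comp PowerSeries.C) (io K PowerSeries.X) = 0) : p = 0 := by
  have : p.eval₂ ((io K).comp PowerSeries.C) (io K PowerSeries.X) = io K (p : PS K) := by
    rw [← Polynomial.hom_eval₂]
    congr 1
    rw [Polynomial.eval₂_eq_sum_range]
    conv_rhs => rw [p.as_sum_range]
    rw [← Polynomial.coeToPowerSeries.ringHom_apply, map_sum]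
    refine Finset.sum_congr rfl fun i _ => ?_
    rw [Polynomial.coeToPowerSeries.ringHom_apply, ← Polynomial.C_mul_X_pow_eq_monomial]
    simp
  rw [this, map_eq_zero_iff _ io_inj] at h
  exact Polynomial.coe_injective K (by simpa using h)

theorem exists_val_inf : ∃ O : ValuationSubring (EE K), (∀ c : K, io K (PowerSeries.C c) ∈ O) ∧
    1 < O.valuation (io K PowerSeries.X) := by
  set t : EE K := io K PowerSeries.X with ht
  have ht0 : t ≠ 0 := by
    rw [ht, Ne, map_eq_zero_iff _ io_inj]; exact PowerSeries.X_ne_zero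
  let φ : K →+* EE K := (io K).comp PowerSeries.C
  let A : Subring (EE K) := (Polynomial.eval₂RingHom φ t⁻¹).range
  have htA : t⁻¹ ∈ A := ⟨X, by simp⟩
  let I : Ideal A := Ideal.span {⟨t⁻¹, htA⟩}
  have hI : I ≠ ⊤ := by
    intro h
    have h1 : (1 : A) ∈ I := by rw [h]; trivial
    rw [Ideal.mem_span_singleton] at h1
    obtain ⟨⟨_, p, rfl⟩, hp⟩ := h1
    have h2 : (1 : EE K) = t⁻¹ * p.eval₂ φ t⁻¹ := congrArg Subtype.val hp
    have h3 : (1 - X * p : K[X]).eval₂ φ t⁻¹ = 0 := by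
      rw [eval₂_sub, eval₂_mul, eval₂_X, ← h2]; simp
    have h5 : ((1 - X * p : K[X]).reverse).eval₂ φ t = 0 := by
      have hi : Invertible t⁻¹ := invertibleOfNonzero (inv_ne_zero ht0)
      have h4 := Polynomial.eval₂_reverse_eq_zero_iff φ t⁻¹ (1 - X * p)
      have : t = ⅟(t⁻¹) := by rw [invOf_eq_inv, inv_inv]
      rw [this]; exact h4.2 h3
    have h8 := t_transc _ h5
    rw [Polynomial.reverse_eq_zero] at h8
    have := congrArg (Polynomial.eval 0) h8
    simp at this
  obtain ⟨O, hO1, hO2⟩ := Ideal.image_subset_nonunits_valuationSubring I hI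
  refine ⟨O, fun c => hO1 ⟨C c, by simp [φ]⟩, ?_⟩
  have h1 : t⁻¹ ∈ O.nonunits := hO2 ⟨⟨t⁻¹, htA⟩, Ideal.subset_span rfl, rfl⟩
  rw [ValuationSubring.mem_nonunits_iff, map_inv₀] at h1
  rwa [inv_lt_one₀] at h1
  rw [zero_lt_iff, Ne, map_eq_zero]; exact ht0


theorem io_C_le {O : ValuationSubring (EE K)} (hO : ∀ c : K, io K (PowerSeries.C c) ∈ O) (c : K) :
    O.valuation (io K (PowerSeries.C c)) ≤ 1 := (O.valuation_le_one_iff _).2 (hO c)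

theorem val_x {O : ValuationSubring (EE K)} (hO : ∀ c : K, io K (PowerSeries.C c) ∈ O)
    (ht : 1 < O.valuation (io K PowerSeries.X)) (i : Fin (r + 1)) :
    O.valuation (io K (D.x i)) ^ r ≤ O.valuation (io K PowerSeries.X) := by
  rcases le_or_gt (O.valuation (io K (D.x i))) 1 with h | h
  · exact (pow_le_one₀ zero_le h).trans ht.le
  · have h1 : ∀ c : K, O.valuation (io K (D.x i - PowerSeries.C c)) = O.valuation (io K (D.x i)) := by
      intro c
      rw [map_sub]
      exact Valuation.map_sub_eq_of_lt_left _ ((io_C_le hO c).trans_lt h)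
    have h2 := congrArg (fun z => O.valuation (io K z)) (D.x_eq i)
    simp only [map_mul, map_prod, h1] at h2
    rw [Finset.prod_const, Finset.card_univ, Fintype.card_fin, pow_succ] at h2
    exact (mul_right_cancel₀ (by rintro h0; rw [h0] at h; exact absurd h (by simp)) h2).le

theorem val_Fil {O : ValuationSubring (EE K)} (hO : ∀ c : K, io K (PowerSeries.C c) ∈ O)
    (ht : 1 < O.valuation (io K PowerSeries.X)) {N : ℕ} {w : PS K} (hw : w ∈ D.Fil N) :
    O.valuation (io K w) ^ r ≤ O.valuation (io K PowerSeries.X) ^ N := by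
  obtain ⟨g, hg, rfl⟩ := D.mem_Fil.1 hw
  rw [MvPolynomial.aeval_def, MvPolynomial.eval₂_eq, map_sum]
  have key : ∀ s : Finset (Fin (r + 1) →₀ ℕ), (∀ m ∈ s, m ∈ g.support) →
      O.valuation (∑ m ∈ s, io K (algebraMap K (PS K) (g.coeff m) * ∏ i ∈ m.support, D.x i ^ m i)) ^ r
        ≤ O.valuation (io K PowerSeries.X) ^ N := by
    intro s
    induction s using Finset.induction_on with
    | empty =>
      intro _
      rw [Finset.sum_empty, map_zero, zero_pow (by have := D.hr; omega)]
      exact zero_le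
    | insert m s hm ih =>
      intro hs
      rw [Finset.sum_insert hm]
      have h1 := ih fun m' hm' => hs m' (mem_insert_of_mem hm')
      have h2 : O.valuation (io K (algebraMap K (PS K) (g.coeff m) * ∏ i ∈ m.support, D.x i ^ m i)) ^ r
          ≤ O.valuation (io K PowerSeries.X) ^ N := by
        rw [map_mul, map_mul, mul_pow, map_prod, map_prod, ← Finset.prod_pow]
        have h3 : ∏ i ∈ m.support, O.valuation (io K (D.x i ^ m i)) ^ r ≤
            ∏ i ∈ m.support, O.valuation (io K PowerSeries.X) ^ m i := by
          apply Finset.prod_le_prod'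
          intro i _
          rw [map_pow, map_pow, ← pow_mul, mul_comm, pow_mul]
          exact pow_le_pow_left₀ zero_le (D.val_x hO ht i) _
        rw [Finset.prod_pow_eq_pow_sum] at h3
        have h4 : ∑ i ∈ m.support, m i ≤ N :=
          (MvPolynomial.le_totalDegree (hs m (mem_insert_self _ _))).trans hg
        have h5 : O.valuation (io K (algebraMap K (PS K) (g.coeff m))) ^ r ≤ 1 :=
          pow_le_one₀ zero_le (io_C_le hO _)
        exact (mul_le_mul' h5 h3).trans (by rw [one_mul]; exact pow_le_pow_right₀ ht.le h4)
      rcases le_total (O.valuation (io K (algebraMap K (PS K) (g.coeff m) * ∏ i ∈ m.support, D.x i ^ m i)))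
        (O.valuation (∑ m ∈ s, io K (algebraMap K (PS K) (g.coeff m) * ∏ i ∈ m.support, D.x i ^ m i))) with h | h
      · exact (pow_le_pow_left₀ zero_le ((O.valuation.map_add _ _).trans (max_le h le_rfl)) _).trans h1
      · exact (pow_le_pow_left₀ zero_le ((O.valuation.map_add _ _).trans (max_le le_rfl h)) _).trans h2
  exact key _ fun m hm => hm

theorem val_poly {O : ValuationSubring (EE K)} (hO : ∀ c : K, io K (PowerSeries.C c) ∈ O)
    (ht : 1 < O.valuation (io K PowerSeries.X)) (p : K[X]) (hp : p ≠ 0) :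
    O.valuation (io K PowerSeries.X) ^ p.natDegree ≤ O.valuation (io K (p : PS K)) := by
  have hc : ∀ c : K, c ≠ 0 → O.valuation (io K (PowerSeries.C c)) = 1 := by
    intro c hc
    apply le_antisymm (io_C_le hO c)
    have h1 := io_C_le hO c⁻¹
    have h2 : O.valuation (io K (PowerSeries.C c)) * O.valuation (io K (PowerSeries.C c⁻¹)) = 1 := by
      rw [← map_mul, ← map_mul, ← map_mul, mul_inv_cancel₀ hc]; simp
    calc (1 : O.ValueGroup) = _ := h2.symm
      _ ≤ O.valuation (io K (PowerSeries.C c)) * 1 := mul_le_mul_right h1 _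
      _ = _ := mul_one _
  have h1 : (p : PS K) = PowerSeries.C p.leadingCoeff * PowerSeries.X ^ p.natDegree +
      ((p.eraseLead : K[X]) : PS K) := by
    conv_lhs => rw [← p.eraseLead_add_C_mul_X_pow]
    rw [Polynomial.coe_add, Polynomial.coe_mul, Polynomial.coe_C, Polynomial.coe_pow, Polynomial.coe_X, add_comm]
  have h2 : O.valuation (io K ((p.eraseLead : K[X]) : PS K)) <
      O.valuation (io K PowerSeries.X) ^ p.natDegree := by
    rw [p.eraseLead.as_sum_support, ← Polynomial.coeToPowerSeries.ringHom_apply, map_sum, map_sum]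
    apply Valuation.map_sum_lt _ (pow_ne_zero _ (by rintro h0; rw [h0] at ht; exact absurd ht (by simp)))
    intro i hi
    have h3 : i < p.natDegree := by
      have := Polynomial.lt_natDegree_of_mem_eraseLead_support hi
      exact this
    rw [Polynomial.coeToPowerSeries.ringHom_apply, ← Polynomial.C_mul_X_pow_eq_monomial,
      Polynomial.coe_mul, Polynomial.coe_C, Polynomial.coe_pow, Polynomial.coe_X, map_mul, map_mul,
      map_pow, map_pow]
    calc _ ≤ 1 * O.valuation (io K PowerSeries.X) ^ i := mul_le_mul_left (io_C_le hO _) _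
      _ < _ := by rw [one_mul]; exact pow_lt_pow_right₀ ht h3
  have h4 : O.valuation (io K (PowerSeries.C p.leadingCoeff * PowerSeries.X ^ p.natDegree)) =
      O.valuation (io K PowerSeries.X) ^ p.natDegree := by
    rw [map_mul, map_mul, hc _ (leadingCoeff_ne_zero.2 hp), one_mul, map_pow, map_pow]
  rw [h1, map_add, Valuation.map_add_eq_of_lt_left _ (by rw [h4]; exact h2), h4]

/-- degree bound -/
theorem Fil_deg (p : K[X]) {N : ℕ} (h : (p : PS K) ∈ D.Fil N) : r * p.natDegree ≤ N := by
  rcases eq_or_ne p 0 with rfl | hp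
  · simp
  obtain ⟨O, hO, ht⟩ := exists_val_inf (K := K)
  have h1 := D.val_Fil hO ht h
  have h2 := pow_le_pow_left₀ zero_le (val_poly hO ht p hp) r
  have h3 := h2.trans h1
  rw [← pow_mul] at h3
  rw [mul_comm]
  exact (pow_le_pow_iff_right₀ ht).1 h3

theorem aeval_rename' (σ τ : Fin (r + 1) → Fin (r + 1)) (g : MvPolynomial (Fin (r + 1)) K) :
    MvPolynomial.aeval (D.x ∘ τ) (MvPolynomial.rename σ g) = MvPolynomial.aeval (D.x ∘ (τ ∘ σ)) g := by
  rw [MvPolynomial.aeval_rename]; rfl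

theorem gal_ne_zero (G : GalD D (EE K)) (g : MvPolynomial (Fin (r + 1)) K)
    (hg : MvPolynomial.aeval D.x g ≠ 0) (σ : Equiv.Perm (Fin (r + 1))) (hσ : σ ∈ G.G) :
    MvPolynomial.aeval (D.x ∘ σ) g ≠ 0 := by
  intro h
  apply hg
  have h1 : MvPolynomial.aeval D.x (MvPolynomial.rename σ g) = 0 := by
    have := D.aeval_rename' σ id g
    rw [Function.comp_id, Function.id_comp] at this
    rw [this, h]
  have h2 := G.hA σ⁻¹ (inv_mem hσ) _ h1
  rw [aeval_rename'] at h2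
  have : ((σ⁻¹ : Equiv.Perm _) : Fin (r + 1) → Fin (r + 1)) ∘ σ = id := by funext i; simp
  rwa [this, Function.comp_id] at h2

/-- norm lemma -/
theorem norm_lemma (G : GalD D (EE K)) (g : MvPolynomial (Fin (r + 1)) K)
    (hg : MvPolynomial.aeval D.x g ≠ 0) (e : K[X]) (he : e.eval 0 ≠ 0)
    (hint : IsIntegral K[X] (io K (MvPolynomial.aeval D.x g) / io K (e : PS K))) (m m' N : ℕ)
    (hN : g.totalDegree ≤ N)
    (hm : (PowerSeries.X : PS K) ^ m ∣ MvPolynomial.aeval D.x g)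
    (hm' : ∀ σ ∈ G.G, σ ≠ 1 → (PowerSeries.X : PS K) ^ m' ∣ MvPolynomial.aeval (D.x ∘ σ) g) :
    r * (m + (Nat.card G.G - 1) * m' + Nat.card G.G * e.natDegree) ≤ Nat.card G.G * N := by
  classical
  have he0 : e ≠ 0 := by rintro rfl; simp at he
  let P : MvPolynomial (Fin (r + 1)) K := ∏ σ : G.G, MvPolynomial.rename σ.1 g
  have hP : ∀ τ : Fin (r + 1) → Fin (r + 1), MvPolynomial.aeval (D.x ∘ τ) P =
      ∏ σ : G.G, MvPolynomial.aeval (D.x ∘ (τ ∘ σ.1)) g := by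
    intro τ
    rw [map_prod]
    exact Finset.prod_congr rfl fun σ _ => D.aeval_rename' _ _ _
  have hP1 : MvPolynomial.aeval D.x P = ∏ σ : G.G, MvPolynomial.aeval (D.x ∘ σ.1) g := hP id
  have hinv : ∀ τ ∈ G.G, MvPolynomial.aeval (D.x ∘ τ) P = MvPolynomial.aeval D.x P := by
    intro τ hτ
    rw [hP, hP1]
    exact Fintype.prod_equiv (Equiv.mulLeft (⟨τ, hτ⟩ : G.G)) _ _ fun σ => rfl
  obtain ⟨p, hp⟩ := D.exists_poly G P hinv
  have hcard : Fintype.card G.G = Nat.card G.G := by rw [Nat.card_eq_fintype_card]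
  have hdeg : r * p.natDegree ≤ Nat.card G.G * N := by
    apply D.Fil_deg
    rw [D.mem_Fil]
    refine ⟨P, ?_, hp⟩
    refine (MvPolynomial.totalDegree_finsetProd _ _).trans ?_
    refine (Finset.sum_le_card_nsmul _ _ N fun σ _ => (MvPolynomial.totalDegree_rename_le _ _).trans hN).trans ?_
    rw [Finset.card_univ, hcard, smul_eq_mul]
  have hp0 : p ≠ 0 := by
    rintro rfl
    rw [hP1, Polynomial.coe_zero, Finset.prod_eq_zero_iff] at hp
    obtain ⟨σ, -, hσ⟩ := hp
    exact D.gal_ne_zero G g hg σ.1 σ.2 hσ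
  have hX : (PowerSeries.X : PS K) ^ (m + (Nat.card G.G - 1) * m') ∣ (p : PS K) := by
    rw [← hp, hP1, ← Finset.mul_prod_erase _ _ (mem_univ (1 : G.G)), pow_add]
    apply mul_dvd_mul
    · simpa using hm
    · rw [mul_comm, pow_mul, ← hcard, ← Finset.card_univ, ← Finset.card_erase_of_mem (mem_univ (1 : G.G)),
        ← Finset.prod_const]
      apply Finset.prod_dvd_prod_of_dvd
      intro σ hσ
      exact hm' σ.1 σ.2 fun h => (Finset.mem_erase.1 hσ).1 (Subtype.ext h)
  have hX' : (X : K[X]) ^ (m + (Nat.card G.G - 1) * m') ∣ p := by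
    rw [Polynomial.X_pow_dvd_iff]
    intro i hi
    rw [PowerSeries.X_pow_dvd_iff] at hX
    rw [← Polynomial.coeff_coe]; exact hX i hi
  have hE : e ^ Nat.card G.G ∣ p := by
    apply dvd_of_integral _ _ (pow_ne_zero _ he0)
    rw [← hp, hP1, Polynomial.coe_pow, map_pow, map_prod, ← hcard, ← Finset.card_univ, ← Finset.prod_const,
      ← Finset.prod_div_distrib]
    apply IsIntegral.prod
    intro σ _
    exact G.hA' σ.1 σ.2 g e hint
  have hcop : IsCoprime ((X : K[X]) ^ (m + (Nat.card G.G - 1) * m')) (e ^ Nat.card G.G) := by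
    apply IsCoprime.pow
    have : (X : K[X]) = X - C 0 := by simp
    rw [this]
    rw [(Polynomial.irreducible_X_sub_C (0 : K)).coprime_iff_not_dvd]
    rw [Polynomial.dvd_iff_isRoot]; exact he
  have h1 := Polynomial.natDegree_le_of_dvd (hcop.mul_dvd hX' hE) hp0
  rw [Polynomial.natDegree_mul (pow_ne_zero _ X_ne_zero) (pow_ne_zero _ he0), Polynomial.natDegree_X_pow,
    Polynomial.natDegree_pow] at h1
  exact (Nat.mul_le_mul_left r h1).trans hdeg

theorem integral_crit (w : EE K) (h : ∀ O : ValuationSubring (EE K), (∀ c : K, io K (PowerSeries.C c) ∈ O) →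
    io K PowerSeries.X ∈ O → w ∈ O) : IsIntegral K[X] w := by
  have h1 := iInf_valuationSubring_superset (s := Set.range (algebraMap K[X] (EE K)))
  have h2 : w ∈ (⨅ V : {V : ValuationSubring (EE K) // Set.range (algebraMap K[X] (EE K)) ⊆ V.toSubring}, V.1.toSubring) := by
    rw [Subring.mem_iInf]
    rintro ⟨V, hV⟩
    apply h V
    · intro c
      exact hV ⟨C c, by rw [comp_E, Polynomial.coe_C]⟩
    · exact hV ⟨X, by rw [comp_E, Polynomial.coe_X]⟩
  rw [h1] at h2
  obtain ⟨p, hp, hp2⟩ := h2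
  have h3 : Subring.closure (Set.range (algebraMap K[X] (EE K))) ≤ (algebraMap K[X] (EE K)).range := by
    rw [Subring.closure_le]; exact subset_rfl
  have h4 : w ∈ integralClosure K[X] (EE K) := by
    have h5 : IsIntegral (algebraMap K[X] (EE K)).range w := by
      refine ⟨p.map (Subring.inclusion h3), hp.map _, ?_⟩
      rw [eval₂_map]; exact hp2
    obtain ⟨f, hf, hf2⟩ := h5
    obtain ⟨f', hf', -, hm⟩ := lifts_and_natDegree_eq_and_monic (f := (algebraMap K[X] (EE K)).rangeRestrict) (p := f)
      (Polynomial.mem_lifts_of_surjective (RingHom.rangeRestrict_surjective _) _) hf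
    refine ⟨f', hm, ?_⟩
    rw [← hf', eval₂_map] at hf2
    exact hf2
  exact h4

end Dat
end WG


namespace WG
local notation "PS" => PowerSeries

theorem coef_dvd {R : Type*} [CommRing R] [IsDomain R] (c : R) (hc : c ≠ 0) (M k : ℕ) (w F : PS R)
    (hF : F = (PowerSeries.C c + PowerSeries.X) ^ M * w) (h0 : ∀ i < k, PowerSeries.coeff i F = 0) :
    c ^ M ∣ PowerSeries.coeff k F := by
  have h1 : (PowerSeries.X : PS R) ^ k ∣ F := PowerSeries.X_pow_dvd_iff.2 h0
  have h2 : ¬ (PowerSeries.X : PS R) ∣ (PowerSeries.C c + PowerSeries.X) ^ M := by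
    rw [PowerSeries.X_dvd_iff]; simpa using fun h => absurd h hc
  rw [hF] at h1
  obtain ⟨w', rfl⟩ := PowerSeries.X_prime.pow_dvd_of_dvd_mul_left k h2 h1
  refine ⟨PowerSeries.constantCoeff w', ?_⟩
  have : F = PowerSeries.X ^ k * ((PowerSeries.C c + PowerSeries.X) ^ M * w') := by rw [hF]; ring
  rw [this]
  have h3 := PowerSeries.coeff_X_pow_mul ((PowerSeries.C c + PowerSeries.X) ^ M * w') k 0
  rw [zero_add] at h3
  rw [h3]
  simp

/-- exchanging the two variables -/
noncomputable def sw {K : Type*} [CommRing K] : PS (PS K) →+* PS (PS K) where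
  toFun F := PowerSeries.mk fun m => PowerSeries.mk fun k => PowerSeries.coeff m (PowerSeries.coeff k F)
  map_one' := by
    ext m k
    simp only [PowerSeries.coeff_mk, PowerSeries.coeff_one]
    split_ifs <;> simp_all [PowerSeries.coeff_one]
  map_zero' := by ext m k; simp
  map_add' F G := by ext m k; simp
  map_mul' F G := by
    ext m k
    simp only [PowerSeries.coeff_mk, PowerSeries.coeff_mul, map_sum]
    rw [Finset.sum_comm]

theorem sw_coeff {K : Type*} [CommRing K] (F : PS (PS K)) (m k : ℕ) :
    PowerSeries.coeff k (PowerSeries.coeff m (sw F)) = PowerSeries.coeff m (PowerSeries.coeff k F) := by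
  simp [sw]

theorem sw_inj {K : Type*} [CommRing K] (F : PS (PS K)) (h : sw F = 0) : F = 0 := by
  ext k m
  rw [← sw_coeff, h]; simp

theorem sw_C {K : Type*} [CommRing K] (b : PS K) : sw (PowerSeries.C b) = PowerSeries.map PowerSeries.C b := by
  ext m k
  rw [sw_coeff, PowerSeries.coeff_map, PowerSeries.coeff_C, PowerSeries.coeff_C]
  split_ifs <;> simp

theorem sw_map {K : Type*} [CommRing K] (b : PS K) : sw (PowerSeries.map PowerSeries.C b) = PowerSeries.C b := by
  ext m k
  rw [sw_coeff, PowerSeries.coeff_map, PowerSeries.coeff_C, PowerSeries.coeff_C]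
  split_ifs <;> simp

namespace Dat
variable {K : Type*} [Field K] {r : ℕ} (D : Dat K r)

/-- polynomials in two sets of variables -/
abbrev PP (K : Type*) [Field K] (r : ℕ) := MvPolynomial (Fin (r + 1) ⊕ Fin (r + 1)) K

/-- expansion in the second set of variables -/
noncomputable def evU : PP K r →ₐ[K] PS (MvPolynomial (Fin (r + 1)) K) :=
  MvPolynomial.aeval (Sum.elim (fun i => PowerSeries.C (MvPolynomial.X i))
    (fun i => PowerSeries.map MvPolynomial.C (D.x i)))

/-- evaluation -/
noncomputable def ev : PP K r →ₐ[K] PS (PS K) :=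
  MvPolynomial.aeval (Sum.elim (fun i => PowerSeries.C (D.x i)) D.y)

/-- swap of the variables -/
noncomputable def swp : PP K r →ₐ[K] PP K r := MvPolynomial.rename Sum.swap

/-- permuting the first set of variables -/
noncomputable def pl (σ : Fin (r + 1) → Fin (r + 1)) : PP K r →ₐ[K] PP K r :=
  MvPolynomial.rename (Sum.map σ id)

/-- permuting the second set of variables -/
noncomputable def pr (σ : Fin (r + 1) → Fin (r + 1)) : PP K r →ₐ[K] PP K r :=
  MvPolynomial.rename (Sum.map id σ)

theorem swp_pr (σ : Fin (r + 1) → Fin (r + 1)) (h : PP K r) : swp (pr σ h) = pl σ (swp h) := by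
  simp only [swp, pr, pl, MvPolynomial.rename_rename]
  congr 2
  funext i
  cases i <;> rfl

theorem pr_pr (σ τ : Fin (r + 1) → Fin (r + 1)) (h : PP K r) : pr σ (pr τ h) = pr (σ ∘ τ) h := by
  simp only [pr, MvPolynomial.rename_rename]
  congr 2
  funext i
  cases i <;> rfl

theorem ev_inl (i) : D.ev (MvPolynomial.X (Sum.inl i)) = PowerSeries.C (D.x i) := by
  simp [ev]
theorem ev_inr (i) : D.ev (MvPolynomial.X (Sum.inr i)) = D.y i := by
  simp [ev]

theorem C_alg (c : K) : algebraMap K (PS (PS K)) c = PowerSeries.C (PowerSeries.C c) := by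
  rw [PowerSeries.algebraMap_apply]; rfl

theorem ev_pl (σ : Fin (r + 1) → Fin (r + 1)) (h : PP K r) :
    D.ev (pl σ h) = PowerSeries.map (MvPolynomial.aeval (D.x ∘ σ) : MvPolynomial (Fin (r + 1)) K →ₐ[K] PS K).toRingHom
      (D.evU h) := by
  induction h using MvPolynomial.induction_on with
  | C c =>
    have h1 : pl σ (MvPolynomial.C c : PP K r) = MvPolynomial.C c := by simp [pl]
    have h2 : D.evU (MvPolynomial.C c) = PowerSeries.C (MvPolynomial.C c) := by
      rw [evU, MvPolynomial.aeval_C, PowerSeries.algebraMap_apply]; rfl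
    have h3 : D.ev (MvPolynomial.C c) = PowerSeries.C (PowerSeries.C c) := by
      rw [ev, MvPolynomial.aeval_C, C_alg]
    rw [h1, h2, h3, PowerSeries.map_C]
    simp

  | add p q hp hq => simp only [map_add, hp, hq]
  | mul_X p i hp =>
    rw [map_mul, map_mul, hp, map_mul, map_mul]
    congr 1
    cases i with
    | inl i => simp [pl, ev, evU]
    | inr i =>
      simp only [pl, ev, evU, MvPolynomial.rename_X, Sum.map_inr, MvPolynomial.aeval_X, Sum.elim_inr, y, id]
      ext1 k
      simp

theorem ev_eq (h : PP K r) (k : ℕ) :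
    PowerSeries.coeff k (D.ev h) = MvPolynomial.aeval D.x (PowerSeries.coeff k (D.evU h)) := by
  have h1 := D.ev_pl id h
  have h2 : pl id h = h := by simp [pl]
  rw [h2] at h1
  rw [h1, PowerSeries.coeff_map]; rfl

theorem ev_pl_coeff (σ : Fin (r + 1) → Fin (r + 1)) (h : PP K r) (k : ℕ) :
    PowerSeries.coeff k (D.ev (pl σ h)) = MvPolynomial.aeval (D.x ∘ σ) (PowerSeries.coeff k (D.evU h)) := by
  rw [ev_pl, PowerSeries.coeff_map]; rfl

theorem ev_swp (h : PP K r) : D.ev (swp h) = sw (D.ev h) := by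
  have : (D.ev.toRingHom.comp swp.toRingHom : PP K r →+* PS (PS K)) = sw.comp D.ev.toRingHom := by
    apply MvPolynomial.ringHom_ext
    · intro c
      have h3 : D.ev (MvPolynomial.C c) = PowerSeries.C (PowerSeries.C c) := by
        rw [ev, MvPolynomial.aeval_C, C_alg]
      have h1 : swp (MvPolynomial.C c : PP K r) = MvPolynomial.C c := by simp [swp]
      change D.ev (swp (MvPolynomial.C c)) = sw (D.ev (MvPolynomial.C c))
      rw [h1, h3, sw_C]; simp
    · intro i
      change D.ev (swp (MvPolynomial.X i)) = sw (D.ev (MvPolynomial.X i))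
      cases i with
      | inl i => simp [swp, ev, sw_C, y]
      | inr i => simp [swp, ev, sw_map, y]
  exact congrArg (fun f => f h) this

theorem ev_zero_pl (G : GalD D (EE K)) (σ : Equiv.Perm (Fin (r + 1))) (hσ : σ ∈ G.G) (h : PP K r) (k : ℕ) :
    PowerSeries.coeff k (D.ev (pl σ h)) = 0 ↔ PowerSeries.coeff k (D.ev h) = 0 := by
  rw [ev_pl_coeff, ev_eq]
  constructor
  · intro h1
    by_contra h2
    exact D.gal_ne_zero G _ h2 σ hσ h1
  · exact G.hA σ hσ _

theorem ev_zero_pr (G : GalD D (EE K)) (σ : Equiv.Perm (Fin (r + 1))) (hσ : σ ∈ G.G) (h : PP K r)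
    (h0 : D.ev (pr σ h) = 0) : D.ev h = 0 := by
  apply sw_inj
  rw [← ev_swp]
  ext1 k
  rw [map_zero, ← D.ev_zero_pl G σ hσ, ← swp_pr, ev_swp, h0]; simp

theorem evU_pl (σ : Fin (r + 1) → Fin (r + 1)) (h : PP K r) (k : ℕ) :
    PowerSeries.coeff k (D.evU (pl σ h)) = MvPolynomial.rename σ (PowerSeries.coeff k (D.evU h)) := by
  have : (D.evU.toRingHom.comp (pl σ).toRingHom : PP K r →+* _) =
      (PowerSeries.map (MvPolynomial.rename σ : MvPolynomial (Fin (r + 1)) K →ₐ[K] _).toRingHom).comp D.evU.toRingHom := by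
    apply MvPolynomial.ringHom_ext
    · intro c
      have h3 : D.evU (MvPolynomial.C c) = PowerSeries.C (MvPolynomial.C c) := by
        rw [evU, MvPolynomial.aeval_C, PowerSeries.algebraMap_apply]; rfl
      have h1 : pl σ (MvPolynomial.C c : PP K r) = MvPolynomial.C c := by simp [pl]
      simp only [RingHom.comp_apply, AlgHom.toRingHom_eq_coe, RingHom.coe_coe]
      rw [h1, h3]; simp
    · intro i
      simp only [RingHom.comp_apply, AlgHom.toRingHom_eq_coe, RingHom.coe_coe]
      cases i with
      | inl i => simp [pl, evU]
      | inr i =>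
        simp only [pl, evU, MvPolynomial.rename_X, Sum.map_inr, MvPolynomial.aeval_X, Sum.elim_inr, y, id]
        ext1 k
        simp
  have h2 := congrArg (fun f => PowerSeries.coeff k (f h)) this
  simpa using h2

end Dat
end WG


set_option linter.unusedSectionVars false
namespace WG
local notation "PS" => PowerSeries
namespace Dat
variable {K : Type*} [Field K] [Fintype K] {r : ℕ} (D : Dat K r)

theorem const_Xq : PowerSeries.constantCoeff ((PowerSeries.X : PS K) ^ Fintype.card K) = 0 := by
  rw [map_pow, PowerSeries.constantCoeff_X, zero_pow Fintype.card_ne_zero]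

/-- evaluation near the graph of Frobenius -/
noncomputable def psi : PP K r →+* PS (PS K) :=
  (T ((PowerSeries.X : PS K) ^ Fintype.card K) const_Xq).comp D.ev.toRingHom

/-- Frobenius -/
noncomputable def frob (K : Type*) [Field K] [Fintype K] : PS K →+* PS K :=
  (FiniteField.frobeniusAlgHom K (PS K)).toRingHom

theorem frob_apply (w : PS K) : frob K w = w ^ Fintype.card K := rfl

theorem frob_C (c : K) : frob K (PowerSeries.C c) = PowerSeries.C c := by
  rw [frob_apply, ← map_pow, FiniteField.pow_card]

theorem z_eq (i : Fin (r + 1)) : ∏ j, (D.z i - PowerSeries.C (PowerSeries.C (D.s j))) =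
    (PowerSeries.C PowerSeries.X + PowerSeries.X) * (D.z i - PowerSeries.C (PowerSeries.C D.a)) := by
  have h := congrArg (T (PowerSeries.X : PS K) PowerSeries.constantCoeff_X) (D.y_eq i)
  simp only [map_prod, map_sub, map_mul, T_X, T_C] at h
  exact h

/-- the shifted root -/
theorem T_y (i : Fin (r + 1)) : T ((PowerSeries.X : PS K) ^ Fintype.card K) const_Xq (D.y i) =
    PowerSeries.map (frob K) (D.z i) := by
  set w := PowerSeries.map (frob K) (D.z i) with hw
  set τ := T ((PowerSeries.X : PS K) ^ Fintype.card K) const_Xq with hτ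
  have h1 : ∏ j, (w - PowerSeries.C (PowerSeries.C (D.s j))) =
      (PowerSeries.C (PowerSeries.X ^ Fintype.card K) + PowerSeries.X) * (w - PowerSeries.C (PowerSeries.C D.a)) := by
    have h := congrArg (PowerSeries.map (frob K)) (D.z_eq i)
    simp only [map_prod, map_sub, map_mul, map_add, PowerSeries.map_C, PowerSeries.map_X, frob_C] at h
    rw [frob_apply] at h
    exact h
  have h2 := D.x_prod (τ.comp (PowerSeries.map PowerSeries.C)) w
  have h3 : τ (PowerSeries.map PowerSeries.C (PowerSeries.X : PS K)) =
    PowerSeries.C (PowerSeries.X ^ Fintype.card K) + PowerSeries.X := by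
    rw [PowerSeries.map_X, hτ, T_X]
  have h4 : ∀ c : K, τ (PowerSeries.map PowerSeries.C (PowerSeries.C c)) = PowerSeries.C (PowerSeries.C c) := by
    intro c
    rw [PowerSeries.map_C, hτ, T_C]
  simp only [RingHom.comp_apply, h3, h4] at h2
  rw [h1, sub_self, Finset.prod_eq_zero_iff] at h2
  obtain ⟨j, -, hj⟩ := h2
  have hj' : w = τ (D.y j) := sub_eq_zero.1 hj
  have h5 : PowerSeries.constantCoeff (PowerSeries.constantCoeff w) = D.s i := by
    rw [hw, ← PowerSeries.coeff_zero_eq_constantCoeff_apply, ← PowerSeries.coeff_zero_eq_constantCoeff_apply,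
      PowerSeries.coeff_map, z_zero, frob_apply, PowerSeries.coeff_zero_eq_constantCoeff_apply, map_pow, D.hx0,
      FiniteField.pow_card]
  have h6 : PowerSeries.constantCoeff (PowerSeries.constantCoeff (τ (D.y j))) = D.s j := by
    rw [hτ, T_const, y, ← PowerSeries.coeff_zero_eq_constantCoeff_apply (φ := PowerSeries.map _ _), PowerSeries.coeff_map,
      PowerSeries.constantCoeff_C, PowerSeries.coeff_zero_eq_constantCoeff_apply, D.hx0]
  rw [← hj', h5] at h6
  rw [hj', D.hs h6]

theorem psi_inl (i) : D.psi (MvPolynomial.X (Sum.inl i)) = PowerSeries.C (D.x i) := by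
  rw [psi, RingHom.comp_apply]
  change T _ const_Xq (D.ev _) = _
  rw [ev_inl, T_C]

theorem psi_inr (i) : D.psi (MvPolynomial.X (Sum.inr i)) = PowerSeries.map (frob K) (D.z i) := by
  rw [psi, RingHom.comp_apply]
  change T _ const_Xq (D.ev _) = _
  rw [ev_inr, T_y]

theorem ev_C (c : K) : D.ev (MvPolynomial.C c) = PowerSeries.C (PowerSeries.C c) := by
  rw [ev, MvPolynomial.aeval_C, C_alg]

theorem evU_C (c : K) : D.evU (MvPolynomial.C c) = PowerSeries.C (MvPolynomial.C c) := by
  rw [evU, MvPolynomial.aeval_C, PowerSeries.algebraMap_apply]; rfl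

theorem psi_C (c : K) : D.psi (MvPolynomial.C c) = PowerSeries.C (PowerSeries.C c) := by
  rw [psi, RingHom.comp_apply]
  change T _ const_Xq (D.ev _) = _
  rw [ev_C, T_C]

/-- bidegree bounds -/
structure BD (A B : ℕ) (h : PP K r) : Prop where
  a : ∀ k, PowerSeries.coeff k (D.evU h) ∈ MvPolynomial.restrictTotalDegree (Fin (r + 1)) K A
  b : ∀ k, PowerSeries.coeff k (D.evU (swp h)) ∈ MvPolynomial.restrictTotalDegree (Fin (r + 1)) K B
  c : ∀ N, D.Cl (Fintype.card K * r ^ 2) N (A + Fintype.card K * B)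
    (PowerSeries.rescale (D.disc ^ Fintype.card K) (D.psi h))

theorem rtd_mul {A B : ℕ} {f g : MvPolynomial (Fin (r + 1)) K}
    (hf : f ∈ MvPolynomial.restrictTotalDegree (Fin (r + 1)) K A)
    (hg : g ∈ MvPolynomial.restrictTotalDegree (Fin (r + 1)) K B) :
    f * g ∈ MvPolynomial.restrictTotalDegree (Fin (r + 1)) K (A + B) := by
  rw [MvPolynomial.mem_restrictTotalDegree] at *
  exact (MvPolynomial.totalDegree_mul _ _).trans (by omega)

theorem rtd_coeff_mul {A B : ℕ} {f g : PS (MvPolynomial (Fin (r + 1)) K)}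
    (hf : ∀ k, PowerSeries.coeff k f ∈ MvPolynomial.restrictTotalDegree (Fin (r + 1)) K A)
    (hg : ∀ k, PowerSeries.coeff k g ∈ MvPolynomial.restrictTotalDegree (Fin (r + 1)) K B) (k : ℕ) :
    PowerSeries.coeff k (f * g) ∈ MvPolynomial.restrictTotalDegree (Fin (r + 1)) K (A + B) := by
  rw [PowerSeries.coeff_mul]
  exact sum_mem fun p _ => rtd_mul (hf _) (hg _)

variable {D}

theorem BD.mul {A B A' B' : ℕ} {f g : PP K r} (hf : D.BD A B f) (hg : D.BD A' B' g) :
    D.BD (A + A') (B + B') (f * g) where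
  a := by rw [map_mul]; exact rtd_coeff_mul hf.a hg.a
  b := by rw [map_mul, map_mul]; exact rtd_coeff_mul hf.b hg.b
  c := by
    intro N
    rw [map_mul, map_mul]
    exact ((hf.c N).mul (hg.c N)).mono le_rfl (by rw [mul_add]; omega)

theorem BD.add {A B : ℕ} {f g : PP K r} (hf : D.BD A B f) (hg : D.BD A B g) : D.BD A B (f + g) where
  a k := by rw [map_add, map_add]; exact add_mem (hf.a k) (hg.a k)
  b k := by rw [map_add, map_add, map_add]; exact add_mem (hf.b k) (hg.b k)
  c N := by rw [map_add, map_add]; exact (hf.c N).add (hg.c N)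

theorem BD.sub {A B : ℕ} {f g : PP K r} (hf : D.BD A B f) (hg : D.BD A B g) : D.BD A B (f - g) where
  a k := by rw [map_sub, map_sub]; exact sub_mem (hf.a k) (hg.a k)
  b k := by rw [map_sub, map_sub, map_sub]; exact sub_mem (hf.b k) (hg.b k)
  c N := by rw [map_sub, map_sub]; exact (hf.c N).sub (hg.c N)

theorem BD.C (c : K) (A B : ℕ) : D.BD A B (MvPolynomial.C c) where
  a k := by
    rw [evU_C, PowerSeries.coeff_C, MvPolynomial.mem_restrictTotalDegree]
    split_ifs <;> simp
  b k := by
    have : swp (MvPolynomial.C c : PP K r) = MvPolynomial.C c := by simp [swp]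
    rw [this, evU_C, PowerSeries.coeff_C, MvPolynomial.mem_restrictTotalDegree]
    split_ifs <;> simp
  c N := by
    have : PowerSeries.rescale (D.disc ^ Fintype.card K) (PowerSeries.C (PowerSeries.C c)) =
      PowerSeries.C (PowerSeries.C c) := by
      ext1 k
      rw [PowerSeries.coeff_rescale, PowerSeries.coeff_C]
      split_ifs with h
      · simp [h]
      · simp
    rw [psi_C, this]
    exact Cl.C (D.Fil_C c _)

theorem BD.one : D.BD 0 0 (1 : PP K r) := by
  simpa using (BD.C (1 : K) 0 0 : D.BD 0 0 _)

theorem BD.zero (A B : ℕ) : D.BD A B (0 : PP K r) := by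
  simpa using (BD.C (0 : K) A B : D.BD A B _)

theorem BD.mono {A B A' B' : ℕ} {f : PP K r} (hf : D.BD A B f) (hA : A ≤ A') (hB : B ≤ B') : D.BD A' B' f where
  a k := by
    have := hf.a k
    rw [MvPolynomial.mem_restrictTotalDegree] at *
    omega
  b k := by
    have := hf.b k
    rw [MvPolynomial.mem_restrictTotalDegree] at *
    omega
  c N := (hf.c N).mono le_rfl (by have := Nat.mul_le_mul_left (Fintype.card K) hB; omega)

theorem BD.pow {A B : ℕ} {f : PP K r} (hf : D.BD A B f) (k : ℕ) : D.BD (A * k) (B * k) (f ^ k) := by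
  induction k with
  | zero => simpa using BD.one
  | succ k ih => rw [pow_succ, mul_add, mul_one, mul_add, mul_one]; exact ih.mul hf

theorem BD.sum {ι : Type*} (s : Finset ι) {A B : ℕ} {f : ι → PP K r} (h : ∀ i ∈ s, D.BD A B (f i)) :
    D.BD A B (∑ i ∈ s, f i) := by
  classical
  induction s using Finset.induction_on with
  | empty => simpa using BD.zero A B
  | insert i s hi ih =>
    rw [Finset.sum_insert hi]
    exact (h i (mem_insert_self _ _)).add (ih fun j hj => h j (mem_insert_of_mem hj))

theorem BD.prod {ι : Type*} (s : Finset ι) {A B : ι → ℕ} {f : ι → PP K r} (h : ∀ i ∈ s, D.BD (A i) (B i) (f i)) :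
    D.BD (∑ i ∈ s, A i) (∑ i ∈ s, B i) (∏ i ∈ s, f i) := by
  classical
  induction s using Finset.induction_on with
  | empty => simpa using BD.one
  | insert i s hi ih =>
    rw [Finset.sum_insert hi, Finset.sum_insert hi, Finset.prod_insert hi]
    exact (h i (mem_insert_self _ _)).mul (ih fun j hj => h j (mem_insert_of_mem hj))

theorem BD.inl (i) : D.BD 1 0 (MvPolynomial.X (Sum.inl i)) where
  a k := by
    have : D.evU (MvPolynomial.X (Sum.inl i)) = PowerSeries.C (MvPolynomial.X i) := by simp [evU]
    rw [this, PowerSeries.coeff_C, MvPolynomial.mem_restrictTotalDegree]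
    split_ifs <;> simp
  b k := by
    have : D.evU (swp (MvPolynomial.X (Sum.inl i))) = PowerSeries.map MvPolynomial.C (D.x i) := by simp [evU, swp]
    rw [this, PowerSeries.coeff_map, MvPolynomial.mem_restrictTotalDegree]
    simp
  c N := by
    have : PowerSeries.rescale (D.disc ^ Fintype.card K) (PowerSeries.C (D.x i)) =
      PowerSeries.C (D.x i) := by
      ext1 k
      rw [PowerSeries.coeff_rescale, PowerSeries.coeff_C]
      split_ifs with h
      · simp [h]
      · simp
    rw [psi_inl, this]
    exact Cl.C (by simpa using D.Fil_x i)

theorem BD.inr (i) : D.BD 0 1 (MvPolynomial.X (Sum.inr i)) where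
  b k := by
    have : D.evU (swp (MvPolynomial.X (Sum.inr i))) = PowerSeries.C (MvPolynomial.X i) := by simp [evU, swp]
    rw [this, PowerSeries.coeff_C, MvPolynomial.mem_restrictTotalDegree]
    split_ifs <;> simp
  a k := by
    have : D.evU (MvPolynomial.X (Sum.inr i)) = PowerSeries.map MvPolynomial.C (D.x i) := by simp [evU]
    rw [this, PowerSeries.coeff_map, MvPolynomial.mem_restrictTotalDegree]
    simp
  c N := by
    intro k _
    rw [psi_inr, PowerSeries.coeff_rescale, PowerSeries.coeff_map, frob_apply, ← pow_mul, mul_comm (Fintype.card K) k,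
      pow_mul, ← mul_pow]
    have := D.Fil_pow (D.z_est i k) (Fintype.card K)
    exact D.Fil_mono (le_of_eq (by ring)) this

theorem BD.rename (f : Fin (r + 1) → Fin (r + 1) ⊕ Fin (r + 1)) (A B N : ℕ)
    (hf : ∀ i, D.BD A B (MvPolynomial.X (f i))) (g : MvPolynomial (Fin (r + 1)) K) (hg : g.totalDegree ≤ N) :
    D.BD (A * N) (B * N) (MvPolynomial.rename f g) := by
  have : MvPolynomial.rename f g = ∑ m ∈ g.support, MvPolynomial.C (g.coeff m) *
      ∏ i ∈ m.support, (MvPolynomial.X (f i) : PP K r) ^ m i := by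
    have : MvPolynomial.rename f g = MvPolynomial.aeval (fun i => (MvPolynomial.X (f i) : PP K r)) g := by
      have h0 : (MvPolynomial.rename f : MvPolynomial (Fin (r + 1)) K →ₐ[K] PP K r) =
          MvPolynomial.aeval (fun i => (MvPolynomial.X (f i) : PP K r)) := by
        apply MvPolynomial.algHom_ext; intro i; simp
      rw [h0]
    rw [this, MvPolynomial.aeval_def, MvPolynomial.eval₂_eq]; rfl
  rw [this]
  apply BD.sum
  intro m hm
  have h1 := (BD.C (g.coeff m) 0 0 : D.BD 0 0 _).mul (BD.prod m.support fun i _ => (hf i).pow (m i))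
  have h4 : ∑ i ∈ m.support, m i ≤ N := (MvPolynomial.le_totalDegree hm).trans hg
  refine h1.mono ?_ ?_
  · rw [zero_add, ← Finset.mul_sum]; exact Nat.mul_le_mul_left _ h4
  · rw [zero_add, ← Finset.mul_sum]; exact Nat.mul_le_mul_left _ h4

variable (D)

/-- a polynomial in the roots representing the parameter -/
noncomputable def th : MvPolynomial (Fin (r + 1)) K := (D.mem_Fil.1 D.Fil_t).choose
theorem th_deg : D.th.totalDegree ≤ r := (D.mem_Fil.1 D.Fil_t).choose_spec.1
theorem th_eq : MvPolynomial.aeval D.x D.th = PowerSeries.X := (D.mem_Fil.1 D.Fil_t).choose_spec.2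

/-- first copy -/
noncomputable def jl : MvPolynomial (Fin (r + 1)) K →ₐ[K] PP K r := MvPolynomial.rename Sum.inl
/-- second copy -/
noncomputable def jr : MvPolynomial (Fin (r + 1)) K →ₐ[K] PP K r := MvPolynomial.rename Sum.inr

theorem BD_jl {g : MvPolynomial (Fin (r + 1)) K} {N : ℕ} (hg : g.totalDegree ≤ N) : D.BD N 0 (jl g) := by
  rw [jl]; simpa using BD.rename (D := D) Sum.inl 1 0 N BD.inl g hg

theorem BD_jr {g : MvPolynomial (Fin (r + 1)) K} {N : ℕ} (hg : g.totalDegree ≤ N) : D.BD 0 N (jr g) := by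
  rw [jr]; simpa using BD.rename (D := D) Sum.inr 0 1 N BD.inr g hg

theorem ev_jl (g : MvPolynomial (Fin (r + 1)) K) : D.ev (jl g) = PowerSeries.C (MvPolynomial.aeval D.x g) := by
  have : (D.ev.toRingHom.comp jl.toRingHom) = (PowerSeries.C).comp (MvPolynomial.aeval D.x).toRingHom := by
    apply MvPolynomial.ringHom_ext
    · intro c
      have : jl (MvPolynomial.C c) = (MvPolynomial.C c : PP K r) := by simp [jl]
      simp only [RingHom.comp_apply, AlgHom.toRingHom_eq_coe, RingHom.coe_coe, this, ev_C, MvPolynomial.aeval_C]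
      rfl
    · intro i
      have : jl (MvPolynomial.X i) = (MvPolynomial.X (Sum.inl i) : PP K r) := by simp [jl]
      simp only [RingHom.comp_apply, AlgHom.toRingHom_eq_coe, RingHom.coe_coe, this, ev_inl, MvPolynomial.aeval_X]
  exact congrArg (fun f => f g) this

theorem ev_jr (g : MvPolynomial (Fin (r + 1)) K) :
    D.ev (jr g) = PowerSeries.map PowerSeries.C (MvPolynomial.aeval D.x g) := by
  have : jr g = swp (jl g) := by
    simp only [jr, swp, jl, MvPolynomial.rename_rename]; rfl
  rw [this, ev_swp, ev_jl, sw_C]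

/-- the difference of the parameters -/
noncomputable def Del : PP K r := jl D.th - jr D.th

theorem ev_Del : D.ev D.Del = PowerSeries.C PowerSeries.X - PowerSeries.X := by
  rw [Del, map_sub, ev_jl, ev_jr, th_eq, PowerSeries.map_X]

theorem BD_Del : D.BD r r D.Del :=
  ((D.BD_jl D.th_deg).mono le_rfl (Nat.zero_le _)).sub ((D.BD_jr D.th_deg).mono (Nat.zero_le _) le_rfl)

/-- index pairs -/
def prs (r : ℕ) : Finset (Fin (r + 1) × Fin (r + 1)) := univ.filter fun p => p.1 < p.2

theorem prs_card (r : ℕ) : 2 * (prs r).card = r * (r + 1) := by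
  have h : (prs r).card = ∑ i : Fin (r + 1), (i : ℕ) := by
    rw [prs, ← Finset.univ_product_univ, Finset.card_filter, Finset.sum_product_right]
    refine Finset.sum_congr rfl fun j _ => ?_
    rw [← Finset.card_filter]
    have : (univ.filter fun x : Fin (r + 1) => x < j) = Finset.Iio j := by ext x; simp
    rw [this, Fin.card_Iio]
  rw [h, Fin.sum_univ_eq_sum_range (fun i => i) (r + 1), mul_comm, Finset.sum_range_id_mul_two]
  simp [mul_comm]

/-- the vanishing polynomial -/
noncomputable def Ph (K : Type*) [Field K] (r : ℕ) : PP K r :=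
  ∏ p ∈ prs r, (MvPolynomial.X (Sum.inr p.1) - MvPolynomial.X (Sum.inl p.2))

theorem BD_Ph : D.BD (prs r).card (prs r).card (Ph K r) := by
  have := BD.prod (D := D) (prs r) (A := fun _ => 1) (B := fun _ => 1)
    (f := fun p => (MvPolynomial.X (Sum.inr p.1) - MvPolynomial.X (Sum.inl p.2))) (fun p _ =>
      ((BD.inr p.1).mono (Nat.zero_le _) le_rfl).sub ((BD.inl p.2).mono le_rfl (Nat.zero_le _)))
  simpa [Ph] using this

/-- vanishing ideal -/
noncomputable def II : Ideal (PP K r) := Ideal.span {Ph K r, D.Del}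

theorem II_dvd {R : Type*} [CommRing R] (χ : PP K r →+* R) (w : R) (h1 : w ∣ χ (Ph K r)) (h2 : w ∣ χ D.Del)
    (M : ℕ) (h : PP K r) (hh : h ∈ D.II ^ M) : w ^ M ∣ χ h := by
  have h3 : D.II.map χ ≤ Ideal.span {w} := by
    rw [II, Ideal.map_span, Ideal.span_le]
    rintro _ ⟨y, hy, rfl⟩
    rw [SetLike.mem_coe, Ideal.mem_span_singleton]
    rcases hy with rfl | hy
    · exact h1
    · rw [Set.mem_singleton_iff] at hy; rw [hy]; exact h2
  have h4 : χ h ∈ (D.II ^ M).map χ := Ideal.mem_map_of_mem χ hh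
  rw [Ideal.map_pow] at h4
  have h5 := Ideal.pow_right_mono h3 M h4
  rw [Ideal.span_singleton_pow, Ideal.mem_span_singleton] at h5
  exact h5

end Dat

/-- a nontrivial permutation moves something up -/
theorem exists_lt_perm {n : ℕ} (π : Equiv.Perm (Fin n)) (h : π ≠ 1) : ∃ i, i < π i := by
  by_contra! h1
  apply h
  have h2 : ∀ m : ℕ, ∀ i : Fin n, (i : ℕ) = m → π i = i := by
    intro m
    induction m using Nat.strong_induction_on with
    | _ m ih =>
      intro i hi
      rcases (h1 i).lt_or_eq with h3 | h3
      · have h4 := ih (π i) (by rw [← hi]; exact h3) (π i) rfl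
        exact π.injective h4
      · exact h3
  ext i : 1
  exact h2 i i rfl

end WG


set_option linter.unusedSectionVars false
namespace WG
local notation "PS" => PowerSeries
namespace Dat
variable {K : Type*} [Field K] [Fintype K] {r : ℕ} (D : Dat K r)

theorem th_gal (G : GalD D (EE K)) (σ : Equiv.Perm (Fin (r + 1))) (hσ : σ ∈ G.G) :
    MvPolynomial.aeval (D.x ∘ σ) D.th = PowerSeries.X := by
  let g : MvPolynomial (Fin (r + 1)) K := ∏ j, (MvPolynomial.X 0 - MvPolynomial.C (D.s j)) -
    D.th * (MvPolynomial.X 0 - MvPolynomial.C D.a)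
  have hg : ∀ τ : Fin (r + 1) → Fin (r + 1), MvPolynomial.aeval (D.x ∘ τ) g =
      ∏ j, (D.x (τ 0) - PowerSeries.C (D.s j)) -
        MvPolynomial.aeval (D.x ∘ τ) D.th * (D.x (τ 0) - PowerSeries.C D.a) := by
    intro τ
    simp only [g, map_sub, map_prod, map_mul, MvPolynomial.aeval_X, MvPolynomial.aeval_C, Function.comp]
    rfl
  have h1 : MvPolynomial.aeval D.x g = 0 := by
    have := hg id
    rw [Function.comp_id, th_eq, id, x_eq, sub_self] at this
    exact this
  have h2 := G.hA σ hσ g h1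
  rw [hg, x_eq, ← sub_mul, mul_eq_zero] at h2
  rcases h2 with h2 | h2
  · exact (sub_eq_zero.1 h2).symm
  · exfalso
    have h3 := congrArg PowerSeries.constantCoeff h2
    rw [map_sub, D.hx0, PowerSeries.constantCoeff_C] at h3
    exact D.ha _ (sub_eq_zero.1 (h3.trans (map_zero _)))

theorem pl_jl (σ : Fin (r + 1) → Fin (r + 1)) (g : MvPolynomial (Fin (r + 1)) K) :
    pl σ (jl g) = jl (MvPolynomial.rename σ g) := by
  simp only [pl, jl, MvPolynomial.rename_rename]; rfl

theorem pl_jr (σ : Fin (r + 1) → Fin (r + 1)) (g : MvPolynomial (Fin (r + 1)) K) :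
    pl σ (jr g) = jr g := by
  simp only [pl, jr, MvPolynomial.rename_rename]; rfl

theorem pr_jl (σ : Fin (r + 1) → Fin (r + 1)) (g : MvPolynomial (Fin (r + 1)) K) :
    pr σ (jl g) = jl g := by
  simp only [pr, jl, MvPolynomial.rename_rename]; rfl

theorem pr_jr (σ : Fin (r + 1) → Fin (r + 1)) (g : MvPolynomial (Fin (r + 1)) K) :
    pr σ (jr g) = jr (MvPolynomial.rename σ g) := by
  simp only [pr, jr, MvPolynomial.rename_rename]; rfl

theorem aeval_th_rename (G : GalD D (EE K)) (σ : Equiv.Perm (Fin (r + 1))) (hσ : σ ∈ G.G) :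
    MvPolynomial.aeval D.x (MvPolynomial.rename σ D.th) = PowerSeries.X := by
  rw [MvPolynomial.aeval_rename]; exact D.th_gal G σ hσ

theorem ev_pl_Del (G : GalD D (EE K)) (σ : Equiv.Perm (Fin (r + 1))) (hσ : σ ∈ G.G) :
    D.ev (pl σ D.Del) = PowerSeries.C PowerSeries.X - PowerSeries.X := by
  rw [Del, map_sub, map_sub, pl_jl, pl_jr, ev_jl, ev_jr, D.aeval_th_rename G σ hσ, th_eq, PowerSeries.map_X]

theorem ev_pr_Del (G : GalD D (EE K)) (σ : Equiv.Perm (Fin (r + 1))) (hσ : σ ∈ G.G) :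
    D.ev (pr σ D.Del) = PowerSeries.C PowerSeries.X - PowerSeries.X := by
  rw [Del, map_sub, map_sub, pr_jl, pr_jr, ev_jl, ev_jr, D.aeval_th_rename G σ hσ, th_eq, PowerSeries.map_X]

theorem diag_dvd (i : Fin (r + 1)) :
    (PowerSeries.C (-PowerSeries.X) + PowerSeries.X : PS (PS K)) ∣ D.y i - PowerSeries.C (D.x i) := by
  have h := D.y_prod i (RingHom.id _)
  simp only [RingHom.id_apply] at h
  rw [← Finset.mul_prod_erase _ _ (mem_univ i)] at h
  have hu : IsUnit (∏ j ∈ univ.erase i, (D.y i - PowerSeries.C (D.x j))) := by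
    rw [IsUnit.prod_iff]
    intro j hj
    rw [PowerSeries.isUnit_iff_constantCoeff, PowerSeries.isUnit_iff_constantCoeff, isUnit_iff_ne_zero]
    rw [map_sub, PowerSeries.constantCoeff_C, y, ← PowerSeries.coeff_zero_eq_constantCoeff_apply (φ := PowerSeries.map _ _),
      PowerSeries.coeff_map, map_sub, PowerSeries.constantCoeff_C, PowerSeries.coeff_zero_eq_constantCoeff_apply,
      D.hx0, D.hx0, sub_ne_zero]
    exact fun h => (Finset.ne_of_mem_erase hj) (D.hs h).symm
  have h2 : (PowerSeries.C (-PowerSeries.X) + PowerSeries.X : PS (PS K)) = PowerSeries.X - PowerSeries.C PowerSeries.X := by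
    rw [map_neg]; ring
  rw [h2, ← hu.dvd_mul_right, h]
  exact Dvd.intro _ rfl

theorem neg_lin : (PowerSeries.C PowerSeries.X - PowerSeries.X : PS (PS K)) =
    -(PowerSeries.C (-PowerSeries.X) + PowerSeries.X) := by
  rw [map_neg]; ring

theorem pl_dvd (G : GalD D (EE K)) (σ : Equiv.Perm (Fin (r + 1))) (hσ : σ ∈ G.G) (h1 : σ ≠ 1) (M : ℕ) (h : PP K r)
    (hh : h ∈ D.II ^ M) : (PowerSeries.C (-PowerSeries.X) + PowerSeries.X : PS (PS K)) ^ M ∣ D.ev (pl σ h) := by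
  refine D.II_dvd (D.ev.toRingHom.comp (pl σ).toRingHom) _ ?_ ?_ M h hh
  · change _ ∣ D.ev (pl σ (Ph K r))
    obtain ⟨i, hi⟩ := exists_lt_perm σ⁻¹ (by simpa using h1)
    rw [Ph, map_prod, map_prod]
    refine Dvd.dvd.trans ?_ (Finset.dvd_prod_of_mem _ (a := (i, σ⁻¹ i)) (Finset.mem_filter.2 ⟨mem_univ _, hi⟩))
    have : D.ev (pl σ (MvPolynomial.X (Sum.inr i) - MvPolynomial.X (Sum.inl (σ⁻¹ i)))) =
      D.y i - PowerSeries.C (D.x i) := by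
      simp only [map_sub, pl, MvPolynomial.rename_X, Sum.map_inr, Sum.map_inl, id, ev_inl, ev_inr]
      simp
    rw [this]; exact D.diag_dvd i
  · change _ ∣ D.ev (pl σ D.Del)
    rw [D.ev_pl_Del G σ hσ, neg_lin]
    exact (dvd_neg).2 dvd_rfl

theorem pr_dvd (G : GalD D (EE K)) (σ : Equiv.Perm (Fin (r + 1))) (hσ : σ ∈ G.G) (h1 : σ ≠ 1) (M : ℕ) (h : PP K r)
    (hh : h ∈ D.II ^ M) : (PowerSeries.C (-PowerSeries.X) + PowerSeries.X : PS (PS K)) ^ M ∣ D.ev (pr σ h) := by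
  refine D.II_dvd (D.ev.toRingHom.comp (pr σ).toRingHom) _ ?_ ?_ M h hh
  · change _ ∣ D.ev (pr σ (Ph K r))
    obtain ⟨i, hi⟩ := exists_lt_perm σ h1
    rw [Ph, map_prod, map_prod]
    refine Dvd.dvd.trans ?_ (Finset.dvd_prod_of_mem _ (a := (i, σ i)) (Finset.mem_filter.2 ⟨mem_univ _, hi⟩))
    have : D.ev (pr σ (MvPolynomial.X (Sum.inr i) - MvPolynomial.X (Sum.inl (σ i)))) =
      D.y (σ i) - PowerSeries.C (D.x (σ i)) := by
      simp only [map_sub, pr, MvPolynomial.rename_X, Sum.map_inr, Sum.map_inl, id, ev_inl, ev_inr]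
    rw [this]; exact D.diag_dvd _
  · change _ ∣ D.ev (pr σ D.Del)
    rw [D.ev_pr_Del G σ hσ, neg_lin]
    exact (dvd_neg).2 dvd_rfl

/-- first vanishing step -/
theorem step1 (G : GalD D (EE K)) (A B M Z C1 : ℕ) (h : PP K r) (hh : h ∈ D.II ^ M) (hB : D.BD A B h)
    (hC : ∀ j < Z, ∀ i < C1, PowerSeries.coeff i (PowerSeries.coeff j (D.ev h)) = 0)
    (hineq : Nat.card G.G * A < r * (C1 + (Nat.card G.G - 1) * M)) :
    ∀ j < Z, PowerSeries.coeff j (D.ev h) = 0 := by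
  intro j
  induction j using Nat.strong_induction_on with
  | _ j ih =>
    intro hj
    by_contra hne
    rw [ev_eq] at hne
    have hlow : ∀ i < j, PowerSeries.coeff i (D.ev h) = 0 := fun i hi => ih i hi (hi.trans hj)
    have h1 := D.norm_lemma G (PowerSeries.coeff j (D.evU h)) hne 1 (by simp)
      (by
        have := integral_io (D.aeval_integral id (PowerSeries.coeff j (D.evU h)))
        simpa using this) C1 M A ((MvPolynomial.mem_restrictTotalDegree _ _ _).1 (hB.a j))
      (by
        rw [← ev_eq, PowerSeries.X_pow_dvd_iff]; exact hC j hj)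
      (by
        intro σ hσ hσ1
        rw [← ev_pl_coeff]
        obtain ⟨w, hw⟩ := D.pl_dvd G σ hσ hσ1 M h hh
        have h2 := coef_dvd (-PowerSeries.X : PS K) (neg_ne_zero.2 PowerSeries.X_ne_zero) M j w _ hw
          (fun i hi => (D.ev_zero_pl G σ hσ h i).2 (hlow i hi))
        rw [neg_pow] at h2
        exact (Dvd.intro_left _ rfl).trans h2)
    simp only [natDegree_one, mul_zero, add_zero] at h1
    omega

end Dat
end WG


set_option linter.unusedSectionVars false
namespace WG
local notation "PS" => PowerSeries
namespace Dat
variable {K : Type*} [Field K] [Fintype K] {r : ℕ} (D : Dat K r)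

theorem x_mem {O : ValuationSubring (EE K)} (hO : ∀ c : K, io K (PowerSeries.C c) ∈ O)
    (ht : io K PowerSeries.X ∈ O) (i : Fin (r + 1)) : io K (D.x i) ∈ O := by
  rw [← O.valuation_le_one_iff] at *
  by_contra! h
  have h1 : ∀ c : K, O.valuation (io K (D.x i - PowerSeries.C c)) = O.valuation (io K (D.x i)) := by
    intro c
    rw [map_sub]
    exact Valuation.map_sub_eq_of_lt_left _ ((io_C_le hO c).trans_lt h)
  have h2 := congrArg (fun w => O.valuation (io K w)) (D.x_eq i)
  simp only [map_prod, map_mul, h1, prod_const, card_univ, Fintype.card_fin] at h2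
  rw [pow_succ] at h2
  have h0 : O.valuation (io K (D.x i)) ≠ 0 := (zero_lt_one.trans h).ne'
  have h3 := mul_right_cancel₀ h0 h2
  have h4 := one_lt_pow₀ h (n := r) (by have := D.hr; omega)
  rw [h3] at h4
  exact absurd ht (not_le.2 h4)

theorem Fil_mem {O : ValuationSubring (EE K)} (hO : ∀ c : K, io K (PowerSeries.C c) ∈ O)
    (ht : io K PowerSeries.X ∈ O) {N : ℕ} {w : PS K} (hw : w ∈ D.Fil N) : io K w ∈ O := by
  obtain ⟨g, hg, rfl⟩ := D.mem_Fil.1 hw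
  clear hg hw
  induction g using MvPolynomial.induction_on with
  | C c => rw [MvPolynomial.aeval_C]; exact hO c
  | add p q hp hq => rw [map_add, map_add]; exact add_mem hp hq
  | mul_X p i hp => rw [map_mul, map_mul, MvPolynomial.aeval_X]; exact mul_mem hp (D.x_mem hO ht i)

theorem roots_K {κ : Type*} [Field κ] (ψ : K →+* κ) (z : κ) (hz : z ^ Fintype.card K = z) : ∃ w, ψ w = z := by
  classical
  have h := FiniteField.roots_X_pow_card_sub_X K
  have h1 : (X ^ Fintype.card K - X : K[X]).Monic := by
    apply monic_X_pow_sub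
    rw [degree_X]
    exact_mod_cast Fintype.one_lt_card
  have h2 : (X ^ Fintype.card K - X : K[X]) = ∏ c : K, (X - C c) := by
    have := prod_multiset_X_sub_C_of_monic_of_roots_card_eq h1 (by
      rw [h, Finset.card_val, Finset.card_univ, FiniteField.X_pow_card_sub_X_natDegree_eq K Fintype.one_lt_card])
    rw [h] at this
    exact this.symm
  have h3 := congrArg (fun p => (p.map ψ).eval z) h2
  simp only [Polynomial.map_sub, Polynomial.map_pow, map_X, eval_sub, eval_pow, eval_X, hz, sub_self, Polynomial.map_prod,
    eval_prod, map_C, eval_C] at h3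
  obtain ⟨c, -, hc⟩ := Finset.prod_eq_zero_iff.1 h3.symm
  exact ⟨c, (sub_eq_zero.1 hc).symm⟩

theorem frob_perm {κ : Type*} [Field κ] (ψ : K →+* κ) (t0 : K) (xb : Fin (r + 1) → κ) (hinj : Function.Injective xb)
    (hf : fpol ψ D.s D.a (ψ t0) = ∏ i, (X - C (xb i)))
    (hns : ¬ ∃ w : Fin (r + 1) → K, Function.Injective w ∧
      ∀ i, (fpol (RingHom.id K) D.s D.a t0).eval (w i) = 0) :
    ∃ π : Equiv.Perm (Fin (r + 1)), π ≠ 1 ∧ ∀ i, xb i ^ Fintype.card K = xb (π i) := by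
  let _ := ψ.toAlgebra
  let F : κ →ₐ[K] κ := FiniteField.frobeniusAlgHom K κ
  have hF : ∀ z, F z = z ^ Fintype.card K := fun z => rfl
  have hFψ : ∀ c, F (ψ c) = ψ c := fun c => F.commutes c
  have ev : ∀ z, (∏ j, (z - ψ (D.s j))) - ψ t0 * (z - ψ D.a) = ∏ i, (z - xb i) := by
    intro z
    have := congrArg (Polynomial.eval z) hf
    rw [fpol_eval, eval_prod] at this
    simpa using this
  have h1 : ∀ i, ∃ j, xb i ^ Fintype.card K = xb j := by
    intro i
    have h2 := ev (xb i)
    rw [Finset.prod_eq_zero (f := fun j => xb i - xb j) (mem_univ i) (sub_self _)] at h2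
    have h3 := congrArg F h2
    simp only [map_sub, map_prod, map_mul, hFψ, map_zero] at h3
    rw [ev] at h3
    obtain ⟨j, -, hj⟩ := Finset.prod_eq_zero_iff.1 h3
    exact ⟨j, sub_eq_zero.1 hj⟩
  choose π hπ using h1
  have hπi : Function.Injective π := by
    intro i j hij
    apply hinj
    apply F.toRingHom.injective
    change F _ = F _
    rw [hF, hF, hπ, hπ, hij]
  refine ⟨Equiv.ofBijective π (Finite.injective_iff_bijective.1 hπi), ?_, hπ⟩
  intro h
  have h4 : ∀ i, π i = i := fun i => by
    have := congrArg (fun e : Equiv.Perm (Fin (r + 1)) => e i) h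
    simpa using this
  have h5 : ∀ i, ∃ w, ψ w = xb i := fun i => roots_K ψ (xb i) (by rw [hπ, h4])
  choose w hw using h5
  apply hns
  refine ⟨w, fun i j hij => hinj (by rw [← hw, ← hw, hij]), fun i => ?_⟩
  apply ψ.injective
  rw [fpol_eval, map_sub, map_prod, map_mul]
  have h2 := ev (xb i)
  rw [Finset.prod_eq_zero (f := fun j => xb i - xb j) (mem_univ i) (sub_self _)] at h2
  simp only [map_sub, RingHom.id_apply, hw, map_zero]
  exact h2

theorem c_ne : io K (PowerSeries.X ^ Fintype.card K - PowerSeries.X) ≠ 0 := by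
  rw [Ne, map_eq_zero_iff _ io_inj]
  intro h
  have := congrArg (PowerSeries.coeff 1) h
  rw [map_sub, PowerSeries.coeff_X_pow, PowerSeries.coeff_one_X, if_neg (Fintype.one_lt_card (α := K)).ne] at this
  simp at this

theorem local_dvd (t0 : K) (hsep : (fpol (RingHom.id K) D.s D.a t0).Separable)
    (hns : ¬ ∃ w : Fin (r + 1) → K, Function.Injective w ∧
      ∀ i, (fpol (RingHom.id K) D.s D.a t0).eval (w i) = 0)
    (O : ValuationSubring (EE K)) (hO : ∀ c : K, io K (PowerSeries.C c) ∈ O) (ht : io K PowerSeries.X ∈ O)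
    (hnon : O.valuation (io K (PowerSeries.X - PowerSeries.C t0)) < 1) (M k : ℕ) (h : PP K r)
    (hh : h ∈ D.II ^ M) (h0 : ∀ i < k, PowerSeries.coeff i (D.psi h) = 0) :
    ∃ w ∈ O, io K (PowerSeries.coeff k (D.psi h)) = io K (PowerSeries.X - PowerSeries.C t0) ^ M * w := by
  let φ : K →+* O := ((io K).comp PowerSeries.C).codRestrict O.toSubring hO
  let tO : O := ⟨_, ht⟩
  let xO : Fin (r + 1) → O := fun i => ⟨_, D.x_mem hO ht i⟩
  have hφ : O.subtype.comp φ = (io K).comp PowerSeries.C := rfl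
  have hsub : Function.Injective O.subtype := Subtype.val_injective
  have hfO : fpol φ D.s D.a tO = ∏ i, (X - C (xO i)) := by
    apply Polynomial.map_injective _ hsub
    rw [fpol_map, hφ, Polynomial.map_prod]
    have := congrArg (Polynomial.map (io K)) D.hx
    rw [fpol_map, Polynomial.map_prod] at this
    simpa using this
  let ρ := IsLocalRing.residue O
  have htO : ρ tO = ρ (φ t0) := by
    rw [← sub_eq_zero, ← map_sub, IsLocalRing.residue_eq_zero_iff]
    refine (O.valuation_lt_one_iff _).2 ?_
    have : ((tO - φ t0 : O) : EE K) = io K (PowerSeries.X - PowerSeries.C t0) := by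
      rw [map_sub]; rfl
    rw [this]; exact hnon
  let xb : Fin (r + 1) → IsLocalRing.ResidueField O := fun i => ρ (xO i)
  have hfb : fpol (ρ.comp φ) D.s D.a (ρ.comp φ t0) = ∏ i, (X - C (xb i)) := by
    have := congrArg (Polynomial.map ρ) hfO
    rw [fpol_map, Polynomial.map_prod, htO] at this
    simpa using this
  have hinj : Function.Injective xb := by
    rw [← separable_prod_X_sub_C_iff, ← hfb]
    have := hsep.map (f := ρ.comp φ)
    rw [fpol_map] at this
    simpa using this
  obtain ⟨π, hπ1, hπ⟩ := D.frob_perm (ρ.comp φ) t0 xb hinj hfb hns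
  obtain ⟨i, hi⟩ := exists_lt_perm π hπ1
  have hval : ∀ w : O, ρ w ≠ 0 → IsUnit w := by
    intro w hw
    by_contra h
    exact hw ((IsLocalRing.residue_eq_zero_iff _).2 h)
  have hdisc : O.valuation (io K D.disc) = 1 := by
    rw [disc, map_prod, map_prod]
    refine Finset.prod_eq_one fun i _ => ?_
    rw [fd, map_prod, map_prod]
    refine Finset.prod_eq_one fun j hj => ?_
    have h1 : IsUnit (xO i - xO j) := by
      apply hval
      rw [map_sub, sub_ne_zero]
      exact fun h => (Finset.ne_of_mem_erase hj) (hinj h).symm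
    have h2 : ((xO i - xO j : O) : EE K) = io K (D.x i - D.x j) := by
      rw [map_sub]; rfl
    rw [← h2]
    exact (O.valuation_eq_one_iff _).1 h1
  have hz : ∀ i k, io K (PowerSeries.coeff k (D.z i)) ∈ O := by
    intro i k
    have h1 := D.Fil_mem hO ht (D.z_est i k)
    rw [← O.valuation_le_one_iff] at h1 ⊢
    rw [map_mul, map_mul, map_pow, map_pow, hdisc, one_pow, one_mul] at h1
    exact h1
  let zO : Fin (r + 1) → PS O := fun i => PowerSeries.mk fun k => (⟨_, hz i k⟩ : O) ^ Fintype.card K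
  let psiO : PP K r →+* PS O := MvPolynomial.eval₂Hom (PowerSeries.C.comp φ) (Sum.elim (fun i => PowerSeries.C (xO i)) zO)
  have hpl : ∀ i, psiO (MvPolynomial.X (Sum.inl i)) = PowerSeries.C (xO i) := fun i => by simp [psiO]
  have hpr : ∀ i, psiO (MvPolynomial.X (Sum.inr i)) = zO i := fun i => by simp [psiO]
  have hpc : ∀ c, psiO (MvPolynomial.C c) = PowerSeries.C (φ c) := fun i => by simp [psiO]
  have hcomp : (PowerSeries.map O.subtype).comp psiO = (PowerSeries.map (io K)).comp D.psi := by
    apply MvPolynomial.ringHom_ext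
    · intro c
      rw [RingHom.comp_apply, RingHom.comp_apply, hpc, psi_C, PowerSeries.map_C, PowerSeries.map_C]; rfl
    · rintro (i | i)
      · rw [RingHom.comp_apply, RingHom.comp_apply, hpl, psi_inl, PowerSeries.map_C, PowerSeries.map_C]; rfl
      · rw [RingHom.comp_apply, RingHom.comp_apply, hpr, psi_inr]
        ext1 k
        rw [PowerSeries.coeff_map, PowerSeries.coeff_map, PowerSeries.coeff_map, PowerSeries.coeff_mk, frob_apply, map_pow,
          map_pow]
        rfl
  have hcomp' : ∀ g, PowerSeries.map O.subtype (psiO g) = PowerSeries.map (io K) (D.psi g) := fun g =>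
    congrArg (fun f : PP K r →+* _ => f g) hcomp
  have hinjm : Function.Injective (PowerSeries.map O.subtype) := PowerSeries.map_injective _ hsub
  let c : O := tO ^ Fintype.card K - tO
  have hcc : (c : EE K) = io K (PowerSeries.X ^ Fintype.card K - PowerSeries.X) := by
    rw [map_sub, map_pow]; rfl
  have hc0 : c ≠ 0 := fun h => c_ne (K := K) (by rw [← hcc, h]; rfl)
  have hDel : psiO D.Del = -(PowerSeries.C c + PowerSeries.X) := by
    apply hinjm
    rw [hcomp']
    have : D.psi D.Del = -(PowerSeries.C (PowerSeries.X ^ Fintype.card K - PowerSeries.X) + PowerSeries.X) := by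
      rw [psi, RingHom.comp_apply]
      change T _ const_Xq (D.ev _) = _
      rw [ev_Del, map_sub, T_C, T_X, map_sub]; ring
    rw [this, map_neg, map_neg, map_add, map_add, PowerSeries.map_C, PowerSeries.map_C, PowerSeries.map_X,
      PowerSeries.map_X, ← hcc]; rfl
  have hprod : ∏ j, (zO i - PowerSeries.C (xO j)) = (PowerSeries.C c + PowerSeries.X) * (zO i - PowerSeries.C (φ D.a)) := by
    have h1 := congrArg (PowerSeries.map (io K)) (D.Ty_prod _ const_Xq i)
    apply hinjm
    have e1 : T ((PowerSeries.X : PS K) ^ Fintype.card K) const_Xq (D.y i) = D.psi (MvPolynomial.X (Sum.inr i)) := by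
      rw [psi_inr, T_y]
    have e2 : (PowerSeries.C (PowerSeries.X ^ Fintype.card K) + PowerSeries.X - PowerSeries.C PowerSeries.X : PS (PS K)) =
      - D.psi D.Del := by
      rw [psi, RingHom.comp_apply]
      change _ = - T _ const_Xq (D.ev _)
      rw [ev_Del, map_sub, T_C, T_X]; ring
    rw [← D.psi_C D.a] at h1
    simp only [← psi_inl] at h1
    rw [e1, e2, map_mul, map_neg, map_prod] at h1
    simp only [map_sub, ← hcomp'] at h1
    rw [map_mul, map_prod]
    simp only [map_sub]
    rw [← neg_eq_iff_eq_neg] at hDel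
    rw [← hDel, ← hpr, ← hpc, map_neg]
    simp only [← hpl]
    exact h1
  have hPh : (PowerSeries.C c + PowerSeries.X) ∣ psiO (Ph K r) := by
    rw [Ph, map_prod]
    refine Dvd.dvd.trans ?_ (Finset.dvd_prod_of_mem _ (a := (i, π i)) (Finset.mem_filter.2 ⟨mem_univ _, hi⟩))
    rw [map_sub psiO, hpl, hpr]
    rw [← Finset.mul_prod_erase _ _ (mem_univ (π i))] at hprod
    have hu : IsUnit (∏ j ∈ univ.erase (π i), (zO i - PowerSeries.C (xO j))) := by
      rw [IsUnit.prod_iff]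
      intro j hj
      rw [PowerSeries.isUnit_iff_constantCoeff]
      apply hval
      rw [map_sub, map_sub, PowerSeries.constantCoeff_C, ← PowerSeries.coeff_zero_eq_constantCoeff_apply, PowerSeries.coeff_mk,
        sub_ne_zero, map_pow]
      have : (⟨_, hz i 0⟩ : O) = xO i := by
        apply Subtype.ext
        change io K _ = io K _
        rw [z_zero]
      rw [this]
      change xb i ^ _ ≠ xb j
      rw [hπ]
      exact fun h => (Finset.ne_of_mem_erase hj) (hinj h).symm
    rw [← hu.dvd_mul_right, hprod]
    exact Dvd.intro _ rfl
  obtain ⟨w, hw⟩ := D.II_dvd psiO _ hPh (by rw [hDel]; exact (dvd_neg).2 dvd_rfl) M h hh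
  have hco : ∀ k, ((PowerSeries.coeff k (psiO h) : O) : EE K) = io K (PowerSeries.coeff k (D.psi h)) := by
    intro k
    have := congrArg (PowerSeries.coeff k) (hcomp' h)
    rw [PowerSeries.coeff_map, PowerSeries.coeff_map] at this
    exact this
  have h1 := coef_dvd c hc0 M k w _ hw (fun i hi => by
    apply Subtype.ext
    rw [hco, h0 i hi, map_zero]; rfl)
  have h2 : tO - φ t0 ∣ c := by
    have e : c = (tO ^ Fintype.card K - φ t0 ^ Fintype.card K) - (tO - φ t0) := by
      rw [← map_pow, FiniteField.pow_card]; simp only [c]; ring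
    rw [e]
    exact dvd_sub (sub_dvd_pow_sub_pow _ _ _) dvd_rfl
  obtain ⟨w', hw'⟩ := (pow_dvd_pow_of_dvd h2 M).trans h1
  refine ⟨w', w'.2, ?_⟩
  rw [← hco, hw']
  have : ((tO - φ t0 : O) : EE K) = io K (PowerSeries.X - PowerSeries.C t0) := by
    rw [map_sub]; rfl
  rw [← this]; rfl

end Dat
end WG


set_option linter.unusedSectionVars false
namespace WG
local notation "PS" => PowerSeries
namespace Dat
variable {K : Type*} [Field K] [Fintype K] {r : ℕ} (D : Dat K r)

/-- totally split parameters -/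
def Spl (t0 : K) : Prop := ∃ w : Fin (r + 1) → K, Function.Injective w ∧
      ∀ i, (fpol (RingHom.id K) D.s D.a t0).eval (w i) = 0

/-- separable not totally split parameters -/
def Bad (t0 : K) : Prop := (fpol (RingHom.id K) D.s D.a t0).Separable ∧ ¬ D.Spl t0

open Classical in
/-- set of bad parameters -/
noncomputable def bad : Finset K := univ.filter D.Bad

theorem zero_not_bad : (0 : K) ∉ D.bad := by
  classical
  rw [bad, Finset.mem_filter]
  rintro ⟨-, -, h⟩
  apply h
  refine ⟨D.s, D.hs, fun i => ?_⟩
  rw [fpol_eval, Finset.prod_eq_zero (mem_univ i) (by simp)]; simp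

/-- the bad polynomial -/
noncomputable def bp : K[X] := ∏ t0 ∈ D.bad, (X - C t0)

theorem bp_deg : D.bp.natDegree = D.bad.card := by
  rw [bp, natDegree_prod_of_monic _ _ (fun i _ => monic_X_sub_C i)]; simp

theorem bp_eval : D.bp.eval 0 ≠ 0 := by
  rw [bp, eval_prod, Finset.prod_ne_zero_iff]
  intro t0 h0 h
  rw [eval_sub, eval_X, eval_C, zero_sub, neg_eq_zero] at h
  rw [h] at h0
  exact D.zero_not_bad h0

theorem bp_io (M : ℕ) : io K ((D.bp ^ M : K[X]) : PS K) =
    ∏ t0 ∈ D.bad, io K (PowerSeries.X - PowerSeries.C t0) ^ M := by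
  rw [bp, ← Polynomial.coeToPowerSeries.ringHom_apply, map_pow, map_prod, ← Finset.prod_pow, map_prod]
  refine Finset.prod_congr rfl fun t0 _ => ?_
  rw [map_sub, map_pow]
  simp only [Polynomial.coeToPowerSeries.ringHom_apply, Polynomial.coe_X, Polynomial.coe_C]

theorem lin_ne (t0 : K) : io K (PowerSeries.X - PowerSeries.C t0) ≠ 0 := by
  rw [Ne, map_eq_zero_iff _ io_inj]
  intro h
  have := congrArg (PowerSeries.coeff 1) h
  rw [map_sub, PowerSeries.coeff_one_X, PowerSeries.coeff_C] at this
  simp at this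

theorem val_C_one {O : ValuationSubring (EE K)} (hO : ∀ c : K, io K (PowerSeries.C c) ∈ O) (c : K) (hc : c ≠ 0) :
    O.valuation (io K (PowerSeries.C c)) = 1 := by
  apply le_antisymm (io_C_le hO c)
  have h1 := io_C_le hO c⁻¹
  have h2 : O.valuation (io K (PowerSeries.C c)) * O.valuation (io K (PowerSeries.C c⁻¹)) = 1 := by
    rw [← map_mul, ← map_mul, ← map_mul, mul_inv_cancel₀ hc]; simp
  calc (1 : _) = O.valuation (io K (PowerSeries.C c)) * O.valuation (io K (PowerSeries.C c⁻¹)) := h2.symm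
    _ ≤ O.valuation (io K (PowerSeries.C c)) * 1 := by gcongr
    _ = _ := mul_one _

theorem bad_integral (M k m N : ℕ) (h : PP K r) (hh : h ∈ D.II ^ M)
    (h0 : ∀ i < k, PowerSeries.coeff i (D.psi h) = 0)
    (hF : D.disc ^ m * PowerSeries.coeff k (D.psi h) ∈ D.Fil N) (hd : D.disc ∈ D.Fil N) :
    IsIntegral K[X] (io K (D.disc ^ m * PowerSeries.coeff k (D.psi h)) / io K ((D.bp ^ M : K[X]) : PS K)) := by
  apply integral_crit
  intro O hO ht
  rw [← O.valuation_le_one_iff, map_div₀]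
  have hlin : ∀ t0 : K, O.valuation (io K (PowerSeries.X - PowerSeries.C t0)) ≤ 1 := by
    intro t0
    rw [O.valuation_le_one_iff, map_sub]; exact sub_mem ht (hO t0)
  apply div_le_one_of_le₀ _ zero_le
  rw [bp_io, map_prod]
  simp only [map_pow]
  by_cases hex : ∃ t0 ∈ D.bad, O.valuation (io K (PowerSeries.X - PowerSeries.C t0)) < 1
  · obtain ⟨t0, hb, hlt⟩ := hex
    have hoth : ∀ t1 ∈ D.bad, t1 ≠ t0 → O.valuation (io K (PowerSeries.X - PowerSeries.C t1)) ^ M = 1 := by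
      intro t1 _ h1
      have e : io K (PowerSeries.X - PowerSeries.C t1) = io K (PowerSeries.C (t0 - t1)) +
        io K (PowerSeries.X - PowerSeries.C t0) := by
        rw [← map_add, map_sub PowerSeries.C]; congr 1; ring
      have h2 := val_C_one hO (t0 - t1) (sub_ne_zero.2 (Ne.symm h1))
      rw [e, Valuation.map_add_eq_of_lt_left _ (by rw [h2]; exact hlt), h2, one_pow]
    rw [Finset.prod_eq_single_of_mem t0 hb hoth]
    classical
    have hb' := (Finset.mem_filter.1 hb).2
    obtain ⟨w, hw, he⟩ := D.local_dvd t0 hb'.1 hb'.2 O hO ht hlt M k h hh h0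
    rw [map_mul, he, map_mul, map_mul, map_pow, map_pow, map_pow]
    have h1 : O.valuation (io K D.disc) ^ m ≤ 1 :=
      pow_le_one₀ zero_le ((O.valuation_le_one_iff _).2 (D.Fil_mem hO ht hd))
    have h2 : O.valuation w ≤ 1 := (O.valuation_le_one_iff _).2 hw
    calc _ ≤ 1 * (O.valuation (io K (PowerSeries.X - PowerSeries.C t0)) ^ M * 1) := by gcongr
      _ = _ := by simp
  · push Not at hex
    rw [Finset.prod_eq_one fun t0 h0 => ?_]
    · exact (O.valuation_le_one_iff _).2 (D.Fil_mem hO ht hF)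
    · rw [le_antisymm (hlin t0) (hex t0 h0), one_pow]

theorem Fil_disc : D.disc ∈ D.Fil ((r + 1) * r) := by
  have := D.Fil_prod univ D.fd r (fun i _ => D.Fil_fd i)
  rw [disc]
  simpa using this

theorem disc_ne : D.disc ≠ 0 := by
  rw [disc, Finset.prod_ne_zero_iff]; exact fun i _ => D.fd_ne i

/-- second vanishing step -/
theorem step2 (G : GalD D (EE K)) (A B M Z M' : ℕ) (C2 : ℕ → ℕ) (h : PP K r) (hh : h ∈ D.II ^ M) (hB : D.BD A B h)
    (h1 : ∀ j < Z, PowerSeries.coeff j (D.ev h) = 0)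
    (hC : ∀ k < M', ∀ i < C2 k, PowerSeries.coeff (Fintype.card K * Z + i)
      (D.disc ^ (Fintype.card K * k) * PowerSeries.coeff k (D.psi h)) = 0)
    (hineq : ∀ k < M', Nat.card G.G * (A + Fintype.card K * B + Fintype.card K * r ^ 2 * k) <
      r * (Fintype.card K * Z + C2 k + Nat.card G.G * (M * D.bad.card))) :
    ∀ k < M', PowerSeries.coeff k (D.psi h) = 0 := by
  set q := Fintype.card K with hq
  obtain ⟨w, hw⟩ := PowerSeries.X_pow_dvd_iff.2 h1
  have hw2 : D.psi h = (PowerSeries.C ((PowerSeries.X : PS K) ^ q) + PowerSeries.X) ^ Z *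
      T ((PowerSeries.X : PS K) ^ q) const_Xq w := by
    rw [psi, RingHom.comp_apply]
    change T _ const_Xq (D.ev _) = _
    rw [hw, map_mul, map_pow, T_X]
  intro k
  induction k using Nat.strong_induction_on with
  | _ k ih =>
    intro hk
    by_contra hne
    have hlow : ∀ i < k, PowerSeries.coeff i (D.psi h) = 0 := fun i hi => ih i hi (hi.trans hk)
    have hF : D.disc ^ (q * k) * PowerSeries.coeff k (D.psi h) ∈ D.Fil (q * r ^ 2 * k + (A + q * B)) := by
      have := hB.c (k + 1) k (by omega)
      rwa [PowerSeries.coeff_rescale, ← pow_mul] at this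
    obtain ⟨g, hg, hgv⟩ := D.mem_Fil.1 hF
    have hdv := coef_dvd _ (pow_ne_zero q PowerSeries.X_ne_zero) Z k _ _ hw2 hlow
    have hdv2 : (PowerSeries.X : PS K) ^ (q * Z + C2 k) ∣ D.disc ^ (q * k) * PowerSeries.coeff k (D.psi h) := by
      rw [PowerSeries.X_pow_dvd_iff]
      intro m hm
      rcases lt_or_ge m (q * Z) with h2 | h2
      · rw [← pow_mul] at hdv
        exact PowerSeries.X_pow_dvd_iff.1 (hdv.mul_left _) m h2
      · obtain ⟨i, rfl⟩ := Nat.exists_eq_add_of_le h2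
        exact hC k hk i (by omega)
    have hint := D.bad_integral M k (q * k) _ h hh hlow
      (D.Fil_mono (le_max_left _ ((r + 1) * r)) hF) (D.Fil_mono (le_max_right _ _) D.Fil_disc)
    rw [← hgv] at hint hdv2
    have h3 := D.norm_lemma G g (by
      rw [hgv]; exact mul_ne_zero (pow_ne_zero _ D.disc_ne) hne) (D.bp ^ M)
      (by rw [eval_pow]; exact pow_ne_zero _ D.bp_eval) hint _ 0 _ hg hdv2 (by simp)
    rw [natDegree_pow, bp_deg, mul_zero, add_zero] at h3
    have h4 := hineq k hk
    rw [show q * r ^ 2 * k + (A + q * B) = A + q * B + q * r ^ 2 * k by ring] at h3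
    omega

end Dat
end WG


set_option linter.unusedSectionVars false
namespace WG
local notation "PS" => PowerSeries

theorem T_dvd {K : Type*} [Field K] (c : PS K) (hc) (P : (PS K)[X]) (m : ℕ)
    (h : (PowerSeries.X : PS (PS K)) ^ m ∣ T c hc (P : PS (PS K))) : (X - C c) ^ m ∣ P := by
  rw [T_poly] at h
  have h1 : Ec c P = ((P.comp (X + C c) : (PS K)[X]) : PS (PS K)) := by
    have : (Ec c) = (Polynomial.coeToPowerSeries.ringHom).comp (Polynomial.compRingHom (X + C c)) := by
      apply Polynomial.ringHom_ext
      · intro a; simp [Ec]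
      · simp [Ec, add_comm]
    rw [this]; rfl
  rw [h1] at h
  have h2 : (X : (PS K)[X]) ^ m ∣ P.comp (X + C c) := by
    rw [X_pow_dvd_iff]
    intro d hd
    have := PowerSeries.X_pow_dvd_iff.1 h d hd
    rwa [Polynomial.coeff_coe] at this
  obtain ⟨w, hw⟩ := h2
  refine ⟨w.comp (X - C c), ?_⟩
  have h3 := congrArg (fun p => p.comp (X - C c)) hw
  simp only [comp_assoc, mul_comp, X_pow_comp] at h3
  simpa using h3

theorem mult_bound {R : Type*} [CommRing R] [IsDomain R] (P : R[X]) (hP : P ≠ 0) (a b c : R) (hab : a ≠ b) (hac : a ≠ c)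
    (hbc : b ≠ c) (k l m : ℕ) (ha : (X - C a) ^ k ∣ P) (hb : (X - C b) ^ l ∣ P) (hc : (X - C c) ^ m ∣ P) :
    k + l + m ≤ P.natDegree := by
  classical
  have h1 : Multiset.replicate k a + Multiset.replicate l b + Multiset.replicate m c ≤ P.roots := by
    rw [Multiset.le_iff_count]
    intro z
    rw [Multiset.count_add, Multiset.count_add, Multiset.count_replicate, Multiset.count_replicate, Multiset.count_replicate,
      count_roots]
    have h1 := (le_rootMultiplicity_iff hP).2 ha
    have h2 := (le_rootMultiplicity_iff hP).2 hb
    have h3 := (le_rootMultiplicity_iff hP).2 hc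
    by_cases h4 : a = z
    · subst h4; simp [hab.symm, hac.symm, h1]
    by_cases h5 : b = z
    · subst h5; simp [h4, hbc.symm, h2]
    by_cases h6 : c = z
    · subst h6; simp [h4, h5, h3]
    simp [h4, h5, h6]
  have h2 := Multiset.card_le_card h1
  simp only [Multiset.card_add, Multiset.card_replicate] at h2
  exact h2.trans (card_roots' P)

namespace Dat
variable {K : Type*} [Field K] [Fintype K] {r : ℕ} (D : Dat K r)

/-- final vanishing -/
theorem final (G : GalD D (EE K)) (A B M Z M' : ℕ) (h : PP K r) (hh : h ∈ D.II ^ M) (hB : D.BD A B h)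
    (h1 : ∀ j < Z, PowerSeries.coeff j (D.ev h) = 0)
    (h2 : ∀ k < M', PowerSeries.coeff k (D.psi h) = 0)
    (hdeg : Nat.card G.G * B < r * (Z + M' + (Nat.card G.G - 1) * M)) : D.ev h = 0 := by
  classical
  set d := Nat.card G.G with hd
  have : Fintype G.G := Fintype.ofFinite _
  have hdF : d = Fintype.card G.G := by rw [hd, Nat.card_eq_fintype_card]
  let N : PP K r := ∏ σ : G.G, pr σ.1 h
  have hNinv : ∀ τ ∈ G.G, pr τ N = N := by
    intro τ hτ
    simp only [N]
    rw [map_prod]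
    refine Fintype.prod_equiv (Equiv.mulLeft (⟨τ, hτ⟩ : G.G)) _ _ fun σ => ?_
    rw [pr_pr]; rfl
  have hNdeg : ∀ m, PowerSeries.coeff m (D.evU (swp N)) ∈ MvPolynomial.restrictTotalDegree (Fin (r + 1)) K (d * B) := by
    have key : ∀ s : Finset G.G, ∀ m, PowerSeries.coeff m (D.evU (swp (∏ σ ∈ s, pr σ.1 h))) ∈
        MvPolynomial.restrictTotalDegree (Fin (r + 1)) K (s.card * B) := by
      intro s
      induction s using Finset.induction_on with
      | empty =>
        intro m
        rw [Finset.prod_empty, map_one, map_one, PowerSeries.coeff_one, MvPolynomial.mem_restrictTotalDegree]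
        split_ifs <;> simp
      | insert σ s hσ ih =>
        intro m
        rw [Finset.prod_insert hσ, Finset.card_insert_of_notMem hσ, map_mul, map_mul, add_mul, one_mul, add_comm (_ * B)]
        refine rtd_coeff_mul (fun k => ?_) ih m
        rw [swp_pr, evU_pl]
        have := hB.b k
        rw [MvPolynomial.mem_restrictTotalDegree] at this ⊢
        exact (MvPolynomial.totalDegree_rename_le _ _).trans this
    have := key univ
    rw [Finset.card_univ, ← hdF] at this
    exact this
  have hhigh : ∀ k, d * B < r * k → PowerSeries.coeff k (D.ev N) = 0 := by
    intro k hk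
    ext m
    rw [← sw_coeff, ← ev_swp, ev_eq]
    obtain ⟨p, hp⟩ := D.exists_poly G (PowerSeries.coeff m (D.evU (swp N))) (by
      intro τ hτ
      have h3 := D.aeval_rename' τ id (PowerSeries.coeff m (D.evU (swp N)))
      rw [Function.comp_id, Function.id_comp, ← evU_pl, ← swp_pr, hNinv τ hτ] at h3
      exact h3.symm)
    have h4 : (p : PS K) ∈ D.Fil (d * B) := by
      rw [← hp, mem_Fil]
      exact ⟨_, (MvPolynomial.mem_restrictTotalDegree _ _ _).1 (hNdeg m), rfl⟩
    have h5 := D.Fil_deg p h4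
    rw [hp, Polynomial.coeff_coe, coeff_eq_zero_of_natDegree_lt, map_zero]
    exact Nat.lt_of_mul_lt_mul_left (h5.trans_lt hk)
  have hr := D.hr
  let L := Z + M' + (d - 1) * M
  let P : (PS K)[X] := PowerSeries.trunc L (D.ev N)
  have hP : (P : PS (PS K)) = D.ev N := by
    ext1 k
    rw [Polynomial.coeff_coe, PowerSeries.coeff_trunc]
    split_ifs with hk
    · rfl
    · exact (hhigh k (hdeg.trans_le (Nat.mul_le_mul_left _ (not_lt.1 hk)))).symm
  have hsplit : N = h * ∏ σ ∈ (univ : Finset G.G).erase 1, pr σ.1 h := by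
    simp only [N]
    rw [← Finset.mul_prod_erase _ _ (mem_univ (1 : G.G))]
    congr 1
    simp [pr]
  have hL0 : 0 < L := by
    rcases Nat.eq_zero_or_pos L with h0 | h0
    · change _ < r * L at hdeg
      rw [h0] at hdeg; omega
    · exact h0
  have hPdeg : P.natDegree < L := by
    have := PowerSeries.natDegree_trunc_lt (D.ev N) (L - 1)
    rwa [Nat.sub_add_cancel hL0] at this
  have hP0 : P = 0 := by
    by_contra hne
    have hdv := mult_bound P hne 0 (PowerSeries.X ^ Fintype.card K) PowerSeries.X
      (pow_ne_zero _ PowerSeries.X_ne_zero).symm PowerSeries.X_ne_zero.symm (by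
        intro h
        exact c_ne (K := K) (by rw [h, sub_self, map_zero])) Z M' ((d - 1) * M) (by
        rw [map_zero, sub_zero, X_pow_dvd_iff]
        intro j hj
        rw [← Polynomial.coeff_coe, hP, hsplit, map_mul]
        exact PowerSeries.X_pow_dvd_iff.1 ((PowerSeries.X_pow_dvd_iff.2 h1).mul_right _) j hj) (by
        apply T_dvd _ const_Xq
        rw [hP, hsplit, map_mul, map_mul]
        exact (PowerSeries.X_pow_dvd_iff.2 h2).mul_right _) (by
        apply T_dvd _ PowerSeries.constantCoeff_X
        rw [hP, hsplit, map_mul, map_mul, map_prod, map_prod]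
        apply Dvd.dvd.mul_left
        have hc : (d - 1) = ((univ : Finset G.G).erase 1).card := by
          rw [Finset.card_erase_of_mem (mem_univ _), Finset.card_univ, hdF]
        rw [hc, mul_comm, pow_mul, ← Finset.prod_const]
        refine Finset.prod_dvd_prod_of_dvd _ _ fun σ hσ => ?_
        have h3 := D.pr_dvd G σ.1 σ.2 (fun h => Finset.ne_of_mem_erase hσ (Subtype.ext h)) M h hh
        have h4 := map_dvd (T PowerSeries.X PowerSeries.constantCoeff_X) h3
        rw [map_pow, map_add, T_C, T_X, map_neg, neg_add_cancel_left] at h4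
        exact h4)
    exact absurd hPdeg (not_lt.2 hdv)
  rw [hP0, Polynomial.coe_zero] at hP
  simp only [N] at hP
  rw [map_prod] at hP
  obtain ⟨σ, -, hσ⟩ := Finset.prod_eq_zero_iff.1 hP.symm
  exact D.ev_zero_pr G σ.1 σ.2 h hσ

end Dat
end WG


set_option linter.unusedSectionVars false
namespace WG
local notation "PS" => PowerSeries

theorem top_zero {R : Type*} [CommRing R] [IsDomain R] (M : ℕ) (W A : PS R) (hW : PowerSeries.constantCoeff W ≠ 0)
    (Q : Fin M → R)
    (h : PowerSeries.X ^ M * A + ∑ k : Fin M, PowerSeries.X ^ (k : ℕ) * (W ^ (M - k) * PowerSeries.C (Q k)) = 0) :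
    ∀ k, Q k = 0 := by
  have key : ∀ n, ∀ k : Fin M, (k : ℕ) = n → Q k = 0 := by
    intro n
    induction n using Nat.strong_induction_on with
    | _ n ih =>
      rintro k rfl
      have h1 := congrArg (PowerSeries.coeff (k : ℕ)) h
      rw [map_add, map_sum, PowerSeries.coeff_X_pow_mul', if_neg (not_le.2 k.2), zero_add,
        Finset.sum_eq_single k] at h1
      · rw [PowerSeries.coeff_X_pow_mul', if_pos le_rfl, Nat.sub_self, PowerSeries.coeff_zero_eq_constantCoeff_apply,
          map_mul, PowerSeries.constantCoeff_C, map_pow, map_zero, mul_eq_zero] at h1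
        exact h1.resolve_left (pow_ne_zero _ hW)
      · intro j _ hj
        rcases lt_or_gt_of_ne hj with h2 | h2
        · rw [ih j h2 j rfl]; simp
        · rw [PowerSeries.coeff_X_pow_mul', if_neg (not_le.2 (Fin.lt_def.1 h2))]
      · simp
  exact fun k => key _ k rfl

namespace Dat
variable {K : Type*} [Field K] [Fintype K] {r : ℕ} (D : Dat K r)
variable {D} (G : GalD D (EE K))

/-- basis elements -/
noncomputable def bb (N : ℕ) (p : Fin (Nat.card G.G) × Fin N) : MvPolynomial (Fin (r + 1)) K :=
  G.β p.1 * D.th ^ (p.2 : ℕ)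

theorem bb_eq (N : ℕ) (p) : MvPolynomial.aeval D.x (bb G N p) =
    MvPolynomial.aeval D.x (G.β p.1) * (PowerSeries.X : PS K) ^ (p.2 : ℕ) := by
  rw [bb, map_mul, map_pow, th_eq]

theorem bb_indep (N : ℕ) (v : Fin (Nat.card G.G) × Fin N → K)
    (h : ∑ p, v p • MvPolynomial.aeval D.x (bb G N p) = 0) : ∀ p, v p = 0 := by
  have := G.hβ N
  rw [Fintype.linearIndependent_iff] at this
  simp only [bb_eq] at h
  exact this v h

theorem bb_deg (c : ℕ) (hc : ∀ i, (G.β i).totalDegree ≤ r * c) (N : ℕ) (p) : (bb G N p).totalDegree ≤ r * (c + p.2) := by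
  refine (MvPolynomial.totalDegree_mul _ _).trans ?_
  have h1 := MvPolynomial.totalDegree_pow D.th (p.2 : ℕ)
  have h2 := Nat.mul_le_mul_left (p.2 : ℕ) D.th_deg
  have h3 := hc p.1
  rw [mul_add, mul_comm r (p.2 : ℕ)]
  omega

/-- widths -/
def NN (r N0 M : ℕ) (k : ℕ) : ℕ := N0 - ((M - k) * (r - 1) + 1) / 2

/-- index type of the parameters -/
abbrev Idx (d r N0 Ny M : ℕ) : Type := ((Fin d × Fin N0) × (Fin d × Fin Ny)) ⊕ (Σ k : Fin M, Fin d × Fin (NN r N0 M k))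

/-- spanning auxiliary polynomials -/
noncomputable def bas (N0 Ny M : ℕ) : Idx (Nat.card G.G) r N0 Ny M → PP K r
  | Sum.inl p => D.Del ^ M * (jl (bb G N0 p.1) * jr (bb G Ny p.2))
  | Sum.inr p => Ph K r ^ (M - p.1) * D.Del ^ (p.1 : ℕ) * jl (bb G _ p.2)

theorem Ph_mem : Ph K r ∈ D.II := Ideal.subset_span (by simp)
theorem Del_mem : D.Del ∈ D.II := Ideal.subset_span (by simp)

theorem bas_mem (N0 Ny M : ℕ) (i) : bas G N0 Ny M i ∈ D.II ^ M := by
  rcases i with p | p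
  · exact Ideal.mul_mem_right _ _ (Ideal.pow_mem_pow Del_mem M)
  · refine Ideal.mul_mem_right _ _ ?_
    have h1 := Ideal.mul_mem_mul (Ideal.pow_mem_pow (Ph_mem (D := D)) (M - p.1)) (Ideal.pow_mem_pow (Del_mem (D := D)) (p.1 : ℕ))
    rwa [← pow_add, Nat.sub_add_cancel p.1.2.le] at h1

theorem bas_key1 (P j e k c s M N0 : ℕ) (hP : 2 * P = (e + 1) * (e + 1 + 1)) (hM : M = k + j)
    (h : 2 * s + j * e ≤ 2 * N0) : P * j + (e + 1) * k + (e + 1) * (c + s) ≤ (e + 1) * (M + c + N0) := by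
  subst hM
  have h1 : 2 * (P * j) = (e + 1) * ((e + 1 + 1) * j) := by rw [← mul_assoc, hP, mul_assoc]
  have h2 := Nat.mul_le_mul_left (e + 1) h
  nlinarith

theorem bas_key2 (P j e k c M Ny : ℕ) (hP : 2 * P = (e + 1) * (e + 1 + 1)) (hM : M = k + j)
    (h : 2 * Ny = M * e) : P * j + (e + 1) * k + 0 ≤ (e + 1) * (M + c + Ny) := by
  subst hM
  have h1 : 2 * (P * j) = (e + 1) * ((e + 1 + 1) * j) := by rw [← mul_assoc, hP, mul_assoc]
  have h2 : (e + 1) * (2 * Ny) = (e + 1) * ((k + j) * e) := by rw [h]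
  have h3 : 0 ≤ (e + 1) * c := Nat.zero_le _
  have h4 : 0 ≤ (e + 1) * (k * e) := Nat.zero_le _
  nlinarith

theorem bas_BD (c : ℕ) (hc : ∀ i, (G.β i).totalDegree ≤ r * c) (N0 Ny M : ℕ) (hNy : 2 * Ny = M * (r - 1)) (i) :
    D.BD (r * (M + c + N0)) (r * (M + c + Ny)) (bas G N0 Ny M i) := by
  have hr := D.hr
  rcases i with p | p
  · refine ((D.BD_Del.pow M).mul ((D.BD_jl (bb_deg G c hc N0 p.1)).mul (D.BD_jr (bb_deg G c hc Ny p.2)))).mono ?_ ?_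
    · rw [add_zero, ← mul_add]
      have := p.1.2.2
      exact Nat.mul_le_mul_left _ (by omega)
    · rw [zero_add, ← mul_add]
      have := p.2.2.2
      exact Nat.mul_le_mul_left _ (by omega)
  · have hk := p.1.2
    have hs := p.2.2.2
    set k : ℕ := (p.1 : ℕ) with hkdef
    set s : ℕ := (p.2.2 : ℕ) with hsdef
    obtain ⟨e, rfl⟩ : ∃ e, r = e + 1 := ⟨r - 1, by omega⟩
    obtain ⟨j, hj⟩ : ∃ j, M = k + j := ⟨M - k, by omega⟩
    have hjM : M - k = j := by omega
    have hN : s + (j * e + 1) / 2 < N0 := by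
      have : NN (e + 1) N0 M k = N0 - (j * e + 1) / 2 := by rw [NN, hjM]; rfl
      rw [this] at hs; omega
    have hN2 : 2 * s + j * e ≤ 2 * N0 := by omega
    have hpc := prs_card (e + 1)
    set P := (prs (e + 1)).card
    refine (((D.BD_Ph.pow (M - k)).mul (D.BD_Del.pow k)).mul (D.BD_jl (bb_deg G c hc _ p.2))).mono ?_ ?_
    · rw [hjM]
      exact bas_key1 P j e k c s M N0 hpc hj hN2
    · rw [hjM]
      exact bas_key2 P j e k c M Ny hpc hj hNy

/-- general auxiliary polynomial -/
noncomputable def hv (N0 Ny M : ℕ) (v : Idx (Nat.card G.G) r N0 Ny M → K) : PP K r := ∑ i, v i • bas G N0 Ny M i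

theorem W_const : PowerSeries.constantCoeff (T (PowerSeries.X : PS K) PowerSeries.constantCoeff_X (D.ev (Ph K r))) ≠ 0 := by
  rw [Ph, map_prod, map_prod, map_prod, Finset.prod_ne_zero_iff]
  intro p hp
  rw [map_sub, ev_inl, ev_inr, map_sub, T_C, map_sub, PowerSeries.constantCoeff_C]
  have := D.z_zero p.1
  rw [z, PowerSeries.coeff_zero_eq_constantCoeff_apply] at this
  rw [this, sub_ne_zero]
  intro h
  have h1 := D.x_inj h
  have h2 := (Finset.mem_filter.1 hp).2
  rw [h1] at h2
  exact lt_irrefl _ h2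

theorem T_Del : T (PowerSeries.X : PS K) PowerSeries.constantCoeff_X (D.ev D.Del) = - PowerSeries.X := by
  rw [ev_Del, map_sub, T_C, T_X]; ring

theorem hv_inj (N0 Ny M : ℕ) (v : Idx (Nat.card G.G) r N0 Ny M → K) (h : D.ev (hv G N0 Ny M v) = 0) : v = 0 := by
  let p0 : PP K r := ∑ p : (Fin (Nat.card G.G) × Fin N0) × (Fin (Nat.card G.G) × Fin Ny),
    v (Sum.inl p) • (jl (bb G N0 p.1) * jr (bb G Ny p.2))
  let Q : Fin M → MvPolynomial (Fin (r + 1)) K := fun k => ∑ p : Fin (Nat.card G.G) × Fin (NN r N0 M k),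
    v (Sum.inr ⟨k, p⟩) • bb G _ p
  have hh : hv G N0 Ny M v = D.Del ^ M * p0 + ∑ k : Fin M, D.Del ^ (k : ℕ) * (Ph K r ^ (M - k) * jl (Q k)) := by
    rw [hv, Fintype.sum_sum_type]
    congr 1
    · simp only [p0]
      rw [Finset.mul_sum]
      refine Finset.sum_congr rfl fun p _ => ?_
      rw [mul_smul_comm]; rfl
    · rw [Fintype.sum_sigma]
      refine Finset.sum_congr rfl fun k _ => ?_
      simp only [Q]
      rw [map_sum, Finset.mul_sum, Finset.mul_sum]
      refine Finset.sum_congr rfl fun p _ => ?_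
      rw [map_smul, mul_smul_comm, mul_smul_comm, bas]
      congr 1
      ring
  have hQ : ∀ k, MvPolynomial.aeval D.x (Q k) = 0 := by
    have h1 := congrArg (T (PowerSeries.X : PS K) PowerSeries.constantCoeff_X) h
    rw [hh, map_add, map_add, map_sum, map_sum] at h1
    simp only [map_mul, map_pow, T_Del, ev_jl, T_C, map_zero] at h1
    have h2 := top_zero M _ ((-1) ^ M * T (PowerSeries.X : PS K) PowerSeries.constantCoeff_X (D.ev p0)) (W_const (D := D))
      (fun k => (-1) ^ (k : ℕ) * MvPolynomial.aeval D.x (Q k)) (by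
        rw [← h1]
        congr 1
        · rw [neg_pow (PowerSeries.X : PS (PS K))]; ring
        · refine Finset.sum_congr rfl fun k _ => ?_
          rw [neg_pow (PowerSeries.X : PS (PS K)), map_mul, map_pow, map_neg, map_one]; ring)
    intro k
    have := h2 k
    rw [mul_eq_zero] at this
    exact this.resolve_left (pow_ne_zero _ (neg_ne_zero.2 one_ne_zero))
  have hvr : ∀ p, v (Sum.inr p) = 0 := by
    rintro ⟨k, p⟩
    have h1 := hQ k
    simp only [Q] at h1
    rw [map_sum] at h1
    simp only [map_smul] at h1
    exact bb_indep G _ (fun p => v (Sum.inr ⟨k, p⟩)) h1 p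
  have hp0 : D.ev p0 = 0 := by
    have h1 := h
    rw [hh, map_add, map_sum] at h1
    simp only [map_mul, map_pow, ev_jl, hQ, map_zero, mul_zero, Finset.sum_const_zero, add_zero] at h1
    rw [mul_eq_zero] at h1
    refine h1.resolve_left (pow_ne_zero _ ?_)
    intro h2
    have h3 := T_Del (D := D)
    rw [h2, map_zero] at h3
    exact PowerSeries.X_ne_zero (neg_eq_zero.1 h3.symm)
  have hvl : ∀ p p', v (Sum.inl (p, p')) = 0 := by
    intro p
    apply bb_indep G Ny
    ext m
    revert p
    rw [map_zero]
    apply bb_indep G N0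
    have h1 := congrArg (PowerSeries.coeff m) hp0
    simp only [p0] at h1
    rw [map_sum, map_sum, map_zero, Fintype.sum_prod_type] at h1
    rw [← h1]
    refine Finset.sum_congr rfl fun p _ => ?_
    rw [map_sum, Finset.sum_smul]
    refine Finset.sum_congr rfl fun p' _ => ?_
    rw [MvPolynomial.smul_eq_C_mul, map_mul D.ev, map_mul D.ev, ev_C, ev_jl, ev_jr, PowerSeries.coeff_C_mul, PowerSeries.coeff_C_mul,
      PowerSeries.coeff_map, map_smul, smul_eq_mul, PowerSeries.smul_eq_C_mul, map_mul PowerSeries.C]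
    ring
  funext i
  rcases i with ⟨p, p'⟩ | p
  · exact hvl p p'
  · exact hvr p

end Dat
end WG


set_option linter.unusedSectionVars false
namespace WG
local notation "PS" => PowerSeries
namespace Dat
variable {K : Type*} [Field K] [Fintype K] {r : ℕ} {D : Dat K r}
variable (G : GalD D (EE K))

theorem hv_mem (N0 Ny M : ℕ) (v) : hv G N0 Ny M v ∈ D.II ^ M := by
  refine sum_mem fun i _ => ?_
  rw [MvPolynomial.smul_eq_C_mul]
  exact Ideal.mul_mem_left _ _ (bas_mem G N0 Ny M i)

theorem hv_BD (c : ℕ) (hc : ∀ i, (G.β i).totalDegree ≤ r * c) (N0 Ny M : ℕ) (hNy : 2 * Ny = M * (r - 1)) (v) :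
    D.BD (r * (M + c + N0)) (r * (M + c + Ny)) (hv G N0 Ny M v) := by
  refine BD.sum _ fun i _ => ?_
  rw [MvPolynomial.smul_eq_C_mul]
  exact ((BD.C (v i) 0 0).mul (bas_BD G c hc N0 Ny M hNy i)).mono (by simp) (by simp)

theorem hv_add (N0 Ny M : ℕ) (v w) : hv G N0 Ny M (v + w) = hv G N0 Ny M v + hv G N0 Ny M w := by
  simp only [hv, Pi.add_apply, add_smul, Finset.sum_add_distrib]

theorem hv_smul (N0 Ny M : ℕ) (c : K) (v) : hv G N0 Ny M (c • v) = MvPolynomial.C c * hv G N0 Ny M v := by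
  simp only [hv, Pi.smul_apply, smul_eq_mul, mul_smul, Finset.mul_sum, MvPolynomial.smul_eq_C_mul]

/-- conditions -/
noncomputable def cnd (N0 Ny M Z C1 M' : ℕ) (C2 : ℕ → ℕ) : (Idx (Nat.card G.G) r N0 Ny M → K) →ₗ[K]
    (((Fin Z × Fin C1) ⊕ (Σ k : Fin M', Fin (C2 k))) → K) where
  toFun v := fun i => match i with
    | Sum.inl p => PowerSeries.coeff (p.2 : ℕ) (PowerSeries.coeff (p.1 : ℕ) (D.ev (hv G N0 Ny M v)))
    | Sum.inr p => PowerSeries.coeff (Fintype.card K * Z + (p.2 : ℕ))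
        (D.disc ^ (Fintype.card K * (p.1 : ℕ)) * PowerSeries.coeff (p.1 : ℕ) (D.psi (hv G N0 Ny M v)))
  map_add' v w := by
    funext i
    rcases i with p | p
    · simp only [hv_add, map_add, Pi.add_apply]
    · simp only [hv_add, map_add, Pi.add_apply, mul_add]
  map_smul' c v := by
    funext i
    rcases i with p | p
    · simp only [hv_smul, map_mul D.ev, ev_C, PowerSeries.coeff_C_mul, Pi.smul_apply, RingHom.id_apply, smul_eq_mul]
    · simp only [hv_smul, map_mul D.psi, psi_C, PowerSeries.coeff_C_mul, Pi.smul_apply, RingHom.id_apply, smul_eq_mul]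
      rw [mul_left_comm, PowerSeries.coeff_C_mul]

theorem count_ineq1 (d M c N0 r : ℕ) (hd : 1 ≤ d) (hr : 1 ≤ r) :
    d * (r * (M + c + N0)) < r * ((d * N0 + M + d * c + 1) + (d - 1) * M) := by
  obtain ⟨e, rfl⟩ : ∃ e, d = e + 1 := ⟨d - 1, by omega⟩
  rw [mul_left_comm]
  refine Nat.mul_lt_mul_of_pos_left ?_ hr
  simp only [Nat.add_sub_cancel]
  nlinarith

theorem count_ineq3 (d M c Ny M' r : ℕ) (hd : 1 ≤ d) (hr : 1 ≤ r) (hM : M' ≤ M) :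
    d * (r * (M + c + Ny)) < r * ((d * Ny + (M - M') + d * c + 1) + M' + (d - 1) * M) := by
  obtain ⟨e, rfl⟩ : ∃ e, d = e + 1 := ⟨d - 1, by omega⟩
  obtain ⟨f, rfl⟩ : ∃ f, M = M' + f := ⟨M - M', by omega⟩
  rw [mul_left_comm]
  refine Nat.mul_lt_mul_of_pos_left ?_ hr
  simp only [Nat.add_sub_cancel, Nat.add_sub_cancel_left]
  nlinarith

theorem count_ineq2 (d M c Ny M' r q e b k : ℕ) (hd : 1 ≤ d) (hr : 1 ≤ r) (hM : M' ≤ M) (hM' : 1 ≤ M')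
    (hb : q ≤ b + e) :
    d * (r * (M + c + q * M) + q * (r * (M + c + Ny)) + q * r ^ 2 * k) <
      r * (q * (d * Ny + (M - M') + d * c + 1) +
        ((d - 1) * q * M + d * c + d * M * (1 + e) + d * q * k * r + q * (M' - 1) + 1) + d * (M * b)) := by
  obtain ⟨d, rfl⟩ : ∃ e, d = e + 1 := ⟨d - 1, by omega⟩
  obtain ⟨f, rfl⟩ : ∃ f, M = M' + f := ⟨M - M', by omega⟩
  obtain ⟨m, rfl⟩ : ∃ f, M' = f + 1 := ⟨M' - 1, by omega⟩
  have : ∀ R : ℕ, (d + 1) * (r * (m + 1 + f + c + q * (m + 1 + f)) + q * (r * (m + 1 + f + c + Ny)) + q * r ^ 2 * k) =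
      r * ((d + 1) * ((m + 1 + f + c + q * (m + 1 + f)) + q * ((m + 1 + f + c + Ny)) + q * r * k)) := by
    intro R; ring
  rw [this 0]
  refine Nat.mul_lt_mul_of_pos_left ?_ hr
  simp only [Nat.add_sub_cancel, Nat.add_sub_cancel_left]
  have h2 := Nat.mul_le_mul_left ((d + 1) * (m + 1 + f)) hb
  nlinarith

theorem count (c : ℕ) (hc : ∀ i, (G.β i).totalDegree ≤ r * c) (m M' e : ℕ) (hM' : 1 ≤ M') (hM : M' ≤ 2 * m)
    (he : Fintype.card K ≤ D.bad.card + e) :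
    Fintype.card (Idx (Nat.card G.G) r (Fintype.card K * (2 * m)) (m * (r - 1)) (2 * m)) ≤
      (Nat.card G.G * (m * (r - 1)) + (2 * m - M') + Nat.card G.G * c + 1) *
        (Nat.card G.G * (Fintype.card K * (2 * m)) + 2 * m + Nat.card G.G * c + 1) +
      ∑ k : Fin M', ((Nat.card G.G - 1) * Fintype.card K * (2 * m) + Nat.card G.G * c + Nat.card G.G * (2 * m) * (1 + e)
        + Nat.card G.G * Fintype.card K * k * r + Fintype.card K * (M' - 1) + 1) := by
  have hr := D.hr
  have hd : 1 ≤ Nat.card G.G := Nat.card_pos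
  set d := Nat.card G.G with hdd
  set q := Fintype.card K with hq
  by_contra hcon
  push Not at hcon
  let L := cnd G (q * (2 * m)) (m * (r - 1)) (2 * m) (d * (m * (r - 1)) + (2 * m - M') + d * c + 1)
    (d * (q * (2 * m)) + 2 * m + d * c + 1) M' (fun k => (d - 1) * q * (2 * m) + d * c + d * (2 * m) * (1 + e)
        + d * q * k * r + q * (M' - 1) + 1)
  have hker : LinearMap.ker L ≠ ⊥ := by
    apply LinearMap.ker_ne_bot_of_finrank_lt
    rw [Module.finrank_fintype_fun_eq_card, Module.finrank_fintype_fun_eq_card]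
    refine lt_of_le_of_lt (le_of_eq ?_) hcon
    simp
  obtain ⟨v, hvL, hv0⟩ := (Submodule.ne_bot_iff _).1 hker
  rw [LinearMap.mem_ker] at hvL
  apply hv0
  have hmem := hv_mem G (q * (2 * m)) (m * (r - 1)) (2 * m) v
  have hbd := hv_BD G c hc (q * (2 * m)) (m * (r - 1)) (2 * m) (by ring) v
  have s1 := D.step1 G _ _ _ (d * (m * (r - 1)) + (2 * m - M') + d * c + 1) (d * (q * (2 * m)) + 2 * m + d * c + 1) _ hmem hbd
    (fun j hj i hi => congrFun hvL (Sum.inl (⟨j, hj⟩, ⟨i, hi⟩))) (count_ineq1 _ _ _ _ _ hd (by omega))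
  have s2 := D.step2 G _ _ _ _ M' (fun k => (d - 1) * q * (2 * m) + d * c + d * (2 * m) * (1 + e)
        + d * q * k * r + q * (M' - 1) + 1) _ hmem hbd s1
    (fun j hj i hi => congrFun hvL (Sum.inr ⟨⟨j, hj⟩, ⟨i, hi⟩⟩))
    (fun k _ => count_ineq2 _ _ _ _ _ _ _ _ _ k hd (by omega) hM hM' he)
  exact hv_inj G _ _ _ _ (D.final G _ _ _ _ M' _ hmem hbd s1 s2 (count_ineq3 _ _ _ _ _ _ hd (by omega) hM))

theorem exists_c : ∃ c : ℕ, ∀ i, (G.β i).totalDegree ≤ r * c := by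
  refine ⟨∑ i, (G.β i).totalDegree, fun i => ?_⟩
  have h1 : (G.β i).totalDegree ≤ ∑ i, (G.β i).totalDegree :=
    Finset.single_le_sum (f := fun i => (G.β i).totalDegree) (fun _ _ => Nat.zero_le _) (Finset.mem_univ i)
  have := D.hr
  nlinarith

theorem idx_card (d r N0 Ny M : ℕ) : Fintype.card (Idx d r N0 Ny M) = d * N0 * (d * Ny) + ∑ k : Fin M, d * NN r N0 M k := by
  simp

end Dat
end WG


set_option linter.unusedSectionVars false
namespace WG

theorem nonsep_card {K : Type*} [Field K] [Fintype K] {n : ℕ} (s : Fin n → K) (a : K) (ha : ∀ i, s i ≠ a)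
    (B : Finset K) (hB : ∀ t ∈ B, ¬ (fpol (RingHom.id K) s a t).Separable) : B.card ≤ n := by
  classical
  let P : K[X] := ∏ i, (X - C (s i))
  have hPd : P.natDegree = n := by
    simp only [P]; rw [natDegree_prod_of_monic _ _ fun i _ => monic_X_sub_C _]; simp
  let W : K[X] := derivative P * (X - C a) - P
  have hW0 : W ≠ 0 := by
    intro h
    have h1 := congrArg (Polynomial.eval a) h
    simp only [W, P, eval_sub, eval_mul, eval_X, eval_C, sub_self, mul_zero, zero_sub, eval_zero, neg_eq_zero,
      eval_prod, Finset.prod_eq_zero_iff] at h1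
    obtain ⟨i, _, hi⟩ := h1
    exact ha i (sub_eq_zero.1 hi).symm
  have hWd : W.natDegree ≤ n := by
    refine (natDegree_sub_le _ _).trans (max_le ?_ hPd.le)
    rcases Nat.eq_zero_or_pos n with h0 | h0
    · have : derivative P = 0 := derivative_of_natDegree_zero (by omega)
      rw [this]; simp
    · refine natDegree_mul_le.trans ?_
      have h1 := natDegree_derivative_le P
      have h2 : (X - C a : K[X]).natDegree ≤ 1 := (natDegree_X_sub_C a).le
      omega
  let L := AlgebraicClosure K
  have key : ∀ t ∈ B, ∃ y : L, aeval y W = 0 ∧ aeval y (derivative P) = algebraMap K L t := by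
    intro t ht
    have h1 := hB t ht
    rw [Polynomial.Separable, Polynomial.isCoprime_iff_aeval_ne_zero_of_isAlgClosed K L] at h1
    push Not at h1
    obtain ⟨y, h1, h2⟩ := h1
    have hf : fpol (RingHom.id K) s a t = P - C t * (X - C a) := rfl
    have hf' : derivative (fpol (RingHom.id K) s a t) = derivative P - C t := by
      rw [hf]; simp
    rw [hf'] at h2
    rw [hf] at h1
    have h3 : aeval y (derivative P) = algebraMap K L t := by
      rw [map_sub, aeval_C, sub_eq_zero] at h2; exact h2
    refine ⟨y, ?_, h3⟩
    simp only [map_sub, map_mul, aeval_C, aeval_X] at h1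
    simp only [W, map_sub, map_mul, aeval_X, aeval_C, h3]
    linear_combination -h1
  choose! y hy1 hy2 using key
  have hinj : Set.InjOn y B := by
    intro t ht t' ht' h
    have h1 := hy2 t ht
    rw [h, hy2 t' ht'] at h1
    exact ((algebraMap K L).injective h1).symm
  rw [← Finset.card_image_of_injOn hinj]
  have hsub : B.image y ⊆ (W.aroots L).toFinset := by
    intro z hz
    obtain ⟨t, ht, rfl⟩ := Finset.mem_image.1 hz
    rw [Multiset.mem_toFinset, mem_aroots]
    exact ⟨hW0, hy1 t ht⟩
  calc _ ≤ (W.aroots L).toFinset.card := Finset.card_le_card hsub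
    _ ≤ Multiset.card (W.aroots L) := Multiset.toFinset_card_le _
    _ ≤ (W.map (algebraMap K L)).natDegree := card_roots' _
    _ ≤ W.natDegree := natDegree_map_le
    _ ≤ n := hWd

theorem sum_fin_le (M : ℕ) (d r N0 : ℕ) :
    (d : ℝ) * (M * N0 - (((r - 1 : ℕ) : ℝ) * (M * (M + 1) / 2) + M) / 2) ≤ ((∑ k : Fin M, d * Dat.NN r N0 M k : ℕ) : ℝ) := by
  have h1 : ∀ k : Fin M, (d : ℝ) * (N0 - (((M : ℝ) - (k : ℕ)) * ((r - 1 : ℕ) : ℝ) + 1) / 2) ≤ ((d * Dat.NN r N0 M k : ℕ) : ℝ) := by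
    intro k
    rw [Nat.cast_mul]
    refine mul_le_mul_of_nonneg_left ?_ (Nat.cast_nonneg _)
    have h2 : (N0 : ℝ) ≤ Dat.NN r N0 M k + (((M - k) * (r - 1) + 1) / 2 : ℕ) := by
      rw [Dat.NN]; exact_mod_cast (by omega)
    have h3 : ((((M - k) * (r - 1) + 1) / 2 : ℕ) : ℝ) ≤ (((M - k) * (r - 1) + 1 : ℕ) : ℝ) / 2 := by
      exact_mod_cast Nat.cast_div_le
    rw [Nat.cast_add, Nat.cast_mul, Nat.cast_sub k.2.le, Nat.cast_one] at h3
    linarith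
  rw [Nat.cast_sum]
  refine le_trans (le_of_eq ?_) (Finset.sum_le_sum fun k _ => h1 k)
  rw [← Finset.mul_sum]
  congr 1
  have h4 : ∑ k : Fin M, ((k : ℕ) : ℝ) = M * (M - 1) / 2 := by
    rw [Fin.sum_univ_eq_sum_range (fun k => (k : ℝ)) M]
    clear h1
    induction M with
    | zero => simp
    | succ M ih => rw [Finset.sum_range_succ, ih]; push_cast; ring
  have : ∑ k : Fin M, ((N0 : ℝ) - (((M : ℝ) - (k : ℕ)) * ((r - 1 : ℕ) : ℝ) + 1) / 2) =
      ∑ k : Fin M, ((N0 : ℝ) - ((M : ℝ) * ((r - 1 : ℕ) : ℝ) + 1) / 2 + ((k : ℕ) : ℝ) * (((r - 1 : ℕ) : ℝ) / 2)) := by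
    refine Finset.sum_congr rfl fun k _ => ?_
    ring
  rw [this, Finset.sum_add_distrib, ← Finset.sum_mul, h4]
  simp
  ring

namespace Dat
variable {K : Type*} [Field K] [Fintype K] {r : ℕ} {D : Dat K r}
variable (G : GalD D (EE K))

theorem count_real (e : ℕ) (he : Fintype.card K ≤ D.bad.card + e) : ∃ κ : ℝ, 0 ≤ κ ∧ ∀ m M' : ℕ, 1 ≤ M' → M' ≤ 2 * m →
    (2 * m : ℝ) * M' * (Fintype.card K + 1 - Nat.card G.G * (1 + e)) ≤
      (1 + 3 * Nat.card G.G * ((r : ℝ) - 1) / 4) * (2 * m) ^ 2 +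
      (1 + Nat.card G.G * (r : ℝ) / 2) * Fintype.card K * (M' : ℝ) ^ 2 + κ * (2 * m + M' + 1) := by
  obtain ⟨c, hc⟩ := exists_c G
  have hr := D.hr
  have hd : 1 ≤ Nat.card G.G := Nat.card_pos
  have hcount := count G c hc
  set d := Nat.card G.G with hdd
  set q := Fintype.card K with hq
  refine ⟨((d : ℝ) * c + 1) * (d * (r - 1) + 1 + d * q + 1 + d * c + 1) + (d * c + 1 + d * r + d * q * r + q),
    ?_, ?_⟩
  · have : (2 : ℝ) ≤ r := by exact_mod_cast hr
    have : (0 : ℝ) ≤ (r : ℝ) - 1 := by linarith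
    positivity
  intro m M' h1 h2
  have h := hcount m M' e h1 h2 he
  rw [idx_card] at h
  have h' : ((_ : ℕ) : ℝ) ≤ ((_ : ℕ) : ℝ) := Nat.cast_le.2 h
  rw [Nat.cast_add] at h'
  have hs := sum_fin_le (2 * m) d r (q * (2 * m))
  have h3 := (add_le_add_right hs (((d * (q * (2 * m)) * (d * (m * (r - 1))) : ℕ) : ℝ))).trans h'
  have h4 : ∑ k : Fin M', ((k : ℕ) : ℝ) = M' * (M' - 1) / 2 := by
    rw [Fin.sum_univ_eq_sum_range (fun k => (k : ℝ)) M']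
    clear * -
    induction M' with
    | zero => simp
    | succ M ih => rw [Finset.sum_range_succ, ih]; push_cast; ring
  have h5 : ((∑ k : Fin M', ((d - 1) * q * (2 * m) + d * c + d * (2 * m) * (1 + e)
        + d * q * k * r + q * (M' - 1) + 1) : ℕ) : ℝ) =
      M' * (((d : ℝ) - 1) * q * (2 * m) + d * c + d * (2 * m) * (1 + e) + q * ((M' : ℝ) - 1) + 1) +
        d * q * r * (M' * (M' - 1) / 2) := by
    rw [← h4, Finset.mul_sum, Nat.cast_sum]
    push_cast [Nat.cast_sub hd, Nat.cast_sub h1]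
    rw [Finset.sum_congr rfl (g := fun k : Fin M' => ((((d : ℝ) - 1) * q * (2 * m) + d * c + d * (2 * m) * (1 + e) + q * ((M' : ℝ) - 1) + 1) +
        d * q * r * ((k : ℕ) : ℝ))) (fun k _ => by ring), Finset.sum_add_distrib]
    simp only [Finset.sum_const, Finset.card_univ, Fintype.card_fin, nsmul_eq_mul]
  rw [Nat.cast_add _ (∑ k : Fin M', _), h5] at h3
  have hr1 : ((r - 1 : ℕ) : ℝ) = (r : ℝ) - 1 := by rw [Nat.cast_sub (by omega)]; simp
  push_cast [Nat.cast_sub h2, hr1] at h3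
  have hr2 : (2 : ℝ) ≤ r := by exact_mod_cast hr
  obtain ⟨x, hx⟩ : ∃ x : ℝ, (r : ℝ) = x + 1 := ⟨r - 1, by ring⟩
  have hx0 : 0 ≤ x := by linarith
  have hM1 : (1 : ℝ) ≤ M' := by exact_mod_cast h1
  rw [hx] at h3 ⊢
  clear hs h h' h5 h4 hcount
  have hdR : (1 : ℝ) ≤ d := by exact_mod_cast hd
  have hm0 : (0 : ℝ) ≤ m := Nat.cast_nonneg _
  have hc0 : (0 : ℝ) ≤ c := Nat.cast_nonneg _
  have hq0 : (0 : ℝ) ≤ q := Nat.cast_nonneg _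
  have h6 : 0 ≤ ((d : ℝ) * c + 1) * (d * x + d * q + 2 + (d * c + 1)) * M' + (d * c + 1) * (d * x / 2 + (d * c + 1)) * (2 * m)
      + (d * c + 1) * (d * x + d * q + 2) + (d * c + 1 + d * (x + 1) + d * q * (x + 1) + q) * (M' + 1)
      + (d * c + 1 + 3 * d * x / 4 + d / 2 + d * q * (x + 1) + q) * (2 * m) + q * M' + d * q * (x + 1) * M' / 2 := by positivity
  nlinarith [h3, h6]

end Dat
end WG


set_option linter.unusedSectionVars false
namespace WG

theorem lim_arg (x Y g1 g2 κ : ℝ) (hx : 1 ≤ x) (hg1 : 0 ≤ g1) (hg2 : 0 ≤ g2) (hκ : 0 ≤ κ)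
    (h : ∀ m M' : ℕ, 1 ≤ M' → M' ≤ 2 * m → (2 * m : ℝ) * M' * Y ≤ g1 * (2 * m) ^ 2 + g2 * x ^ 2 * (M' : ℝ) ^ 2 + κ * (2 * m + M' + 1)) :
    Y ≤ (g1 + g2) * x := by
  rcases le_or_gt Y 0 with hY | hY
  · exact hY.trans (by positivity)
  by_contra hcon
  push Not at hcon
  have hX : 0 < x * (Y - (g1 + g2) * x) := mul_pos (by linarith) (by linarith)
  obtain ⟨k, hk⟩ := exists_nat_gt ((g1 * (4 * x + 4) + κ * (x + 4)) / (x * (Y - (g1 + g2) * x)))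
  rw [div_lt_iff₀ hX] at hk
  have hk0 : 1 ≤ k := by
    rcases Nat.eq_zero_or_pos k with h0 | h0
    · subst h0
      exfalso
      rw [Nat.cast_zero, zero_mul] at hk
      have : 0 ≤ g1 * (4 * x + 4) + κ * (x + 4) := by positivity
      linarith
    · exact h0
  have hkR : (1 : ℝ) ≤ k := by exact_mod_cast hk0
  have h1 := Nat.le_ceil (x * k / 2)
  have h2 := Nat.ceil_lt_add_one (a := x * k / 2) (by positivity)
  set m := ⌈x * k / 2⌉₊
  have h3 : k ≤ 2 * m := by
    have : (k : ℝ) ≤ 2 * m := by nlinarith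
    exact_mod_cast this
  have h4 := h m k hk0 h3
  have h5 : x * k ≤ 2 * m := by linarith
  have h6 : (2 * m : ℝ) ≤ x * k + 2 := by linarith
  have h7 : x * k * k * Y ≤ 2 * m * k * Y := by gcongr
  have h8 : g1 * (2 * m : ℝ) ^ 2 ≤ g1 * (x * k + 2) ^ 2 := by gcongr
  have h9 : κ * (2 * m + k + 1) ≤ κ * ((x * k + 2) + k + 1) := by gcongr
  have h10 : κ * ((x * k + 2) + k + 1) ≤ κ * ((x + 4) * k) := by
    apply mul_le_mul_of_nonneg_left _ hκ
    nlinarith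
  have h11 : g1 * (x * k + 2) ^ 2 ≤ g1 * (x ^ 2 * k ^ 2 + (4 * x + 4) * k) := by
    apply mul_le_mul_of_nonneg_left _ hg1
    nlinarith
  have h12 := mul_lt_mul_of_pos_right hk (show (0 : ℝ) < k by linarith)
  nlinarith

namespace Dat
variable {K : Type*} [Field K] [Fintype K] {r : ℕ} {D : Dat K r}

theorem weil (G : GalD D (EE K)) (e : ℕ) (he : Fintype.card K ≤ D.bad.card + e) :
    (Fintype.card K + 1 - Nat.card G.G * (1 + e) : ℝ) ≤
      (2 + Nat.card G.G * (5 * (r : ℝ) - 3) / 4) * Real.sqrt (Fintype.card K) := by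
  obtain ⟨κ, hκ, h⟩ := count_real G e he
  have hr : (2 : ℝ) ≤ r := by exact_mod_cast D.hr
  have hq : (1 : ℝ) ≤ Fintype.card K := by exact_mod_cast Fintype.card_pos
  have hsq := Real.sq_sqrt (show (0 : ℝ) ≤ Fintype.card K by linarith)
  have hx : 1 ≤ Real.sqrt (Fintype.card K) := by rw [Real.one_le_sqrt]; exact hq
  have hr1 : 0 ≤ (r : ℝ) - 1 := by linarith
  refine (lim_arg (Real.sqrt (Fintype.card K)) _ (1 + 3 * Nat.card G.G * ((r : ℝ) - 1) / 4) (1 + Nat.card G.G * (r : ℝ) / 2) κ hx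
    (by positivity) (by positivity) hκ ?_).trans (le_of_eq ?_)
  · intro m M' h1 h2
    rw [hsq]
    exact h m M' h1 h2
  · ring

theorem num (r : ℕ) (hr : 2 ≤ r) (x l e d ρ F : ℝ) (hx : 1 ≤ x) (he : e = l + ρ) (hρ : ρ ≤ r + 1) (hl : 0 ≤ l)
    (hd : 1 ≤ d) (hdF : d ≤ F) (hF : 6 ≤ F)
    (h : x ^ 2 + 1 - d * (1 + e) ≤ (2 + d * (5 * (r : ℝ) - 3) / 4) * x) :
    (x ^ 2 - 2 * x + 1) / F - 2 * x * ((r : ℝ) - 1) - ((r : ℝ) + 2) / 2 ≤ l := by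
  have hr2 : (2 : ℝ) ≤ r := by exact_mod_cast hr
  rcases lt_or_ge x 8 with h8 | h8
  · have h1 : (x ^ 2 - 2 * x + 1) / F ≤ (x ^ 2 - 2 * x + 1) / 6 := by
      apply div_le_div_of_nonneg_left _ (by norm_num) hF
      nlinarith [sq_nonneg (x - 1)]
    nlinarith
  · have h1 : (x ^ 2 - 2 * x + 1) / F ≤ (x ^ 2 - 2 * x + 1) / d := by
      apply div_le_div_of_nonneg_left _ (by linarith) hdF
      nlinarith [sq_nonneg (x - 1)]
    have h2 : (x ^ 2 - 2 * x + 1) / d ≤ 1 + e + (5 * (r : ℝ) - 3) / 4 * x := by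
      rw [div_le_iff₀ (by linarith)]
      linarith
    nlinarith

/-- lower bound on the number of totally split parameters -/
theorem main (D : Dat K r) (L : Finset K) (hL : ∀ t, D.Spl t → t ∈ L) :
    ((Fintype.card K : ℝ) - 2 * Real.sqrt (Fintype.card K) + 1) / (Nat.factorial (r + 1))
        - 2 * Real.sqrt (Fintype.card K) * ((r : ℝ) - 1) - ((r : ℝ) + 2) / 2 ≤ L.card := by
  classical
  obtain ⟨G⟩ := D.exists_gal
  let B : Finset K := univ.filter fun t => ¬ (fpol (RingHom.id K) D.s D.a t).Separable
  have hB : B.card ≤ r + 1 := nonsep_card D.s D.a D.ha B fun t ht => (Finset.mem_filter.1 ht).2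
  have hcov : Fintype.card K ≤ D.bad.card + (L.card + B.card) := by
    have : (univ : Finset K) ⊆ D.bad ∪ (L ∪ B) := by
      intro t _
      rw [Finset.mem_union, Finset.mem_union]
      by_cases h1 : (fpol (RingHom.id K) D.s D.a t).Separable
      · by_cases h2 : D.Spl t
        · exact Or.inr (Or.inl (hL t h2))
        · left; rw [bad, Finset.mem_filter]; exact ⟨mem_univ _, h1, h2⟩
      · exact Or.inr (Or.inr (Finset.mem_filter.2 ⟨mem_univ _, h1⟩))
    have h1 := Finset.card_le_card this
    have h2 := Finset.card_union_le D.bad (L ∪ B)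
    have h3 := Finset.card_union_le L B
    rw [Finset.card_univ] at h1
    omega
  have hw := weil G _ hcov
  have hd : 1 ≤ Nat.card G.G := Nat.card_pos
  have hdF : Nat.card G.G ≤ Nat.factorial (r + 1) := by
    have h1 := Nat.card_le_card_of_injective (Subtype.val : G.G → Equiv.Perm (Fin (r + 1))) Subtype.val_injective
    rwa [Nat.card_eq_fintype_card (α := Equiv.Perm (Fin (r + 1))), Fintype.card_perm, Fintype.card_fin] at h1
  have hF : 6 ≤ Nat.factorial (r + 1) := Nat.factorial_le (show 3 ≤ r + 1 by have := D.hr; omega)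
  have hq : (1 : ℝ) ≤ Fintype.card K := by exact_mod_cast Fintype.card_pos
  have hsq := Real.sq_sqrt (show (0 : ℝ) ≤ Fintype.card K by linarith)
  have hx : 1 ≤ Real.sqrt (Fintype.card K) := by rw [Real.one_le_sqrt]; exact hq
  have := num r D.hr (Real.sqrt (Fintype.card K)) L.card (L.card + B.card) (Nat.card G.G) B.card (Nat.factorial (r + 1)) hx rfl
    (by exact_mod_cast hB) (Nat.cast_nonneg _) (by exact_mod_cast hd) (by exact_mod_cast hdF) (by exact_mod_cast hF)
    (by rw [hsq]; push_cast at hw; exact hw)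
  rwa [hsq] at this

end Dat

theorem main' {K : Type*} [Field K] [Fintype K] (r : ℕ) (hr : 2 ≤ r) (s : Fin (r + 1) → K) (hs : Function.Injective s)
    (a : K) (ha : ∀ i, s i ≠ a) (L : Finset K)
    (hL : ∀ t, (∃ w : Fin (r + 1) → K, Function.Injective w ∧
      ∀ i, (∏ j, (w i - s j)) - t * (w i - a) = 0) → t ∈ L) :
    ((Fintype.card K : ℝ) - 2 * Real.sqrt (Fintype.card K) + 1) / (Nat.factorial (r + 1))
        - 2 * Real.sqrt (Fintype.card K) * ((r : ℝ) - 1) - ((r : ℝ) + 2) / 2 ≤ L.card := by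
  obtain ⟨x, hx0, hx⟩ := hensel_roots (by omega : 2 ≤ r + 1) s hs a
  refine Dat.main (⟨s, hs, a, ha, hr, x, hx0, hx⟩ : Dat K r) L ?_
  rintro t ⟨w, hw, h⟩
  refine hL t ⟨w, hw, fun i => ?_⟩
  have := h i
  rwa [fpol_eval] at this

end WG

namespace WG
variable {F : Type*} [Field F] [Fintype F] [DecidableEq F]

theorem rat_none (r : ℕ) (hr : 0 < r) (S : Finset F) (hS : S.card = r + 1) (a : F) :
    ratEval (∏ s ∈ S, (X - C s)) (X - C a) none = none := by
  have h : (∏ s ∈ S, (X - C s)).natDegree = r + 1 := by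
    rw [natDegree_prod_of_monic _ _ fun i _ => monic_X_sub_C _]; simp [hS]
  rw [ratEval, h, natDegree_X_sub_C, if_pos (by omega)]

theorem rat_some (S : Finset F) (a : F) (ha : a ∉ S) (y t : F) :
    ratEval (∏ s ∈ S, (X - C s)) (X - C a) (some y) = some t ↔ (∏ s ∈ S, (y - s)) - t * (y - a) = 0 := by
  have h : (∏ s ∈ S, (X - C s)).eval y = ∏ s ∈ S, (y - s) := by rw [eval_prod]; simp
  rw [ratEval, h, eval_sub, eval_X, eval_C]
  by_cases hy : y = a
  · subst hy
    simp only [sub_self, if_true, mul_zero, sub_zero]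
    refine ⟨fun h => by simp at h, fun h => ?_⟩
    rw [Finset.prod_eq_zero_iff] at h
    obtain ⟨s, hs, h⟩ := h
    rw [sub_eq_zero.1 h] at ha
    exact absurd hs ha
  · rw [if_neg (sub_ne_zero.2 hy), Option.some_inj, div_eq_iff (sub_ne_zero.2 hy), sub_eq_zero]

/-- fibres -/
def fib (S : Finset F) (a : F) (t : F) : Finset F := univ.filter fun y => (∏ s ∈ S, (y - s)) - t * (y - a) = 0

theorem fiber_eq (r : ℕ) (hr : 0 < r) (S : Finset F) (hS : S.card = r + 1) (a : F) (ha : a ∉ S) (t : F) :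
    (Finset.univ.filter (fun x : Option F => ratEval (∏ s ∈ S, (X - C s)) (X - C a) x = some t)) =
      (fib S a t).map Function.Embedding.some := by
  ext x
  rcases x with _ | y
  · simp [rat_none r hr S hS a]
  · simp [rat_some S a ha, fib]

theorem count_le (r : ℕ) (hr : 0 < r) (S : Finset F) (hS : S.card = r + 1) (a : F) (ha : a ∉ S) :
    (univ.filter fun t => (fib S a t).card = r + 1).card ≤ (Finset.univ.filter (fun b : Option F =>
            (Finset.univ.filter (fun x : Option F =>
              ratEval (∏ s ∈ S, (X - C s)) (X - C a) x = b)).card = r + 1)).card := by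
  rw [← Finset.card_map Function.Embedding.some]
  apply Finset.card_le_card
  intro b hb
  obtain ⟨t, ht, rfl⟩ := Finset.mem_map.1 hb
  rw [Finset.mem_filter] at ht ⊢
  refine ⟨mem_univ _, ?_⟩
  have := fiber_eq r hr S hS a ha t
  simp only [Function.Embedding.some_apply]
  rw [this, Finset.card_map, ht.2]

theorem exists_enum (r : ℕ) (S : Finset F) (hS : S.card = r + 1) : ∃ s : Fin (r + 1) → F, Function.Injective s ∧
    (∀ i, s i ∈ S) ∧ ∀ {M : Type _} [CommMonoid M] (f : F → M), ∏ x ∈ S, f x = ∏ i, f (s i) := by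
  let e := (S.equivFinOfCardEq hS).symm
  refine ⟨fun i => e i, fun i j h => e.injective (Subtype.ext h), fun i => (e i).2, ?_⟩
  intro M _ f
  rw [← Finset.prod_coe_sort S f]
  exact (Equiv.prod_comp e (fun x : S => f x)).symm

theorem fib_le (r : ℕ) (hr : 0 < r) (S : Finset F) (hS : S.card = r + 1) (a : F) (t : F) : (fib S a t).card ≤ r + 1 := by
  obtain ⟨s, hs, hsS, hprod⟩ := exists_enum r S hS
  obtain ⟨hm, hd⟩ := fpol_monic_deg (show 2 ≤ r + 1 by omega) (RingHom.id F) s a t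
  have h1 : fib S a t ⊆ (fpol (RingHom.id F) s a t).roots.toFinset := by
    intro y hy
    rw [fib, Finset.mem_filter, hprod] at hy
    rw [Multiset.mem_toFinset, mem_roots hm.ne_zero, IsRoot, fpol_eval]
    exact hy.2
  calc _ ≤ _ := Finset.card_le_card h1
    _ ≤ _ := Multiset.toFinset_card_le _
    _ ≤ _ := card_roots' _
    _ = r + 1 := natDegree_eq_of_degree_eq_some hd

theorem case_big (r : ℕ) (hr : 2 ≤ r) (S : Finset F) (hS : S.card = r + 1) (a : F) (ha : a ∉ S) :
    ((Fintype.card F : ℝ) - 2 * Real.sqrt (Fintype.card F) + 1) / (Nat.factorial (r + 1))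
        - 2 * Real.sqrt (Fintype.card F) * ((r : ℝ) - 1) - ((r : ℝ) + 2) / 2 ≤
      (univ.filter fun t => (fib S a t).card = r + 1).card := by
  obtain ⟨s, hs, hsS, hprod⟩ := exists_enum r S hS
  refine main' r hr s hs a (fun i h => ha (h ▸ hsS i)) _ ?_
  rintro t ⟨w, hw, h⟩
  rw [Finset.mem_filter]
  refine ⟨mem_univ _, le_antisymm (fib_le r (by omega) S hS a t) ?_⟩
  have h1 : univ.image w ⊆ fib S a t := by
    intro y hy
    obtain ⟨i, _, rfl⟩ := Finset.mem_image.1 hy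
    rw [fib, Finset.mem_filter, hprod]
    exact ⟨mem_univ _, h i⟩
  have h2 := Finset.card_le_card h1
  rwa [Finset.card_image_of_injective _ hw, Finset.card_univ, Fintype.card_fin] at h2

theorem case_one (S : Finset F) (hS : S.card = 1 + 1) (a : F) (ha : a ∉ S) :
    Fintype.card F ≤ 2 * (univ.filter fun t => (fib S a t).card = 1 + 1).card + 3 := by
  classical
  obtain ⟨s, hs, hsS, hprod⟩ := exists_enum 1 S hS
  let B : Finset F := univ.filter fun t => ¬ (fpol (RingHom.id F) s a t).Separable
  have hB : B.card ≤ 2 := nonsep_card s a (fun i h => ha (h ▸ hsS i)) B fun t ht => (Finset.mem_filter.1 ht).2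
  have hP : ∀ y, ∏ x ∈ S, (y - x) = (y - s 0) * (y - s 1) := by
    intro y; rw [hprod, Fin.prod_univ_two]
  have hfib : ∀ t, (fib S a t).card ≤ 2 * (if (fib S a t).card = 1 + 1 then 1 else 0) + (if t ∈ B then 1 else 0) := by
    intro t
    have h2 := fib_le 1 one_pos S hS a t
    by_cases h3 : (fib S a t).card = 1 + 1
    · rw [if_pos h3]; omega
    rw [if_neg h3]
    by_cases h0 : (fib S a t).card = 0
    · omega
    have h1 : (fib S a t).card = 1 := by omega
    obtain ⟨y, hy⟩ := Finset.card_eq_one.1 h1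
    have hyf : y ∈ fib S a t := by rw [hy]; simp
    rw [fib, Finset.mem_filter, hP] at hyf
    have hz : s 0 + s 1 + t - y ∈ fib S a t := by
      rw [fib, Finset.mem_filter, hP]
      refine ⟨mem_univ _, ?_⟩
      linear_combination hyf.2
    rw [hy, Finset.mem_singleton] at hz
    have hBt : t ∈ B := by
      rw [Finset.mem_filter]
      refine ⟨mem_univ _, fun hsep => ?_⟩
      refine hsep.eval₂_derivative_ne_zero (RingHom.id F) (x := y) ?_ ?_
      · rw [eval₂_id, fpol_eval, Fin.prod_univ_two]; exact hyf.2
      · rw [eval₂_id, fpol, Fin.prod_univ_two]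
        simp
        linear_combination -hz
    rw [if_pos hBt]; omega
  have hsum : (univ.erase a).card = ∑ t : F, (fib S a t).card := by
    rw [Finset.card_eq_sum_card_fiberwise (f := fun y => (∏ x ∈ S, (y - x)) / (y - a)) (t := univ) (fun _ _ => by simp)]
    refine Finset.sum_congr rfl fun t _ => ?_
    congr 1
    ext y
    rw [fib, Finset.mem_filter, Finset.mem_filter, Finset.mem_erase]
    by_cases hy : y = a
    · subst hy
      simp only [ne_eq, not_true_eq_false, false_and, sub_self, mul_zero, sub_zero, mem_univ, true_and, false_iff]
      rw [Finset.prod_eq_zero_iff]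
      rintro ⟨x, hx, h⟩
      rw [sub_eq_zero.1 h] at ha
      exact ha hx
    · simp [hy, div_eq_iff (sub_ne_zero.2 hy), sub_eq_zero]
  have h5 := Finset.sum_le_sum fun t (_ : t ∈ (univ : Finset F)) => hfib t
  rw [← hsum, Finset.card_erase_of_mem (mem_univ _), Finset.card_univ, Finset.sum_add_distrib, ← Finset.mul_sum,
    ← Finset.card_filter, ← Finset.card_filter, Finset.filter_mem_eq_inter, Finset.univ_inter] at h5
  omega

end WG

/-- For `S ⊆ F_q` with `#S = r+1`, `a ∉ S`, and `gcd(q,(r+1)!) = 1`, the rational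
function `h(x) = ∏_{s∈S}(x-s)/(x-a)` is `(r,l)`-good with
`l ≥ (q - 2√q + 1)/(r+1)! - 2√q(r-1) - (r+2)/2`: the number of `b ∈ P¹(F_q)` whose
fiber under `h` has exactly `r+1` elements is at least this bound. -/
theorem stmt5 {F : Type*} [Field F] [Fintype F] [DecidableEq F]
    (r : ℕ) (hr : 0 < r)
    (hq : Nat.Coprime (Fintype.card F) (Nat.factorial (r + 1)))
    (S : Finset F) (hS : S.card = r + 1) (a : F) (ha : a ∉ S) :
    ((Fintype.card F : ℝ) - 2 * Real.sqrt (Fintype.card F) + 1) / (Nat.factorial (r + 1))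
        - 2 * Real.sqrt (Fintype.card F) * ((r : ℝ) - 1)
        - ((r : ℝ) + 2) / 2
      ≤ ((Finset.univ.filter (fun b : Option F =>
            (Finset.univ.filter (fun x : Option F =>
              ratEval (∏ s ∈ S, (X - C s)) (X - C a) x = b)).card = r + 1)).card
          : ℝ) := by
  refine le_trans ?_ (Nat.cast_le.2 (WG.count_le r hr S hS a ha))
  rcases Nat.lt_or_ge r 2 with h | h
  · obtain rfl : r = 1 := by omega
    have h1 : (Fintype.card F : ℝ) ≤ 2 * ((univ.filter fun t => (WG.fib S a t).card = 1 + 1).card : ℝ) + 3 := by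
      exact_mod_cast WG.case_one S hS a ha
    have hq : (1 : ℝ) ≤ Fintype.card F := by exact_mod_cast Fintype.card_pos
    have hx : 1 ≤ Real.sqrt (Fintype.card F) := by rw [Real.one_le_sqrt]; exact hq
    norm_num [Nat.factorial] at h1 ⊢
    linarith
  · exact WG.case_big r h S hS a ha
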